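/- arXiv:1506.08041 — 2 statements merged into one kernel-verified Lean document; each statement's English description precedes it below -/
import Mathlib

section
/- For every natural number N there exists a constant C = C(N) > 0 with the following property: if r > 0 and u, v are harmonic functions on the open disc B_r ⊂ ℝ² of radius r centered at the origin, neither identically zero, such that Z(u) = Z(v), the number of connected components of B_r ∖ Z(u) is less than N, and v(0) ≠ 0, then |∇(u/v)(0)| ≤ C · r⁻¹ · |u(0)/v(0)|. -/
open Metric Set Filter

noncomputable section

abbrev En (n : ℕ) : Type := EuclideanSpace ℝ (Fin n)

/-- The Laplacian of `u` at `x`, computed from the second iterated Fréchet derivative. -/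
def laplacianAt {n : ℕ} (u : En n → ℝ) (x : En n) : ℝ :=
  ∑ i : Fin n, iteratedFDeriv ℝ 2 u x ![EuclideanSpace.single i 1, EuclideanSpace.single i 1]

/-- `u` is harmonic on `Ω`: twice continuously differentiable with vanishing Laplacian. -/
def HarmonicOnSet {n : ℕ} (u : En n → ℝ) (Ω : Set (En n)) : Prop :=
  ContDiffOn ℝ 2 u Ω ∧ ∀ x ∈ Ω, laplacianAt u x = 0

/-- The zero set of `u` within `Ω`. -/
def zeroSet {n : ℕ} (u : En n → ℝ) (Ω : Set (En n)) : Set (En n) :=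
  {x ∈ Ω | u x = 0}

/-- The collection of nodal domains of `u` in `Ω`, i.e. the connected components of
`Ω \ Z(u)`. -/
def nodalComponents {n : ℕ} (u : En n → ℝ) (Ω : Set (En n)) : Set (Set (En n)) :=
  {C | ∃ x ∈ Ω \ zeroSet u Ω, C = connectedComponentIn (Ω \ zeroSet u Ω) x}

/-!
After scaling to `r = 1`, write `u = Re F` and `v = Re G` with `F`, `G` holomorphic on the unit
disc and real at `0`.

A simple zero of `F` cannot be bypassed: the two sides of the nodal line through it lie in different
path components of `{Re F ≠ 0}` together with the other zeros, as a logarithm argument shows. Joined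
together over several simple zeros, these separations bound their number by the number of nodal
domains, for `F` and likewise for `F - iy`. Applied to `log F` with Bloch's theorem, this gives
`ρ |F'| ≤ C |F|` at the centre of a zero-free disc of radius `ρ`. Since `F` has at most `N`
zeros, one of `N + 1` fixed annuli is zero-free, so a real multiple of `F` has modulus `1` at one
of finitely many points and is uniformly bounded on a disc of radius larger than `1/4`.

Next, `f(z) + conj f(0)` is divisible by `g(z) + conj g(0)` with bounds. Near a zero of order `m`
a rescaling of `g` is close to `z ^ m`; Schwarz reflection in its zero lines makes
`f(z) + conj f(a)` divisible by `g(z) + conj g(a)` for `a` in an annulus. The Cauchy integral of the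
quotient is holomorphic in `conj a`, so the identity theorem carries the divisibility to `a = 0`.
By Montel's theorem the radius and the bound on the quotient `Q` are uniform in the pair.

Finally `f'(0) / Re f(0) - g'(0) / Re g(0) = 2 Q'(0) / Q(0)`, where `1 / Q(0)` is the value at `0`
of the reverse quotient. Cauchy's estimate bounds this difference, whose modulus is that of
`∇ log |u/v|` at `0`.
-/

section

open Topology

/-- `S` has at most `N` path components, witnessed by a colouring with `N` colours in which
points of the same colour are joined by a path in `S`. -/
def HasAtMostPathComponents {X : Type*} [TopologicalSpace X] (S : Set X) (N : ℕ) : Prop :=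
  ∃ c : S → Fin N, ∀ x y : S, c x = c y → JoinedIn S x y

namespace HasAtMostPathComponents

variable {X Y : Type*} [TopologicalSpace X] [TopologicalSpace Y] {S : Set X} {N : ℕ}

theorem image (h : HasAtMostPathComponents S N) {f : X → Y} (hf : Continuous f) :
    HasAtMostPathComponents (f '' S) N := by
  obtain ⟨c, hc⟩ := h
  choose g hg hfg using fun y : f '' S => y.2
  refine ⟨fun y => c ⟨g y, hg y⟩, fun x y hxy => ?_⟩
  simpa only [hfg] using (hc _ _ hxy).map hf

theorem of_ncard_connectedComponentIn_le [LocallyPathConnectedSpace X] (hS : IsOpen S)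
    (hfin : {C | ∃ x ∈ S, C = connectedComponentIn S x}.Finite)
    (hN : {C | ∃ x ∈ S, C = connectedComponentIn S x}.ncard ≤ N) :
    HasAtMostPathComponents S N := by
  obtain rfl | ⟨x₀, hx₀⟩ := S.eq_empty_or_nonempty
  · exact ⟨isEmptyElim, isEmptyElim⟩
  have hpos := (ncard_pos hfin).2 ⟨_, x₀, hx₀, rfl⟩
  have : Nonempty (Fin N) := ⟨⟨0, hpos.trans_le hN⟩⟩
  obtain ⟨f, -, hf⟩ := hfin.exists_injOn_of_encard_le (t := (univ : Set (Fin N)))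
    (by rw [← hfin.cast_ncard_eq, encard_univ]; simpa using hN)
  refine ⟨fun x => f (connectedComponentIn S x), fun x y hxy => ?_⟩
  have hy := mem_connectedComponentIn y.2
  rw [← hf ⟨x, x.2, rfl⟩ ⟨y, y.2, rfl⟩ hxy] at hy
  have hpath := hS.connectedComponentIn.isConnected_iff_isPathConnected.1
    (isConnected_connectedComponentIn_iff.2 x.2)
  exact (hpath.joinedIn x (mem_connectedComponentIn x.2) y hy).mono
    (connectedComponentIn_subset _ _)

end HasAtMostPathComponents

theorem card_le_card_of_separating {ι κ : Type*} [Fintype ι] [Fintype κ] (p q : ι → κ)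
    (φ : ι → κ → Prop) (hp : ∀ i, φ i (p i)) (hq : ∀ i, ¬ φ i (q i))
    (hpq : ∀ i j, i ≠ j → (φ j (p i) ↔ φ j (q i))) : Fintype.card ι ≤ Fintype.card κ := by
  classical
  let w (i : ι) : κ → ℚ := Pi.single (p i) 1 - Pi.single (q i) 1
  let ψ (j : ι) : (κ → ℚ) →ₗ[ℚ] ℚ :=
    Fintype.linearCombination ℚ fun k => if φ j k then 1 else 0
  have hψ (i j : ι) : ψ j (w i) = if i = j then 1 else 0 := by
    simp only [ψ, w, map_sub, Fintype.linearCombination_apply_single, one_smul]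
    obtain rfl | hij := eq_or_ne i j
    · simp [hp, hq]
    · simp [hpq i j hij, hij]
  have hli : LinearIndependent ℚ w := by
    rw [Fintype.linearIndependent_iff]
    intro g hg j
    simpa [hψ] using congrArg (ψ j) hg
  simpa using hli.fintype_card_le_finrank

/-! ### Continuous logarithms and level lines -/

/-- `f` has a continuous logarithm on `K`. -/
def HasLogOn {X : Type*} [TopologicalSpace X] (f : X → ℂ) (K : Set X) : Prop :=
  ∃ L : X → ℂ, ContinuousOn L K ∧ ∀ z ∈ K, Complex.exp (L z) = f z

namespace HasLogOn

variable {X : Type*} [TopologicalSpace X] {f g : X → ℂ} {K : Set X}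

theorem congr (h : HasLogOn f K) (hfg : EqOn f g K) : HasLogOn g K :=
  let ⟨L, hL, hLf⟩ := h
  ⟨L, hL, fun z hz => (hLf z hz).trans (hfg hz)⟩

theorem mono {K' : Set X} (h : HasLogOn f K) (hK : K' ⊆ K) : HasLogOn f K' :=
  let ⟨L, hL, hLf⟩ := h
  ⟨L, hL.mono hK, fun z hz => hLf z (hK hz)⟩

theorem mul (hf : HasLogOn f K) (hg : HasLogOn g K) : HasLogOn (fun z => f z * g z) K :=
  let ⟨L, hL, hLf⟩ := hf
  let ⟨M, hM, hMg⟩ := hg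
  ⟨fun z => L z + M z, hL.add hM, fun z hz => by rw [Complex.exp_add, hLf z hz, hMg z hz]⟩

theorem inv (hf : HasLogOn f K) : HasLogOn (fun z => (f z)⁻¹) K :=
  let ⟨L, hL, hLf⟩ := hf
  ⟨fun z => -L z, hL.neg, fun z hz => by rw [Complex.exp_neg, hLf z hz]⟩

theorem const {c : ℂ} (hc : c ≠ 0) : HasLogOn (fun _ => c) K :=
  ⟨fun _ => Complex.log c, continuousOn_const, fun _ _ => Complex.exp_log hc⟩

theorem of_mem_slitPlane (hf : ContinuousOn f K) (h : ∀ z ∈ K, f z ∈ Complex.slitPlane) :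
    HasLogOn f K :=
  ⟨fun z => Complex.log (f z), hf.clog h,
    fun z hz => Complex.exp_log (Complex.slitPlane_ne_zero (h z hz))⟩

end HasLogOn

theorem sub_eq_sub_of_exp_eq_mul_exp {X : Type*} [TopologicalSpace X] {S : Set X}
    (hS : IsPreconnected S) {L M : X → ℂ} (hL : ContinuousOn L S) (hM : ContinuousOn M S) {c : ℂ}
    (h : ∀ z ∈ S, Complex.exp (L z) = c * Complex.exp (M z)) {x y : X} (hx : x ∈ S) (hy : y ∈ S) :
    L x - M x = L y - M y := by
  have hperiod (z) (hz : z ∈ S) :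
      ∃ n : ℤ, L z - M z = L x - M x + n * (2 * Real.pi * Complex.I) := by
    rw [← Complex.exp_eq_exp_iff_exists_int, Complex.exp_sub, Complex.exp_sub, h z hz, h x hx]
    field_simp [Complex.exp_ne_zero]
  choose! n hn using hperiod
  have hcont : ContinuousOn (fun z => (n z : ℝ)) S := by
    have hquot : ContinuousOn (fun z => (L z - M z - (L x - M x)).im / (2 * Real.pi)) S := by
      fun_prop
    refine hquot.congr fun z hz => ?_
    simp [hn z hz, Real.pi_ne_zero]
  have hconst : (n x : ℝ) = n y := hS.constant_of_mapsTo
    Int.isClosedEmbedding_coe_real.isEmbedding.isDiscrete_range hcont (fun z _ => ⟨n z, rfl⟩) hx hy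
  have hx0 : (n x : ℂ) * (2 * Real.pi * Complex.I) = 0 := by linear_combination -hn x hx
  have hxy : (n x : ℂ) = n y := by exact_mod_cast hconst
  rw [hn y hy, ← hxy, hx0, add_zero]

theorem eventually_hasLogOn_sub_div_sub {K : Set ℂ} (hK : IsCompact K) {x : ℂ} (hx : x ∉ K) :
    ∀ᶠ y in 𝓝 x, HasLogOn (fun z => (z - x) / (z - y)) K := by
  have hslit : ∀ᶠ y in 𝓝 x, ∀ z ∈ K, z - y ≠ 0 ∧ (z - x) / (z - y) ∈ Complex.slitPlane := by
    refine hK.eventually_forall_of_forall_eventually fun z hz => ?_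
    have hzx : z - x ≠ 0 := sub_ne_zero.2 (ne_of_mem_of_not_mem hz hx)
    have hquot : ContinuousAt (fun p : ℂ × ℂ => (p.2 - x) / (p.2 - p.1)) (x, z) :=
      ContinuousAt.div (by fun_prop) (by fun_prop) hzx
    refine ((continuous_snd.sub continuous_fst).continuousAt.eventually_ne hzx).and
      (hquot.eventually_mem (Complex.isOpen_slitPlane.mem_nhds ?_))
    simp [div_self hzx]
  filter_upwards [hslit] with y hy
  exact .of_mem_slitPlane (.div (by fun_prop) (by fun_prop) fun z hz => (hy z hz).1)
    fun z hz => (hy z hz).2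

theorem hasLogOn_sub_div_sub_of_mem_connectedComponentIn {K : Set ℂ} (hK : IsCompact K) {a c : ℂ}
    (ha : a ∉ K) (hc : c ∈ connectedComponentIn Kᶜ a) :
    HasLogOn (fun z => (z - a) / (z - c)) K := by
  have hsub : connectedComponentIn Kᶜ a ⊆ Kᶜ := connectedComponentIn_subset _ _
  refine isPreconnected_connectedComponentIn.induction₂
    (fun x y => HasLogOn (fun z => (z - x) / (z - y)) K) (fun x hx => ?_)
    (fun x y w _ hy _ h h' => ?_)
    (fun x y _ _ h => ?_) (mem_connectedComponentIn ha) hc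
  · exact (eventually_hasLogOn_sub_div_sub hK (hsub hx)).filter_mono nhdsWithin_le_nhds
  · refine (h.mul h').congr fun z hz => div_mul_div_cancel₀ (sub_ne_zero.2 ?_)
    exact ne_of_mem_of_not_mem hz (hsub hy)
  · simpa only [inv_div] using h.inv

theorem hasLogOn_sub_of_notMem_of_convex {D : Set ℂ} (hD : IsClosed D) (hconv : Convex ℝ D) {c : ℂ}
    (hc : c ∉ D) : HasLogOn (fun z => z - c) D := by
  obtain ⟨f, u, hfc, hf⟩ :=
    RCLike.geometric_hahn_banach_point_closed (𝕜 := ℂ) hconv hD hc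
  have hf1 (z : ℂ) : f z = z * f 1 := by
    rw [← smul_eq_mul, ← map_smul, smul_eq_mul, mul_one]
  have hpos (z) (hz : z ∈ D) : 0 < ((z - c) * f 1).re := by
    rw [← hf1, map_sub, Complex.sub_re]
    exact sub_pos.2 (hfc.trans (hf z hz))
  obtain rfl | ⟨z₀, hz₀⟩ := D.eq_empty_or_nonempty
  · exact ⟨0, continuousOn_empty _, by simp⟩
  have hne : f 1 ≠ 0 := fun h => by simpa [h] using hpos z₀ hz₀
  refine ((HasLogOn.of_mem_slitPlane (f := fun z => (z - c) * f 1) (by fun_prop)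
    fun z hz => Or.inl (hpos z hz)).mul (HasLogOn.const hne).inv).congr fun z _ => ?_
  exact mul_inv_cancel_right₀ hne _

/-- A maximum principle for the imaginary part along a level line of the real part. -/
theorem exists_mem_frontier_re_eq_of_nhds_le_map {X : Type*} [TopologicalSpace X] {C : Set X}
    (hC : IsOpen C) (hcpt : IsCompact (closure C)) {F : X → ℂ} (hF : ContinuousOn F (closure C))
    (hopen : ∀ p ∈ C, 𝓝 (F p) ≤ map F (𝓝 p)) {a : X} (ha : a ∈ C) (y : ℝ) (hy : y ≠ 0) :
    ∃ p ∈ frontier C, (F p).re = (F a).re ∧ (F a).im * y ≤ (F p).im * y := by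
  set T := closure C ∩ F ⁻¹' {w | w.re = (F a).re ∧ (F a).im * y ≤ w.im * y}
  have hTcpt : IsCompact T := hcpt.of_isClosed_subset
    (hF.preimage_isClosed_of_isClosed isClosed_closure
      ((isClosed_eq Complex.continuous_re continuous_const).inter
        (isClosed_le continuous_const (Complex.continuous_im.mul continuous_const))))
        inter_subset_left
  obtain ⟨p, hpT, hmax⟩ := hTcpt.exists_isMaxOn (f := fun z => (F z).im * y)
    ⟨a, subset_closure ha, rfl, le_rfl⟩
    ((Complex.continuous_im.comp_continuousOn (hF.mono inter_subset_left)).mul continuousOn_const)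
  refine ⟨p, ⟨hpT.1, fun hp => ?_⟩, hpT.2⟩
  have hpC : p ∈ C := interior_subset hp
  have hup : Tendsto (fun s : ℝ => F p + (s * y : ℝ) * Complex.I) (𝓝[>] 0) (𝓝 (F p)) := by
    have hcont : Continuous fun s : ℝ => F p + (s * y : ℝ) * Complex.I := by fun_prop
    simpa using (hcont.tendsto 0).mono_left nhdsWithin_le_nhds
  have himg : F '' C ∈ 𝓝 (F p) := hopen p hpC (image_mem_map (hC.mem_nhds hpC))
  obtain ⟨s, ⟨q, hqC, hq⟩, hs : 0 < s⟩ :=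
    ((hup.eventually_mem himg).and self_mem_nhdsWithin).exists
  have hsy : 0 < s * y * y := by rw [mul_assoc]; exact mul_pos hs (mul_self_pos.2 hy)
  have hqim : (F q).im * y = (F p).im * y + s * y * y := by simp [hq, add_mul]
  have hqT : q ∈ T := ⟨subset_closure hqC, by simp [hq, hpT.2.1], by linarith [hpT.2.2]⟩
  have : (F q).im * y ≤ (F p).im * y := hmax hqT
  linarith

theorem frontier_connectedComponentIn_compl_subset {X : Type*} [TopologicalSpace X]
    [LocallyConnectedSpace X] {K : Set X} (hK : IsClosed K) (a : X) :
    frontier (connectedComponentIn Kᶜ a) ⊆ K := by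
  intro p hp
  by_contra hpK
  obtain ⟨q, hqp, hqa⟩ := mem_closure_iff.1 hp.1 _ (hK.isOpen_compl.connectedComponentIn (x := p))
    (mem_connectedComponentIn hpK)
  refine hp.2 (hK.isOpen_compl.connectedComponentIn.interior_eq.symm ▸ ?_)
  rw [connectedComponentIn_eq hqa, ← connectedComponentIn_eq hqp]
  exact mem_connectedComponentIn hpK

theorem not_connectedComponentIn_subset_of_re_ne_zero_or_eq_zero {K D : Set ℂ} (hK : IsClosed K)
    (hD : IsCompact D) {F : ℂ → ℂ} (hF : ContinuousOn F D)
    (hopen : ∀ p ∈ D, 𝓝 (F p) ≤ map F (𝓝 p)) (hKF : ∀ z ∈ K, (F z).re ≠ 0 ∨ F z = 0) {a : ℂ}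
    (ha : a ∉ K) (har : (F a).re = 0) (hai : F a ≠ 0) : ¬ connectedComponentIn Kᶜ a ⊆ D := by
  intro hCD
  have hcl : closure (connectedComponentIn Kᶜ a) ⊆ D := closure_minimal hCD hD.isClosed
  have him : (F a).im ≠ 0 := fun h => hai (Complex.ext har h)
  obtain ⟨p, hpfr, hpr, hpi⟩ := exists_mem_frontier_re_eq_of_nhds_le_map
    hK.isOpen_compl.connectedComponentIn (hD.of_isClosed_subset isClosed_closure hcl)
    (hF.mono hcl) (fun p hp => hopen p (hCD hp)) (mem_connectedComponentIn ha) _ him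
  have hp0 : F p = 0 := (hKF p (frontier_connectedComponentIn_compl_subset hK a hpfr)).resolve_left
    (not_not.2 (hpr.trans har))
  have := mul_self_pos.2 him
  rw [hp0, Complex.zero_im, zero_mul] at hpi
  linarith

theorem hasLogOn_sub_of_re_ne_zero_or_eq_zero {z₀ : ℂ} {R : ℝ} {K : Set ℂ} (hK : IsCompact K)
    (hKR : K ⊆ ball z₀ R) {F : ℂ → ℂ} (hF : ContinuousOn F (ball z₀ R))
    (hopen : ∀ p ∈ ball z₀ R, 𝓝 (F p) ≤ map F (𝓝 p)) (hKF : ∀ z ∈ K, (F z).re ≠ 0 ∨ F z = 0)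
    {a : ℂ} (har : (F a).re = 0) (hai : F a ≠ 0) : HasLogOn (fun z => z - a) K := by
  have ha : a ∉ K := fun h => (hKF a h).elim (· har) hai
  obtain ⟨ρ, hρ, hKρ⟩ := exists_lt_subset_ball hK.isClosed hKR
  have hρR := closedBall_subset_ball hρ (x := z₀)
  obtain ⟨c, hc, hcρ⟩ := not_subset.1 <| not_connectedComponentIn_subset_of_re_ne_zero_or_eq_zero
    hK.isClosed (isCompact_closedBall z₀ ρ) (hF.mono hρR) (fun p hp => hopen p (hρR hp)) hKF ha
    har hai
  have hlog :=
    (hasLogOn_sub_of_notMem_of_convex isClosed_closedBall (convex_closedBall z₀ ρ) hcρ).mono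
    (hKρ.trans ball_subset_closedBall)
  refine ((hasLogOn_sub_div_sub_of_mem_connectedComponentIn hK ha hc).mul hlog).congr fun z hz => ?_
  exact div_mul_cancel₀ _
    (sub_ne_zero.2 (ne_of_mem_of_not_mem hz (connectedComponentIn_subset _ _ hc)))

/-- The two sides differ by `2πi`: as `z` runs from `t` to `-t` along the segment, `arg (z - α)`
falls while `arg (z - β)` rises. -/
theorem log_sub_log_ne {t : ℝ} {α β : ℂ} (hα : ‖α‖ < t) (hβ : ‖β‖ < t) (hαi : 0 < α.im)
    (hβi : β.im < 0) (hp : 0 < ((t - α) / (t - β)).re) (hm : 0 < ((-t - α) / (-t - β)).re) :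
    Complex.log (t - α) - Complex.log (t - β) - Complex.log ((t - α) / (t - β)) ≠
      Complex.log (-t - α) - Complex.log (-t - β) - Complex.log ((-t - α) / (-t - β)) := by
  intro h
  have hαr := abs_le.1 (Complex.abs_re_le_norm α)
  have hβr := abs_le.1 (Complex.abs_re_le_norm β)
  have hpi := Real.pi_pos
  have hquot_p := abs_lt.1 (Complex.abs_arg_lt_pi_div_two_iff.2 (.inl hp))
  have hquot_m := abs_lt.1 (Complex.abs_arg_lt_pi_div_two_iff.2 (.inl hm))
  have hα_p : -(Real.pi / 2) < (t - α : ℂ).arg :=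
    (abs_lt.1 (Complex.abs_arg_lt_pi_div_two_iff.2 (.inl (by simp; linarith)))).1
  have hα_p' : (t - α : ℂ).arg < 0 := Complex.arg_neg_iff.2 (by simpa using hαi)
  have hβ_p : (t - β : ℂ).arg < Real.pi / 2 :=
    (abs_lt.1 (Complex.abs_arg_lt_pi_div_two_iff.2 (.inl (by simp; linarith)))).2
  have hα_m : (-t - α : ℂ).arg < -(Real.pi / 2) := by
    rw [← not_le, Complex.neg_pi_div_two_le_arg_iff, not_or]
    constructor <;> simp <;> linarith
  have hβ_m : Real.pi / 2 < (-t - β : ℂ).arg := by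
    rw [← not_le, Complex.arg_le_pi_div_two_iff, not_or]
    constructor <;> simp <;> linarith
  have h1 : (t - α : ℂ) ≠ 0 := fun h0 => by simp [h0] at hp
  have h2 : (t - β : ℂ) ≠ 0 := fun h0 => by simp [h0] at hp
  obtain ⟨n, hn⟩ := Complex.exp_eq_one_iff.1 <|
    show Complex.exp (Complex.log (t - α) - Complex.log (t - β) -
      Complex.log ((t - α) / (t - β))) = 1 by
    rw [Complex.exp_sub, Complex.exp_sub, Complex.exp_log h1, Complex.exp_log h2,
      Complex.exp_log (div_ne_zero h1 h2), div_self (div_ne_zero h1 h2)]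
  have hL := congrArg Complex.im hn
  have hR := congrArg Complex.im (h.symm.trans hn)
  simp only [Complex.sub_im, Complex.log_im, Complex.mul_im, Complex.intCast_re, Complex.mul_re,
    Complex.re_ofNat, Complex.ofReal_re, Complex.im_ofNat, Complex.ofReal_im, mul_zero, sub_zero,
    Complex.I_im, mul_one, zero_mul, add_zero, Complex.I_re, Complex.intCast_im,
    sub_self] at hL hR
  have hn_gt : -1 < n := by
    have : (-1 : ℝ) < n := by nlinarith
    exact_mod_cast this
  have hn_lt : n < 0 := by
    have : (n : ℝ) < 0 := by nlinarith
    exact_mod_cast this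
  omega

theorem sub_div_sub_re_pos {z α β : ℂ} {d : ℝ} (hα : ‖α‖ < d / 4) (hβ : ‖β‖ < d / 4)
    (hz : d ≤ ‖z‖) : z - β ≠ 0 ∧ 0 < ((z - α) / (z - β)).re := by
  have hd : 0 < d := by linarith [norm_nonneg α]
  have hzβ : d * (3 / 4) ≤ ‖z - β‖ := by linarith [norm_sub_norm_le z β]
  have hne : z - β ≠ 0 := norm_pos_iff.1 (by linarith)
  have hnear : ‖(z - α) / (z - β) - 1‖ < 1 := by
    rw [div_sub_one hne, sub_sub_sub_cancel_left, norm_div, div_lt_one (by linarith)]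
    linarith [norm_sub_le β α]
  have := abs_lt.1 ((Complex.abs_re_le_norm _).trans_lt hnear)
  simp only [Complex.sub_re, Complex.one_re] at this
  exact ⟨hne, by linarith⟩

/-- Along `Γ` the quotient stays close to `1`, whereas along the segment its argument turns by
almost `2π`. -/
theorem not_hasLogOn_sub_div_sub {t d : ℝ} {Γ : Set ℂ} (hΓ : IsPreconnected Γ)
    (hpos : (t : ℂ) ∈ Γ) (hneg : (-t : ℂ) ∈ Γ) (hd : ∀ z ∈ Γ, d ≤ ‖z‖) (ht : 0 < t) {α β : ℂ}
    (hα : ‖α‖ < d / 4) (hβ : ‖β‖ < d / 4) (hαi : 0 < α.im) (hβi : β.im < 0) :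
    ¬ HasLogOn (fun z => (z - α) / (z - β)) (Γ ∪ (↑) '' Icc (-t) t) := by
  rintro ⟨L, hL, hLexp⟩
  have hdt : d ≤ t := by simpa [abs_of_pos ht] using hd _ hpos
  have hquot (z) (hz : z ∈ Γ) := sub_div_sub_re_pos hα hβ (hd z hz)
  have him (z) (hz : z ∈ (↑) '' Icc (-t) t) : (z - α).im ≠ 0 ∧ (z - β).im ≠ 0 := by
    obtain ⟨s, -, rfl⟩ := hz
    simp [hαi.ne', hβi.ne]
  have hne {w : ℂ} (hw : w.im ≠ 0) : w ≠ 0 := fun h => hw (by simp [h])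
  have hcurve := sub_eq_sub_of_exp_eq_mul_exp hΓ (c := 1)
    (M := fun z => Complex.log ((z - α) / (z - β))) (hL.mono subset_union_left)
    (.clog (.div (by fun_prop) (by fun_prop) fun z hz => (hquot z hz).1)
      fun z hz => .inl (hquot z hz).2)
    (fun z hz => by
      rw [hLexp z (.inl hz), Complex.exp_log (Complex.slitPlane_ne_zero (.inl (hquot z hz).2)),
        one_mul]) hpos hneg
  have hsegment := sub_eq_sub_of_exp_eq_mul_exp
    (isPreconnected_Icc.image _ Complex.continuous_ofReal.continuousOn) (c := 1)
    (M := fun z => Complex.log (z - α) - Complex.log (z - β)) (hL.mono subset_union_right)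
    (.sub (.clog (by fun_prop) fun z hz => .inr (him z hz).1)
      (.clog (by fun_prop) fun z hz => .inr (him z hz).2))
    (fun z hz => by
      rw [hLexp z (.inr hz), Complex.exp_sub, Complex.exp_log (hne (him z hz).1),
        Complex.exp_log (hne (him z hz).2), one_mul])
    (x := (t : ℂ)) (y := (-t : ℂ)) ⟨t, by constructor <;> linarith, rfl⟩
    ⟨-t, by constructor <;> linarith, by simp⟩
  refine log_sub_log_ne (t := t) (by linarith) (by linarith) hαi hβi (hquot _ hpos).2
    (hquot _ hneg).2 ?_
  linear_combination hcurve - hsegment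

theorem eventually_exists_eq_norm_sub_le_of_hasStrictDerivAt_one {F : ℂ → ℂ}
    (hF : HasStrictDerivAt F 1 0) (h0 : F 0 = 0) {ε : ℝ} (hε : 0 < ε) :
    ∀ᶠ w in 𝓝 0, ∃ a, F a = w ∧ ‖a - w‖ ≤ ε * ‖w‖ := by
  have hinv := (hF.to_localInverse one_ne_zero).hasDerivAt
  have hright := hF.eventually_right_inverse one_ne_zero
  have hinv0 := (hF.eventually_left_inverse one_ne_zero).self_of_nhds
  rw [h0] at hinv hright hinv0
  filter_upwards [(hasDerivAt_iff_isLittleO.1 hinv).def hε, hright] with w hw hFw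
  exact ⟨_, hFw, by simpa [hinv0] using hw⟩

theorem exists_eq_mul_I_im_pos_and_im_neg {F : ℂ → ℂ} (hF : HasStrictDerivAt F 1 0) (h0 : F 0 = 0)
    {d : ℝ} (hd : 0 < d) :
    ∃ (y : ℝ) (a b : ℂ), y ≠ 0 ∧ (F a = y * Complex.I ∧ ‖a‖ < d ∧ 0 < a.im) ∧
      F b = -(y * Complex.I) ∧ ‖b‖ < d ∧ b.im < 0 := by
  have hinv := eventually_exists_eq_norm_sub_le_of_hasStrictDerivAt_one hF h0 one_half_pos
  have hlim : Tendsto (fun y : ℝ => (y * Complex.I : ℂ)) (𝓝[>] 0) (𝓝 0) := by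
    have hcont : Continuous fun y : ℝ => (y * Complex.I : ℂ) := by fun_prop
    simpa using (hcont.tendsto 0).mono_left nhdsWithin_le_nhds
  have hlim' : Tendsto (fun y : ℝ => -(y * Complex.I : ℂ)) (𝓝[>] 0) (𝓝 0) := by
    simpa using hlim.neg
  obtain ⟨y, ⟨⟨a, haF, ha⟩, ⟨b, hbF, hb⟩, hyd⟩, hy : 0 < y⟩ :=
    (((hlim.eventually hinv).and ((hlim'.eventually hinv).and
      (nhdsWithin_le_nhds (Iio_mem_nhds (half_pos hd))))).and self_mem_nhdsWithin).exists
  have hnorm : ‖(y * Complex.I : ℂ)‖ = y := by simp [abs_of_pos hy]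
  rw [hnorm] at ha
  rw [norm_neg, hnorm] at hb
  have ha_im := abs_le.1 ((Complex.abs_im_le_norm _).trans ha)
  have hb_im := abs_le.1 ((Complex.abs_im_le_norm _).trans hb)
  have ha_norm := norm_le_norm_add_norm_sub' a (y * Complex.I)
  have hb_norm := norm_le_norm_add_norm_sub' b (-(y * Complex.I))
  rw [norm_neg] at hb_norm
  rw [hnorm] at ha_norm hb_norm
  simp only [Complex.sub_im, Complex.neg_im, Complex.mul_I_im, Complex.ofReal_re] at ha_im hb_im
  exact ⟨y, a, b, hy.ne', ⟨haF, by linarith, by linarith⟩, hbF, by linarith, by linarith⟩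

theorem eventually_re_ne_zero_of_hasDerivAt_one {F : ℂ → ℂ} (hF : HasDerivAt F 1 0)
    (h0 : F 0 = 0) : ∀ᶠ s : ℝ in 𝓝 0, s ≠ 0 → (F s).re ≠ 0 := by
  have hlim : Tendsto ((↑) : ℝ → ℂ) (𝓝 0) (𝓝 0) := Complex.continuous_ofReal.tendsto' 0 0 rfl
  filter_upwards [hlim.eventually ((hasDerivAt_iff_isLittleO.1 hF).def one_half_pos)]
    with s hs hs0 h
  have hre := (Complex.abs_re_le_norm _).trans hs
  simp only [h0, sub_zero, smul_eq_mul, mul_one, Complex.sub_re, h, Complex.ofReal_re, zero_sub,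
    abs_neg, Complex.norm_real, Real.norm_eq_abs] at hre
  linarith [abs_pos.2 hs0]

section Separation

variable {z₀ : ℂ} {R : ℝ} {F : ℂ → ℂ}

theorem not_joinedIn_of_deriv_eq_one (hF : DifferentiableOn ℂ F (ball z₀ R))
    (hopen : ∀ p ∈ ball z₀ R, 𝓝 (F p) ≤ map F (𝓝 p)) (h0 : 0 ∈ ball z₀ R) (hF0 : F 0 = 0)
    (hd : deriv F 0 = 1) {t : ℝ} (ht : 0 < t)
    (hseg : ∀ s : ℝ, |s| ≤ t → (s : ℂ) ∈ ball z₀ R ∧ (s ≠ 0 → (F s).re ≠ 0)) :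
    ¬ JoinedIn ({z ∈ ball z₀ R | (F z).re ≠ 0 ∨ F z = 0} \ {0}) t (-t) := by
  rintro ⟨γ, hγ⟩
  have hstrict : HasStrictDerivAt F 1 0 :=
    hd ▸ (hF.analyticAt (isOpen_ball.mem_nhds h0)).hasStrictDerivAt
  have hγc : IsCompact (range γ) := isCompact_range γ.continuous
  obtain ⟨_, ⟨s, rfl⟩, hmin⟩ :=
    hγc.exists_isMinOn (range_nonempty γ) continuous_norm.continuousOn
  obtain ⟨y, a, b, hy, ⟨haF, ha, ha_im⟩, hbF, hb, hb_im⟩ :=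
    exists_eq_mul_I_im_pos_and_im_neg hstrict hF0 (d := ‖γ s‖ / 4)
      (div_pos (norm_pos_iff.2 (hγ s).2) four_pos)
  have hK : IsCompact (range γ ∪ (↑) '' Icc (-t) t) :=
    hγc.union (isCompact_Icc.image Complex.continuous_ofReal)
  have hKF : ∀ z ∈ range γ ∪ (↑) '' Icc (-t) t, z ∈ ball z₀ R ∧ ((F z).re ≠ 0 ∨ F z = 0) := by
    rintro _ (⟨s, rfl⟩ | ⟨s, hs, rfl⟩)
    · exact (hγ s).1
    · have hs := hseg s (abs_le.2 hs)
      obtain rfl | hs0 := eq_or_ne s 0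
      · exact ⟨hs.1, .inr (by simpa using hF0)⟩
      · exact ⟨hs.1, .inl (hs.2 hs0)⟩
  have hlog {e : ℂ} (he : (F e).re = 0) (he' : F e ≠ 0) :=
    hasLogOn_sub_of_re_ne_zero_or_eq_zero hK (fun z hz => (hKF z hz).1) hF.continuousOn hopen
      (fun z hz => (hKF z hz).2) he he'
  refine not_hasLogOn_sub_div_sub (isPreconnected_range γ.continuous) ⟨0, γ.source⟩
    ⟨1, γ.target⟩ (fun z hz => hmin hz) ht ha hb ha_im hb_im ?_
  simpa only [div_eq_mul_inv] using
    (hlog (by simp [haF]) (by simp [haF, hy])).mul (hlog (by simp [hbF]) (by simp [hbF, hy])).inv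

theorem exists_joinedIn_insert_not_joinedIn_of_deriv_eq_one
    (hF : DifferentiableOn ℂ F (ball z₀ R))
    (hopen : ∀ p ∈ ball z₀ R, 𝓝 (F p) ≤ map F (𝓝 p)) (h0 : 0 ∈ ball z₀ R) (hF0 : F 0 = 0)
    (hd : deriv F 0 = 1) :
    ∃ x ∈ {z ∈ ball z₀ R | (F z).re ≠ 0}, ∃ y ∈ {z ∈ ball z₀ R | (F z).re ≠ 0},
      JoinedIn (insert 0 {z ∈ ball z₀ R | (F z).re ≠ 0}) x y ∧
        ¬ JoinedIn ({z ∈ ball z₀ R | (F z).re ≠ 0 ∨ F z = 0} \ {0}) x y := by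
  have hderiv : HasDerivAt F 1 0 :=
    hd ▸ (hF.differentiableAt (isOpen_ball.mem_nhds h0)).hasDerivAt
  have hball : ∀ᶠ s : ℝ in 𝓝 0, (s : ℂ) ∈ ball z₀ R :=
    Complex.continuous_ofReal.continuousAt.eventually_mem (isOpen_ball.mem_nhds (by simpa using h0))
  obtain ⟨t, ht, hseg⟩ := Metric.nhds_basis_closedBall.eventually_iff.1
    (hball.and (eventually_re_ne_zero_of_hasDerivAt_one hderiv hF0))
  simp only [mem_closedBall_zero_iff, Real.norm_eq_abs] at hseg
  have hmem {s : ℝ} (hs : |s| ≤ t) (hs0 : s ≠ 0) : (s : ℂ) ∈ {z ∈ ball z₀ R | (F z).re ≠ 0} :=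
    ⟨(hseg hs).1, (hseg hs).2 hs0⟩
  refine ⟨t, hmem (abs_of_pos ht).le ht.ne', (-t : ℝ),
    hmem (by rw [abs_neg, abs_of_pos ht]) (neg_ne_zero.2 ht.ne'), ?_, ?_⟩
  · have hpath : IsPathConnected (((↑) : ℝ → ℂ) '' Icc (-t) t) :=
      ((convex_Icc _ _).isPathConnected (nonempty_Icc.2 (by linarith))).image
        Complex.continuous_ofReal
    refine (hpath.joinedIn _ ⟨t, ⟨by linarith, le_rfl⟩, rfl⟩ _
      ⟨-t, ⟨le_rfl, by linarith⟩, rfl⟩).mono ?_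
    rintro _ ⟨s, hs, rfl⟩
    obtain rfl | hs0 := eq_or_ne s 0
    · exact .inl Complex.ofReal_zero
    · exact .inr (hmem (abs_le.2 hs) hs0)
  · simpa only [Complex.ofReal_neg] using
      not_joinedIn_of_deriv_eq_one hF hopen h0 hF0 hd ht fun s hs => hseg hs

/-- A first-order zero of `F` separates its two sides in `{re F ≠ 0} ∪ {F = 0}`. -/
theorem exists_joinedIn_insert_not_joinedIn_of_deriv_ne_zero
    (hF : DifferentiableOn ℂ F (ball z₀ R)) (hopen : ∀ p ∈ ball z₀ R, 𝓝 (F p) ≤ map F (𝓝 p))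
    {p : ℂ} (hp : p ∈ ball z₀ R) (hFp : F p = 0) (hd : deriv F p ≠ 0) :
    ∃ x ∈ {z ∈ ball z₀ R | (F z).re ≠ 0}, ∃ y ∈ {z ∈ ball z₀ R | (F z).re ≠ 0},
      JoinedIn (insert p {z ∈ ball z₀ R | (F z).re ≠ 0}) x y ∧
        ¬ JoinedIn ({z ∈ ball z₀ R | (F z).re ≠ 0 ∨ F z = 0} \ {p}) x y := by
  set c := deriv F p
  let φ : ℂ ≃ₜ ℂ := (Homeomorph.mulRight₀ c⁻¹ (inv_ne_zero hd)).trans (Homeomorph.addLeft p)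
  have hφ (z) : φ z = p + z * c⁻¹ := rfl
  have hφ0 : φ 0 = p := by simp [hφ]
  have hφd (z) : HasDerivAt φ c⁻¹ z :=
    one_mul c⁻¹ ▸ ((hasDerivAt_id z).mul_const c⁻¹).const_add p
  have hball (z) : z ∈ ball ((z₀ - p) * c) (R * ‖c‖) ↔ φ z ∈ ball z₀ R := by
    have : z - (z₀ - p) * c = (φ z - z₀) * c := by rw [hφ]; field_simp; ring
    rw [mem_ball_iff_norm, mem_ball_iff_norm, this, norm_mul,
      mul_lt_mul_iff_of_pos_right (norm_pos_iff.2 hd)]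
  obtain ⟨x, hx, y, hy, hxy, hnxy⟩ := exists_joinedIn_insert_not_joinedIn_of_deriv_eq_one
    (F := F ∘ φ) (z₀ := (z₀ - p) * c) (R := R * ‖c‖)
    (hF.comp (fun z _ => (hφd z).differentiableAt.differentiableWithinAt)
      fun z hz => (hball z).1 hz)
    (fun z hz => by
      rw [← map_map, φ.map_nhds_eq]
      exact hopen _ ((hball z).1 hz))
    ((hball 0).2 (hφ0.symm ▸ hp)) (by simp [hφ0, hFp])
    (by
      have hder : HasDerivAt F c (φ 0) :=
        hφ0.symm ▸ (hF.differentiableAt (isOpen_ball.mem_nhds hp)).hasDerivAt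
      simpa [hd] using (hder.comp 0 (hφd 0)).deriv)
  refine ⟨φ x, ⟨(hball x).1 hx.1, hx.2⟩, φ y, ⟨(hball y).1 hy.1, hy.2⟩,
    (hxy.map φ.continuous).mono ?_, fun h => hnxy ?_⟩
  · rintro _ ⟨z, rfl | hz, rfl⟩
    · exact .inl hφ0
    · exact .inr ⟨(hball z).1 hz.1, hz.2⟩
  · have := (h.map φ.symm.continuous).mono (V := {z ∈ ball ((z₀ - p) * c) (R * ‖c‖) |
      (F (φ z)).re ≠ 0 ∨ F (φ z) = 0} \ {0}) ?_
    · simpa using this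
    rintro _ ⟨z, ⟨hz, hzp⟩, rfl⟩
    refine ⟨⟨(hball _).2 (by simpa using hz.1), by simpa using hz.2⟩, fun h0 => hzp ?_⟩
    rw [mem_singleton_iff, ← φ.apply_symm_apply z, mem_singleton_iff.1 h0, hφ0]

end Separation

/-- `F` is holomorphic on `U`, its real part does not vanish identically there, and the open set
`{re F ≠ 0}`, the union of the nodal domains of `re F`, has at most `N` path components. -/
structure NodallyBoundedOn (F : ℂ → ℂ) (U : Set ℂ) (N : ℕ) : Prop where
  differentiableOn : DifferentiableOn ℂ F U
  exists_re_ne_zero : ∃ z ∈ U, (F z).re ≠ 0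
  hasAtMostPathComponents : HasAtMostPathComponents {z ∈ U | (F z).re ≠ 0} N

namespace NodallyBoundedOn

variable {N : ℕ} {F : ℂ → ℂ} {U : Set ℂ}

theorem sub_mul_I (hF : NodallyBoundedOn F U N) (y : ℝ) :
    NodallyBoundedOn (fun z => F z - y * Complex.I) U N where
  differentiableOn := hF.differentiableOn.sub_const _
  exists_re_ne_zero := by simpa using hF.exists_re_ne_zero
  hasAtMostPathComponents := by simpa using hF.hasAtMostPathComponents

theorem not_eventually_eq (hF : NodallyBoundedOn F U N) (hU : IsOpen U) (hUc : IsPreconnected U)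
    {p : ℂ} (hp : p ∈ U) (hFp : (F p).re = 0) {q : ℂ} (hq : q ∈ U) :
    ¬ ∀ᶠ z in 𝓝 q, F z = F q := by
  intro h
  have hconst : EqOn F (fun _ => F q) U :=
    (hF.differentiableOn.analyticOnNhd hU).eqOn_of_preconnected_of_eventuallyEq
      analyticOnNhd_const hUc hq h
  obtain ⟨w, hw, hFw⟩ := hF.exists_re_ne_zero
  exact hFw (by rw [hconst hw, ← hconst hp, hFp])

theorem nhds_le_map (hF : NodallyBoundedOn F U N) (hU : IsOpen U) (hUc : IsPreconnected U)
    {p : ℂ} (hp : p ∈ U) (hFp : (F p).re = 0) {q : ℂ} (hq : q ∈ U) : 𝓝 (F q) ≤ map F (𝓝 q) :=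
  (hF.differentiableOn.analyticAt (hU.mem_nhds hq)).eventually_constant_or_nhds_le_map_nhds
    |>.resolve_left (hF.not_eventually_eq hU hUc hp hFp hq)

theorem eventually_deriv_ne_zero (hF : NodallyBoundedOn F U N) (hU : IsOpen U)
    (hUc : IsPreconnected U) {p : ℂ} (hp : p ∈ U) (hFp : (F p).re = 0) :
    ∀ᶠ w in 𝓝[≠] p, deriv F w ≠ 0 := by
  refine ((hF.differentiableOn.analyticAt (hU.mem_nhds hp)).deriv
    |>.eventually_eq_zero_or_eventually_ne_zero).resolve_left fun h => ?_
  refine hF.not_eventually_eq hU hUc hp hFp hp ?_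
  obtain ⟨δ, hδ, hball⟩ := Metric.eventually_nhds_iff_ball.1 (h.and (hU.mem_nhds hp))
  refine Metric.eventually_nhds_iff_ball.2 ⟨δ, hδ, fun w hw => ?_⟩
  exact isOpen_ball.is_const_of_deriv_eq_zero (convex_ball p δ).isPreconnected
    (hF.differentiableOn.mono fun x hx => (hball x hx).2) (fun x hx => (hball x hx).1) hw
    (mem_ball_self hδ)

section Ball

variable {z₀ : ℂ} {R : ℝ}

theorem card_le_of_deriv_ne_zero (hF : NodallyBoundedOn F (ball z₀ R) N) (S : Finset ℂ)
    (hS : ∀ z ∈ S, z ∈ ball z₀ R ∧ F z = 0 ∧ deriv F z ≠ 0) : S.card ≤ N := by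
  let A := {z ∈ ball z₀ R | (F z).re ≠ 0}
  obtain ⟨c, hc⟩ : HasAtMostPathComponents A N := hF.hasAtMostPathComponents
  let X (j : S) : Set ℂ := {w ∈ ball z₀ R | (F w).re ≠ 0 ∨ F w = 0} \ {(j : ℂ)}
  have hsep (j : S) : ∃ x y : A, JoinedIn (insert (j : ℂ) A) x y ∧ ¬ JoinedIn (X j) x y := by
    obtain ⟨hj, hFj, hdj⟩ := hS j j.2
    obtain ⟨x, hx, y, hy, h⟩ := exists_joinedIn_insert_not_joinedIn_of_deriv_ne_zero
      hF.differentiableOn (fun q hq => hF.nhds_le_map isOpen_ball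
        (convex_ball _ _).isPreconnected hj (by simp [hFj]) hq) hj hFj hdj
    exact ⟨⟨x, hx⟩, ⟨y, hy⟩, h⟩
  choose x y hxy hnxy using hsep
  have hAX (j : S) : A ⊆ X j := fun w hw =>
    ⟨⟨hw.1, .inl hw.2⟩, fun h => hw.2 (by rw [h, (hS j j.2).2.1, Complex.zero_re])⟩
  have hX {i j : S} (hij : i ≠ j) : JoinedIn (X j) (x i) (y i) :=
    (hxy i).mono (insert_subset ⟨⟨(hS i i.2).1, .inr (hS i i.2).2.1⟩, fun h => hij (Subtype.ext h)⟩
      (hAX j))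
  have hφ (j : S) (w : A) :
      (∃ v : A, c v = c w ∧ JoinedIn (X j) v (x j)) ↔ JoinedIn (X j) w (x j) :=
    ⟨fun ⟨v, hvw, hv⟩ => ((hc v w hvw).mono (hAX j)).symm.trans hv, fun h => ⟨w, rfl, h⟩⟩
  have hcard := card_le_card_of_separating (fun j => c (x j)) (fun j => c (y j))
    (fun j k => ∃ v : A, c v = k ∧ JoinedIn (X j) v (x j))
    (fun j => (hφ j _).2 (.refl (hAX j (x j).2))) (fun j h => hnxy j ((hφ j _).1 h).symm)
    (fun i j hij => (hφ j _).trans <| Iff.trans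
      ⟨(hX hij).symm.trans, (hX hij).trans⟩ (hφ j _).symm)
  simpa using hcard

theorem card_le_of_eq_zero (hF : NodallyBoundedOn F (ball z₀ R) N) (S : Finset ℂ)
    (hS : ∀ z ∈ S, z ∈ ball z₀ R ∧ F z = 0) : S.card ≤ N := by
  classical
  obtain ⟨V, hV, hdisj⟩ := S.finite_toSet.t2_separation
  have himg : ∀ᶠ v in 𝓝 (0 : ℂ), ∀ z ∈ S,
      v ∈ F '' (V z ∩ ball z₀ R ∩ {w | w ≠ z → deriv F w ≠ 0}) := by
    refine S.eventually_all.2 fun z hz => ?_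
    obtain ⟨hzR, hFz⟩ := hS z hz
    have hmap := hF.nhds_le_map isOpen_ball (convex_ball _ _).isPreconnected hzR (by simp [hFz]) hzR
    rw [hFz] at hmap
    refine hmap (image_mem_map (inter_mem (inter_mem ((hV z).2.mem_nhds (hV z).1)
      (isOpen_ball.mem_nhds hzR)) ?_))
    exact eventually_nhdsWithin_iff.1
      (hF.eventually_deriv_ne_zero isOpen_ball (convex_ball _ _).isPreconnected hzR (by simp [hFz]))
  have hlim : Tendsto (fun y : ℝ => (y * Complex.I : ℂ)) (𝓝[≠] 0) (𝓝 0) := by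
    have hcont : Continuous fun y : ℝ => (y * Complex.I : ℂ) := by fun_prop
    simpa using (hcont.tendsto 0).mono_left nhdsWithin_le_nhds
  obtain ⟨y, hy, hy0 : y ≠ 0⟩ := ((hlim.eventually himg).and self_mem_nhdsWithin).exists
  choose! w hw hFw using hy
  have hinj : InjOn w S := fun a ha b hb hab => by_contra fun hne =>
    disjoint_left.1 (hdisj ha hb hne) (hw a ha).1.1 (hab ▸ (hw b hb).1.1)
  rw [← Finset.card_image_of_injOn hinj]
  refine (hF.sub_mul_I y).card_le_of_deriv_ne_zero _ (Finset.forall_mem_image.2 fun z hz => ?_)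
  refine ⟨(hw z hz).1.2, by rw [hFw z hz, sub_self], ?_⟩
  rw [deriv_sub_const]
  refine (hw z hz).2 fun h => hy0 ?_
  simpa [h, (hS z hz).2] using (hFw z hz).symm

theorem card_le_of_eq_mul_I (hF : NodallyBoundedOn F (ball z₀ R) N) (S : Finset ℂ) {y : ℝ}
    (hS : ∀ z ∈ S, z ∈ ball z₀ R ∧ F z = y * Complex.I) : S.card ≤ N :=
  (hF.sub_mul_I y).card_le_of_eq_zero S fun z hz => ⟨(hS z hz).1, sub_eq_zero.2 (hS z hz).2⟩

end Ball

end NodallyBoundedOn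

/-! ### Bloch's theorem and growth bounds -/

theorem ball_subset_image_closedBall_of_le_norm_sub {H : ℂ → ℂ} {z₀ : ℂ} {c r : ℝ} (hc : 0 < c)
    (hr : 0 < r) (hH : DiffContOnCl ℂ H (ball z₀ r))
    (hle : ∀ z ∈ closedBall z₀ r, c * ‖z - z₀‖ ≤ ‖H z - H z₀‖) :
    ball (H z₀) (c * r / 2) ⊆ H '' closedBall z₀ r := by
  refine hH.ball_subset_image_closedBall hr (fun z hz => ?_) ?_
  · rw [← mem_sphere_iff_norm.1 hz]
    exact hle z (sphere_subset_closedBall hz)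
  · have hne : ∀ᶠ z in 𝓝[≠] z₀, H z ≠ H z₀ := by
      filter_upwards [self_mem_nhdsWithin, nhdsWithin_le_nhds (closedBall_mem_nhds z₀ hr)]
        with z hz hzr h
      have hpos : 0 < c * ‖z - z₀‖ := mul_pos hc (norm_pos_iff.2 (sub_ne_zero.2 hz))
      have := hle z hzr
      rw [h, sub_self, norm_zero] at this
      exact this.not_gt hpos
    exact hne.frequently.filter_mono nhdsWithin_le_nhds

theorem norm_deriv_div_two_mul_le_norm_sub {H : ℂ → ℂ} {z₀ : ℂ} {s : ℝ} (hs : 0 < s)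
    (hH : DifferentiableOn ℂ H (ball z₀ s))
    (hbd : ∀ z ∈ ball z₀ s, ‖deriv H z‖ ≤ 2 * ‖deriv H z₀‖) {z : ℂ}
    (hz : z ∈ closedBall z₀ (s / 6)) :
    ‖deriv H z₀‖ / 2 * ‖z - z₀‖ ≤ ‖H z - H z₀‖ := by
  set a := deriv H z₀
  have hsub : closedBall z₀ (s / 6) ⊆ ball z₀ s := closedBall_subset_ball (by linarith)
  have hschwarz : ∀ w ∈ ball z₀ s, ‖deriv H w - a‖ ≤ 3 * ‖a‖ / s * dist w z₀ := by
    intro w hw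
    rw [← dist_eq_norm]
    refine Complex.dist_le_div_mul_dist_of_mapsTo_ball (hH.deriv isOpen_ball) (fun v hv => ?_) hw
    rw [mem_closedBall, dist_eq_norm]
    linarith [norm_sub_le (deriv H v) a, hbd v hv]
  have hderiv : ∀ w ∈ closedBall z₀ (s / 6),
      HasDerivWithinAt (fun z => H z - a * z) (deriv H w - a) (closedBall z₀ (s / 6)) w := by
    intro w hw
    have h := (hH.differentiableAt (isOpen_ball.mem_nhds (hsub hw))).hasDerivAt
    simpa using (h.fun_sub ((hasDerivAt_id w).const_mul a)).hasDerivWithinAt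
  have hmean : ‖(H z - a * z) - (H z₀ - a * z₀)‖ ≤ ‖a‖ / 2 * ‖z - z₀‖ := by
    refine (convex_closedBall z₀ _).norm_image_sub_le_of_norm_hasDerivWithin_le hderiv
      (fun w hw => (hschwarz w (hsub hw)).trans ?_) (mem_closedBall_self (by positivity)) hz
    calc 3 * ‖a‖ / s * dist w z₀ ≤ 3 * ‖a‖ / s * (s / 6) := by gcongr; exact hw
      _ = ‖a‖ / 2 := by field_simp; ring
  have htri := norm_sub_le_norm_add (a * (z - z₀)) ((H z - a * z) - (H z₀ - a * z₀))
  rw [show a * (z - z₀) + ((H z - a * z) - (H z₀ - a * z₀)) = H z - H z₀ by ring, norm_mul] at htri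
  linarith

-- Maximise `‖H' z‖ * (ρ / 2 - dist z c)` over the closed disc of radius `ρ / 2`.
theorem exists_forall_ball_norm_deriv_le_two_mul {H : ℂ → ℂ} {c : ℂ} {ρ : ℝ} (hρ : 0 < ρ)
    (hH : DifferentiableOn ℂ H (ball c ρ)) (hd : deriv H c ≠ 0) :
    ∃ z₀ s, 0 < s ∧ ball z₀ s ⊆ ball c ρ ∧ deriv H z₀ ≠ 0 ∧
      ρ * ‖deriv H c‖ ≤ 4 * (s * ‖deriv H z₀‖) ∧
      ∀ z ∈ ball z₀ s, ‖deriv H z‖ ≤ 2 * ‖deriv H z₀‖ := by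
  have hsub : closedBall c (ρ / 2) ⊆ ball c ρ := closedBall_subset_ball (by linarith)
  obtain ⟨z₀, -, hmax⟩ := (isCompact_closedBall c (ρ / 2)).exists_isMaxOn
    (nonempty_closedBall.2 (by positivity)) (f := fun z => ‖deriv H z‖ * (ρ / 2 - dist z c))
    (((hH.deriv isOpen_ball).continuousOn.mono hsub).norm.mul (by fun_prop))
  have hc : ‖deriv H c‖ * (ρ / 2) ≤ ‖deriv H z₀‖ * (ρ / 2 - dist z₀ c) := by
    simpa using hmax (mem_closedBall_self (by positivity : 0 ≤ ρ / 2))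
  have hpos : 0 < ‖deriv H z₀‖ * (ρ / 2 - dist z₀ c) :=
    (mul_pos (norm_pos_iff.2 hd) (by positivity)).trans_le hc
  have hs : 0 < ρ / 2 - dist z₀ c := pos_of_mul_pos_right hpos (norm_nonneg _)
  have hd₀ : deriv H z₀ ≠ 0 := norm_pos_iff.1 (pos_of_mul_pos_left hpos hs.le)
  refine ⟨z₀, (ρ / 2 - dist z₀ c) / 2, by positivity, ball_subset_ball' (by linarith), hd₀,
    by linarith, fun z hz => ?_⟩
  have hzc : dist z c ≤ ρ / 2 - (ρ / 2 - dist z₀ c) / 2 := by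
    linarith [dist_triangle z z₀ c, mem_ball.1 hz]
  have hzmax : ‖deriv H z‖ * (ρ / 2 - dist z c) ≤ ‖deriv H z₀‖ * (ρ / 2 - dist z₀ c) :=
    hmax (mem_closedBall.2 (by linarith))
  have hle : ‖deriv H z‖ * ((ρ / 2 - dist z₀ c) / 2) ≤ ‖deriv H z‖ * (ρ / 2 - dist z c) := by
    gcongr
    linarith
  nlinarith

/-- A form of Bloch's theorem. -/
theorem exists_ball_subset_image_ball {H : ℂ → ℂ} {c : ℂ} {ρ : ℝ} (hρ : 0 < ρ)
    (hH : DifferentiableOn ℂ H (ball c ρ)) :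
    ∃ w, ball w (ρ * ‖deriv H c‖ / 96) ⊆ H '' ball c ρ := by
  by_cases hd : deriv H c = 0
  · exact ⟨0, by simp [hd]⟩
  obtain ⟨z₀, s, hs, hball, hd₀, hle, hbd⟩ := exists_forall_ball_norm_deriv_le_two_mul hρ hH hd
  have hsub : closedBall z₀ (s / 6) ⊆ ball z₀ s := closedBall_subset_ball (by linarith)
  have himage := ball_subset_image_closedBall_of_le_norm_sub (half_pos (norm_pos_iff.2 hd₀))
    (by positivity) (hH.mono ((closure_ball_subset_closedBall.trans hsub).trans hball)).diffContOnCl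
    fun z hz => norm_deriv_div_two_mul_le_norm_sub hs (hH.mono hball) hbd hz
  exact ⟨H z₀, (ball_subset_ball (by linarith)).trans
    (himage.trans (image_mono (hsub.trans hball)))⟩

theorem exists_hasDerivAt_exp_eq_of_ne_zero {F : ℂ → ℂ} {c : ℂ} {ρ : ℝ} (hρ : 0 < ρ)
    (hF : DifferentiableOn ℂ F (ball c ρ)) (hne : ∀ z ∈ ball c ρ, F z ≠ 0) :
    ∃ H : ℂ → ℂ, ∀ z ∈ ball c ρ, HasDerivAt H (deriv F z / F z) z ∧ Complex.exp (H z) = F z := by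
  obtain ⟨G, hG⟩ := ((hF.deriv isOpen_ball).div hF hne).isExactOn_ball
  have hc : c ∈ ball c ρ := mem_ball_self hρ
  have hderiv : ∀ z ∈ ball c ρ, HasDerivAt (fun z => F z * Complex.exp (-G z)) 0 z := by
    intro z hz
    have h := (hF.differentiableAt (isOpen_ball.mem_nhds hz)).hasDerivAt.fun_mul
      (hG z hz).fun_neg.cexp
    refine h.congr_deriv ?_
    rw [Pi.div_apply]
    field_simp [hne z hz]
    ring
  refine ⟨fun z => G z - G c + Complex.log (F c), fun z hz =>
    ⟨((hG z hz).sub_const _).add_const _, ?_⟩⟩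
  have hconst : F z * Complex.exp (-G z) = F c * Complex.exp (-G c) :=
    isOpen_ball.is_const_of_deriv_eq_zero (convex_ball c ρ).isPreconnected
      (fun w hw => (hderiv w hw).differentiableAt.differentiableWithinAt)
      (fun w hw => (hderiv w hw).deriv) hz hc
  rw [Complex.exp_add, Complex.exp_log (hne c hc), sub_eq_add_neg, Complex.exp_add, mul_assoc,
    mul_comm _ (F c), ← hconst, mul_left_comm, ← Complex.exp_add, add_neg_cancel, Complex.exp_zero,
    mul_one]

theorem exists_finset_exp_eq_of_ball_subset_image {H : ℂ → ℂ} {U : Set ℂ} {w : ℂ} {N : ℕ}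
    (hw : ball w (2 * Real.pi * (N + 1)) ⊆ H '' U) :
    ∃ S : Finset ℂ, S.card = N + 1 ∧
      ∀ z ∈ S, z ∈ U ∧ Complex.exp (H z) = Real.exp w.re * Complex.I := by
  have hθ := toIcoMod_mem_Ico Real.two_pi_pos w.im (Real.pi / 2)
  set θ := toIcoMod Real.two_pi_pos w.im (Real.pi / 2)
  set n := toIcoDiv Real.two_pi_pos w.im (Real.pi / 2)
  have hθn : θ = Real.pi / 2 - n * (2 * Real.pi) := by
    rw [← zsmul_eq_mul]; exact (self_sub_toIcoDiv_zsmul Real.two_pi_pos _ _).symm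
  have hmem (k : Fin (N + 1)) : ∃ z ∈ U, H z = w.re + (θ + 2 * Real.pi * k : ℝ) * Complex.I := by
    refine hw ?_
    have hk : (k : ℝ) ≤ N := mod_cast Nat.lt_succ_iff.1 k.2
    have hdist : (w.re + (θ + 2 * Real.pi * k : ℝ) * Complex.I : ℂ) - w =
        (θ + 2 * Real.pi * k - w.im : ℝ) * Complex.I := by
      apply Complex.ext <;> simp
    rw [mem_ball, dist_eq_norm, hdist, norm_mul, Complex.norm_I, mul_one, Complex.norm_real,
      Real.norm_of_nonneg (by linarith [hθ.1, mul_nonneg Real.two_pi_pos.le k.val.cast_nonneg])]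
    linarith [hθ.2, mul_le_mul_of_nonneg_left hk Real.two_pi_pos.le]
  choose z hz hHz using hmem
  have hinj : Function.Injective z := fun i j hij => by
    have him := congrArg Complex.im ((hHz i).symm.trans ((congrArg H hij).trans (hHz j)))
    simpa [Fin.val_inj] using him
  refine ⟨Finset.univ.map ⟨z, hinj⟩, by simp, ?_⟩
  simp only [Finset.mem_map, Finset.mem_univ, true_and, forall_exists_index,
    forall_apply_eq_imp_iff]
  refine fun k => ⟨hz k, ?_⟩
  have harg : (w.re + (θ + 2 * Real.pi * k : ℝ) * Complex.I : ℂ) =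
      w.re + Real.pi / 2 * Complex.I + ((k : ℕ) - n : ℤ) * (2 * Real.pi * Complex.I) := by
    rw [hθn]; push_cast; ring
  rw [Function.Embedding.coeFn_mk, hHz k, harg, Complex.exp_add, Complex.exp_int_mul_two_pi_mul_I,
    mul_one, Complex.exp_add, Complex.exp_pi_div_two_mul_I, Complex.ofReal_exp]

theorem NodallyBoundedOn.mul_norm_deriv_le {N : ℕ} {F : ℂ → ℂ} {z₀ c : ℂ} {R ρ : ℝ}
    (hF : NodallyBoundedOn F (ball z₀ R) N) (hρ : 0 < ρ) (hsub : ball c ρ ⊆ ball z₀ R)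
    (hne : ∀ z ∈ ball c ρ, F z ≠ 0) :
    ρ * ‖deriv F c‖ ≤ 96 * (2 * Real.pi * (N + 1)) * ‖F c‖ := by
  obtain ⟨H, hH⟩ := exists_hasDerivAt_exp_eq_of_ne_zero hρ (hF.differentiableOn.mono hsub) hne
  have hc : c ∈ ball c ρ := mem_ball_self hρ
  obtain ⟨w, hw⟩ := exists_ball_subset_image_ball hρ
    (fun z hz => (hH z hz).1.differentiableAt.differentiableWithinAt : DifferentiableOn ℂ H _)
  rw [(hH c hc).1.deriv, norm_div] at hw
  by_contra! hlt
  rw [← lt_div_iff₀ (norm_pos_iff.2 (hne c hc)), mul_div_assoc] at hlt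
  obtain ⟨S, hcard, hS⟩ := exists_finset_exp_eq_of_ball_subset_image (N := N)
    ((ball_subset_ball (by linarith)).trans hw)
  have := hF.card_le_of_eq_mul_I S fun z hz => ⟨hsub (hS z hz).1, by
    rw [← (hH z (hS z hz).1).2]; exact (hS z hz).2⟩
  omega

theorem norm_le_exp_mul_of_norm_deriv_le {S : Set ℂ} (hS : Convex ℝ S) {f f' : ℂ → ℂ} {C : ℝ}
    (hf : ∀ z ∈ S, HasDerivAt f (f' z) z) (hC : ∀ z ∈ S, ‖f' z‖ ≤ C * ‖f z‖) {x y : ℂ}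
    (hx : x ∈ S) (hy : y ∈ S) : ‖f y‖ ≤ Real.exp (C * ‖y - x‖) * ‖f x‖ := by
  have hmem : ∀ t ∈ Icc (0 : ℝ) 1, AffineMap.lineMap x y t ∈ S := fun t ht =>
    hS.lineMap_mem hx hy ht
  have hderiv : ∀ t ∈ Icc (0 : ℝ) 1, HasDerivAt (fun t : ℝ => f (AffineMap.lineMap x y t))
      (f' (AffineMap.lineMap x y t) * (y - x)) t := fun t ht =>
    (hf _ (hmem t ht)).comp t AffineMap.hasDerivAt_lineMap
  have hgronwall := norm_le_gronwallBound_of_norm_deriv_right_le (δ := ‖f x‖) (ε := 0)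
    (K := C * ‖y - x‖)
    (fun t ht => (hderiv t ht).continuousAt.continuousWithinAt)
    (fun t ht => (hderiv t (Ico_subset_Icc_self ht)).hasDerivWithinAt) (by simp)
    (fun t ht => by
      rw [norm_mul, add_zero, mul_right_comm]
      gcongr
      exact hC _ (hmem t (Ico_subset_Icc_self ht))) 1 (by simp)
  simpa [gronwallBound_ε0, mul_comm] using hgronwall

theorem norm_log_sub_log_le_ten {z w : ℂ} (hz : 1 / 4 ≤ ‖z‖) (hz' : ‖z‖ ≤ 1) (hw : 1 / 4 ≤ ‖w‖)
    (hw' : ‖w‖ ≤ 1) : ‖Complex.log w - Complex.log z‖ ≤ 10 := by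
  have hlog {x : ℂ} (hx : 1 / 4 ≤ ‖x‖) (hx' : ‖x‖ ≤ 1) :
      -3 ≤ Real.log ‖x‖ ∧ Real.log ‖x‖ ≤ 0 := by
    have hpos : 0 < ‖x‖ := by linarith
    have hinv : ‖x‖⁻¹ ≤ 4 := by rw [inv_le_comm₀ hpos (by norm_num)]; linarith
    exact ⟨by linarith [Real.one_sub_inv_le_log_of_pos hpos], Real.log_nonpos hpos.le hx'⟩
  have hre : |(Complex.log w - Complex.log z).re| ≤ 3 := by
    rw [Complex.sub_re, Complex.log_re, Complex.log_re, abs_le]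
    constructor <;> linarith [(hlog hz hz').1, (hlog hz hz').2, (hlog hw hw').1, (hlog hw hw').2]
  have him : |(Complex.log w - Complex.log z).im| ≤ 7 := by
    rw [Complex.sub_im, Complex.log_im, Complex.log_im, abs_le]
    constructor <;> linarith [Real.pi_lt_d2, (Complex.arg_mem_Ioc z).1, (Complex.arg_mem_Ioc z).2,
      (Complex.arg_mem_Ioc w).1, (Complex.arg_mem_Ioc w).2]
  linarith [Complex.norm_le_abs_re_add_abs_im (Complex.log w - Complex.log z)]

namespace NodallyBoundedOn

variable {N : ℕ} {F : ℂ → ℂ}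

-- In the variable `log z` the annulus becomes a strip, which is convex.
theorem norm_le_exp_mul (hF : NodallyBoundedOn F (ball 0 1) N) {a b τ : ℝ} (ha : 1 / 4 ≤ a)
    (hb : b ≤ 1) (hτ : 0 < τ) (hne : ∀ z : ℂ, a < ‖z‖ → ‖z‖ < b → F z ≠ 0) {z w : ℂ}
    (hz : ‖z‖ ∈ Icc (a + τ) (b - τ)) (hw : ‖w‖ ∈ Icc (a + τ) (b - τ)) :
    ‖F w‖ ≤ Real.exp (96 * (2 * Real.pi * (N + 1)) / τ * 10) * ‖F z‖ := by
  set C : ℝ := 96 * (2 * Real.pi * (N + 1))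
  let S : Set ℂ := Complex.re ⁻¹' Icc (Real.log (a + τ)) (Real.log (b - τ))
  have hexp {ζ : ℂ} (hζ : ζ ∈ S) : ‖Complex.exp ζ‖ ∈ Icc (a + τ) (b - τ) := by
    rw [Complex.norm_exp]
    exact ⟨(Real.log_le_iff_le_exp (by linarith)).1 hζ.1,
      (Real.le_log_iff_exp_le (by linarith [hz.1, hz.2])).1 hζ.2⟩
  have hlog {x : ℂ} (hx : ‖x‖ ∈ Icc (a + τ) (b - τ)) : Complex.log x ∈ S := by
    rw [mem_preimage, Complex.log_re]
    exact ⟨Real.log_le_log (by linarith) hx.1, Real.log_le_log (by linarith [hx.1]) hx.2⟩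
  have hexp_log {x : ℂ} (hx : ‖x‖ ∈ Icc (a + τ) (b - τ)) : Complex.exp (Complex.log x) = x :=
    Complex.exp_log (norm_pos_iff.1 (by linarith [hx.1]))
  have hderiv : ∀ ζ ∈ S, HasDerivAt (fun ζ => F (Complex.exp ζ))
      (deriv F (Complex.exp ζ) * Complex.exp ζ) ζ := fun ζ hζ =>
    (hF.differentiableOn.differentiableAt (isOpen_ball.mem_nhds
      (mem_ball_zero_iff.2 (by linarith [(hexp hζ).2])))).hasDerivAt.comp ζ
      (Complex.hasDerivAt_exp ζ)
  have hbound : ∀ ζ ∈ S,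
      ‖deriv F (Complex.exp ζ) * Complex.exp ζ‖ ≤ C / τ * ‖F (Complex.exp ζ)‖ := by
    intro ζ hζ
    have hnear : ∀ x ∈ ball (Complex.exp ζ) τ, a < ‖x‖ ∧ ‖x‖ < b := fun x hx => by
      have := abs_lt.1 ((abs_norm_sub_norm_le x (Complex.exp ζ)).trans_lt (mem_ball_iff_norm.1 hx))
      constructor <;> linarith [(hexp hζ).1, (hexp hζ).2]
    have hd := hF.mul_norm_deriv_le hτ
      (fun x hx => mem_ball_zero_iff.2 ((hnear x hx).2.trans_le hb))
      fun x hx => hne x (hnear x hx).1 (hnear x hx).2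
    rw [norm_mul, div_mul_eq_mul_div, le_div_iff₀' hτ]
    refine le_trans ?_ hd
    gcongr
    exact mul_le_of_le_one_right (norm_nonneg _) (by linarith [(hexp hζ).2])
  have hharnack := norm_le_exp_mul_of_norm_deriv_le
    ((convex_Icc _ _).is_linear_preimage Complex.reLm.isLinear) hderiv hbound (hlog hz) (hlog hw)
  rw [hexp_log hz, hexp_log hw] at hharnack
  refine hharnack.trans ?_
  gcongr
  exact norm_log_sub_log_le_ten (by linarith [hz.1]) (by linarith [hz.2]) (by linarith [hw.1])
    (by linarith [hw.2])

theorem exists_annulus_ne_zero {R : ℝ} (hF : NodallyBoundedOn F (ball 0 R) N) {r : ℕ → ℝ}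
    (hr : Monotone r) (hrR : r (N + 1) ≤ R) :
    ∃ i : Fin (N + 1), ∀ z : ℂ, r i < ‖z‖ → ‖z‖ < r (i + 1) → F z ≠ 0 := by
  by_contra! h
  choose z hlt hgt hz using h
  have hmono : StrictMono fun i => ‖z i‖ := fun i j hij =>
    (hgt i).trans_le ((hr (Nat.succ_le_of_lt hij)).trans (hlt j).le)
  have hinj : Function.Injective z := hmono.injective.of_comp (f := norm)
  have hcard := hF.card_le_of_eq_zero (Finset.univ.map ⟨z, hinj⟩) fun x hx => by
    obtain ⟨i, -, rfl⟩ := Finset.mem_map.1 hx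
    exact ⟨mem_ball_zero_iff.2 ((hgt i).trans_le ((hr (Nat.succ_le_of_lt i.2)).trans hrR)), hz i⟩
  simp at hcard

theorem exists_normalization (N : ℕ) : ∃ (K τ : ℝ) (ρ : Fin (N + 1) → ℝ), 0 < τ ∧
    (∀ i, 1 / 4 < ρ i ∧ ρ i + τ ≤ 1) ∧ ∀ F, NodallyBoundedOn F (ball 0 1) N → ∃ i, ∃ l : ℝ, 0 < l ∧
      ‖l * F (ρ i)‖ = 1 ∧ ∀ z ∈ ball (0 : ℂ) (ρ i + τ), ‖l * F z‖ ≤ K := by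
  set τ : ℝ := 1 / (12 * (N + 1)) with hτ
  have hτ0 : 0 < τ := by positivity
  have hNτ : 12 * (N + 1) * τ = 1 := by rw [hτ]; field_simp
  let r (i : ℕ) : ℝ := 1 / 4 + 3 * τ * i
  have hr : Monotone r := fun i j hij => by simp only [r]; gcongr
  have hr1 : r (N + 1) ≤ 1 := by simp only [r]; push_cast; linarith
  have hr4 (i : Fin (N + 1)) : 1 / 4 ≤ r i := le_add_of_nonneg_right (by positivity)
  have hsucc (i : ℕ) : r (i + 1) = r i + 3 * τ := by simp only [r]; push_cast; ring
  have hri (i : Fin (N + 1)) : r (i + 1) ≤ 1 := (hr (Nat.succ_le_of_lt i.2)).trans hr1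
  refine ⟨Real.exp (96 * (2 * Real.pi * (N + 1)) / τ * 10), τ, fun i => r i + τ, hτ0,
    fun i => ⟨by linarith [hr4 i], by linarith [hri i, hsucc i]⟩, fun F hF => ?_⟩
  obtain ⟨i, hi⟩ := hF.exists_annulus_ne_zero hr hr1
  set K := Real.exp (96 * (2 * Real.pi * (N + 1)) / τ * 10)
  have hnorm : ‖((r i + τ : ℝ) : ℂ)‖ = r i + τ :=
    (Complex.norm_real _).trans (Real.norm_of_nonneg (by linarith [hr4 i]))
  have hpos : 0 < ‖F (r i + τ : ℝ)‖ := norm_pos_iff.2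
    (hi _ (by linarith) (by linarith [hsucc i]))
  have hscale (z : ℂ) : ‖((‖F (r i + τ : ℝ)‖⁻¹ : ℝ) : ℂ) * F z‖ = ‖F z‖ / ‖F (r i + τ : ℝ)‖ := by
    rw [norm_mul, Complex.norm_real, norm_inv, norm_norm, inv_mul_eq_div]
  refine ⟨i, ‖F (r i + τ : ℝ)‖⁻¹, inv_pos.2 hpos, by rw [hscale, div_self hpos.ne'], fun z hz => ?_⟩
  rw [hscale, div_le_iff₀ hpos]
  refine Complex.norm_le_of_forall_mem_frontier_norm_le isBounded_ball
    (hF.differentiableOn.mono ((closure_ball_subset_closedBall).trans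
      (closedBall_subset_ball (by linarith [hri i, hsucc i])))).diffContOnCl (fun w hw => ?_)
    (subset_closure hz)
  rw [frontier_ball _ (by linarith [hr4 i]), mem_sphere_zero_iff_norm] at hw
  exact hF.norm_le_exp_mul (hr4 i) (hri i) hτ0 hi ⟨hnorm.ge, by linarith [hsucc i]⟩
    ⟨by linarith, by linarith [hsucc i]⟩

end NodallyBoundedOn

/-! ### Montel's theorem on a disc -/

theorem norm_inv_factorial_mul_iteratedDeriv_le {f : ℂ → ℂ} {c : ℂ} {R M : ℝ} (hR : 0 < R)
    (hf : DifferentiableOn ℂ f (ball c R)) (hM : ∀ z ∈ ball c R, ‖f z‖ ≤ M) (n : ℕ) :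
    ‖(n.factorial : ℂ)⁻¹ * iteratedDeriv n f c‖ ≤ M / R ^ n := by
  have hlim : Tendsto (fun r => M / r ^ n) (𝓝[<] R) (𝓝 (M / R ^ n)) :=
    (tendsto_const_nhds.div (tendsto_id.pow n) (by positivity)).mono_left nhdsWithin_le_nhds
  refine ge_of_tendsto hlim ?_
  filter_upwards [Ioo_mem_nhdsLT hR] with r hr
  have hsub : closedBall c r ⊆ ball c R := closedBall_subset_ball hr.2
  have hcauchy := Complex.norm_iteratedDeriv_le_of_forall_mem_sphere_norm_le n hr.1
    ((hf.mono hsub).mono closure_ball_subset_closedBall).diffContOnCl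
    fun z hz => hM z (hsub (sphere_subset_closedBall hz))
  rw [norm_mul, norm_inv, Complex.norm_natCast, inv_mul_le_iff₀ (mod_cast n.factorial_pos)]
  exact hcauchy.trans_eq (by ring)

theorem tendstoLocallyUniformlyOn_tsum_mul_pow {ι : Type*} {l : Filter ι} [l.NeBot]
    {a : ι → ℕ → ℂ} {b : ℕ → ℂ} {c : ℂ} {R M : ℝ} (hR : 0 < R)
    (ha : ∀ k n, ‖a k n‖ ≤ M / R ^ n) (hab : ∀ n, Tendsto (a · n) l (𝓝 (b n))) :
    TendstoLocallyUniformlyOn (fun k z => ∑' n, a k n * (z - c) ^ n)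
      (fun z => ∑' n, b n * (z - c) ^ n) l (ball c R) := by
  have hb (n : ℕ) : ‖b n‖ ≤ M / R ^ n := le_of_tendsto (hab n).norm (.of_forall (ha · n))
  have hgeom {r : ℝ} (hr₀ : 0 ≤ r) (hr : r < R) : Summable fun n => M / R ^ n * r ^ n := by
    simpa only [div_pow, div_mul_eq_mul_div, mul_div_assoc'] using
      (summable_geometric_of_lt_one (by positivity) ((div_lt_one hR).2 hr)).mul_left M
  refine tendstoLocallyUniformlyOn_of_forall_exists_nhds fun x hx => ?_
  obtain ⟨r, hxr, hr⟩ := exists_between (mem_ball.1 hx)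
  have hr₀ : 0 ≤ r := dist_nonneg.trans hxr.le
  refine ⟨ball c r, mem_nhdsWithin_of_mem_nhds (isOpen_ball.mem_nhds hxr), ?_⟩
  have hsummable {d : ℕ → ℂ} (hd : ∀ n, ‖d n‖ ≤ M / R ^ n) {z : ℂ} (hz : ‖z - c‖ ≤ r) :
      Summable fun n => d n * (z - c) ^ n := .of_norm_bounded (hgeom hr₀ hr) fun n => by
    rw [norm_mul, norm_pow]
    gcongr
    exacts [(norm_nonneg _).trans (hd n), hd n]
  have hdom : Summable fun n => 2 * (M / R ^ n * r ^ n) := (hgeom hr₀ hr).mul_left 2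
  have hle (k : ι) (n : ℕ) : ‖a k n - b n‖ * r ^ n ≤ 2 * (M / R ^ n * r ^ n) := by
    rw [← mul_assoc]
    gcongr
    linarith [norm_sub_le (a k n) (b n), ha k n, hb n]
  have hlim : Tendsto (fun k => ∑' n, ‖a k n - b n‖ * r ^ n) l (𝓝 0) := by
    simpa using tendsto_tsum_of_dominated_convergence
      (f := fun k n => ‖a k n - b n‖ * r ^ n) (g := fun _ => 0) hdom
      (fun n => by simpa using (((hab n).sub_const (b n)).norm).mul_const (r ^ n))
      (.of_forall fun k n => by simpa [abs_of_nonneg hr₀] using hle k n)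
  refine Metric.tendstoUniformlyOn_iff.2 fun ε hε => ?_
  filter_upwards [hlim.eventually_lt_const hε] with k hk z hz
  have hzr : ‖z - c‖ ≤ r := (mem_ball_iff_norm.1 hz).le
  rw [dist_comm, dist_eq_norm, ← (hsummable (ha k) hzr).tsum_sub (hsummable hb hzr)]
  refine (tsum_of_norm_bounded (Summable.of_nonneg_of_le (fun n => by positivity) (hle k)
    hdom).hasSum fun n => ?_).trans_lt hk
  rw [← sub_mul, norm_mul, norm_pow]
  gcongr

/-- Montel's theorem for a bounded sequence on a disc. -/
theorem exists_subseq_tendstoLocallyUniformlyOn_ball {f : ℕ → ℂ → ℂ} {c : ℂ} {R M : ℝ} (hR : 0 < R)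
    (hf : ∀ k, DifferentiableOn ℂ (f k) (ball c R)) (hM : ∀ k, ∀ z ∈ ball c R, ‖f k z‖ ≤ M) :
    ∃ (φ : ℕ → ℕ) (g : ℂ → ℂ), StrictMono φ ∧
      TendstoLocallyUniformlyOn (fun k => f (φ k)) g atTop (ball c R) := by
  let a (k n : ℕ) : ℂ := (n.factorial : ℂ)⁻¹ * iteratedDeriv n (f k) c
  have ha (k n : ℕ) : ‖a k n‖ ≤ M / R ^ n :=
    norm_inv_factorial_mul_iteratedDeriv_le hR (hf k) (hM k) n
  obtain ⟨b, -, φ, hφ, hlim⟩ := (isCompact_univ_pi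
    fun n => isCompact_closedBall (0 : ℂ) (M / R ^ n)).tendsto_subseq
    fun k n _ => mem_closedBall_zero_iff.2 (ha k n)
  refine ⟨φ, fun z => ∑' n, b n * (z - c) ^ n, hφ, ?_⟩
  refine (tendstoLocallyUniformlyOn_tsum_mul_pow hR (fun k => ha (φ k))
    (tendsto_pi_nhds.1 hlim)).congr fun k z hz => ?_
  rw [← (Complex.hasSum_taylorSeries_on_ball (hf (φ k)) hz).tsum_eq]
  exact tsum_congr fun n => by simp only [a, smul_eq_mul]; ring

/-! ### Divisibility near a power of `z` -/

theorem exists_pow_eq_of_norm_sub_pow_le {g : ℂ → ℂ} {U : Set ℂ} {m : ℕ} {δ : ℝ} (hm : m ≠ 0)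
    (hU₀ : (0 : ℂ) ∉ U) (hg : DifferentiableOn ℂ g U) (hδ : δ ≤ 1 / 3)
    (hle : ∀ z ∈ U, ‖g z - z ^ m‖ ≤ δ * ‖z ^ m‖) :
    ∃ H : ℂ → ℂ, DifferentiableOn ℂ H U ∧ ∀ z ∈ U, H z ^ m = g z ∧ ‖H z - z‖ ≤ 3 * δ * ‖z‖ := by
  let w (z : ℂ) : ℂ := (g z - z ^ m) / z ^ m
  have hne : ∀ z ∈ U, z ^ m ≠ 0 := fun z hz => pow_ne_zero m (ne_of_mem_of_not_mem hz hU₀)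
  have hw : ∀ z ∈ U, ‖w z‖ ≤ δ := fun z hz => by
    rw [norm_div, div_le_iff₀ (norm_pos_iff.2 (hne z hz))]
    exact hle z hz
  have hw1 : ∀ z ∈ U, 1 + w z ∈ Complex.slitPlane := fun z hz =>
    Complex.mem_slitPlane_of_norm_lt_one ((hw z hz).trans_lt (by linarith))
  have hlog : ∀ z ∈ U, ‖Complex.log (1 + w z) / m‖ ≤ 3 / 2 * δ := fun z hz => by
    rw [norm_div, Complex.norm_natCast]
    refine (div_le_self (norm_nonneg _) (mod_cast Nat.one_le_iff_ne_zero.2 hm)).trans ?_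
    linarith [Complex.norm_log_one_add_half_le_self ((hw z hz).trans (by linarith)), hw z hz]
  refine ⟨fun z => z * Complex.exp (Complex.log (1 + w z) / m), ?_, fun z hz => ⟨?_, ?_⟩⟩
  · have hdw : DifferentiableOn ℂ w U := (hg.sub (by fun_prop)).div (by fun_prop) hne
    exact differentiableOn_id.mul (((hdw.const_add 1).clog hw1).div_const _).cexp
  · rw [mul_pow, ← Complex.exp_nat_mul, mul_div_cancel₀ _ (Nat.cast_ne_zero.2 hm),
      Complex.exp_log (Complex.slitPlane_ne_zero (hw1 z hz)), mul_add, mul_one,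
      mul_div_cancel₀ _ (hne z hz), add_sub_cancel]
  · have hexp := Complex.norm_exp_sub_one_le ((hlog z hz).trans (by linarith))
    rw [← mul_sub_one, norm_mul, mul_comm]
    gcongr
    linarith [hlog z hz]

section NearIdentity

variable {H : ℂ → ℂ} {U : Set ℂ} {ε : ℝ}

theorem mapsTo_ball_sub_id (hHε : ∀ z ∈ U, ‖H z - z‖ ≤ ε) {a : ℂ} {r : ℝ} (hr : 0 < r)
    (ha : ball a r ⊆ U) :
    MapsTo (fun z => H z - z) (ball a r) (closedBall (H a - a) (2 * ε)) := fun z hz => by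
  rw [mem_closedBall, dist_eq_norm]
  linarith [norm_sub_le (H z - z) (H a - a), hHε z (ha hz), hHε a (ha (mem_ball_self hr))]

theorem norm_sub_le_two_mul_of_norm_sub_id_le (hε : 0 < ε) (hH : DifferentiableOn ℂ H U)
    (hHε : ∀ z ∈ U, ‖H z - z‖ ≤ ε) {a b : ℂ} (ha : ball a (6 * ε) ⊆ U) (hb : b ∈ U) :
    ‖b - a‖ ≤ 2 * ‖H b - H a‖ := by
  have haU : a ∈ U := ha (mem_ball_self (by positivity))
  have hcontract : ‖(H b - b) - (H a - a)‖ ≤ 1 / 3 * ‖b - a‖ := by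
    rcases lt_or_ge (dist b a) (6 * ε) with hlt | hge
    · have := Complex.dist_le_div_mul_dist_of_mapsTo_ball
        ((hH.mono ha).sub differentiableOn_id) (mapsTo_ball_sub_id hHε (by positivity) ha)
        (mem_ball.2 hlt)
      rwa [mul_div_mul_right _ _ hε.ne', dist_eq_norm, dist_eq_norm,
        show (2 / 6 : ℝ) = 1 / 3 by norm_num] at this
    · rw [dist_eq_norm] at hge
      linarith [norm_sub_le (H b - b) (H a - a), hHε a haU, hHε b hb]
  have htri := norm_sub_norm_le (b - a) (-((H b - b) - (H a - a)))
  rw [norm_neg, show b - a - -((H b - b) - (H a - a)) = H b - H a by ring] at htri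
  linarith [norm_nonneg (b - a)]

theorem deriv_ne_zero_of_norm_sub_id_le (hε : 0 < ε) (hH : DifferentiableOn ℂ H U)
    (hHε : ∀ z ∈ U, ‖H z - z‖ ≤ ε) {a : ℂ} (ha : ball a (6 * ε) ⊆ U) : deriv H a ≠ 0 := by
  intro h0
  have hd : HasDerivAt (H - id) (0 - 1) a := h0 ▸ ((hH.mono ha).differentiableAt
    (ball_mem_nhds a (by positivity))).hasDerivAt.sub (hasDerivAt_id a)
  have hle := Complex.norm_deriv_le_div_of_mapsTo_ball ((hH.mono ha).sub differentiableOn_id)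
    (mapsTo_ball_sub_id hHε (by positivity) ha) (by positivity)
  rw [hd.deriv, zero_sub, norm_neg, norm_one, mul_div_mul_right _ _ hε.ne'] at hle
  norm_num at hle

theorem exists_rightInvOn_of_norm_sub_id_le (hε : 0 < ε) (hU : IsOpen U)
    (hH : DifferentiableOn ℂ H U) (hHε : ∀ z ∈ U, ‖H z - z‖ ≤ ε) {W : Set ℂ} (hW : IsOpen W)
    (hWU : ∀ τ ∈ W, ball τ (12 * ε) ⊆ U) :
    ∃ K : ℂ → ℂ, DifferentiableOn ℂ K W ∧ (∀ τ ∈ W, ‖K τ - τ‖ ≤ 5 * ε) ∧ RightInvOn K H W := by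
  have hpre : ∀ τ ∈ W, ∃ z ∈ closedBall τ (5 * ε), H z = τ := fun τ hτ => by
    have hsub : closedBall τ (5 * ε) ⊆ U :=
      (closedBall_subset_ball (by linarith)).trans (hWU τ hτ)
    refine ball_subset_image_closedBall_of_le_norm_sub (half_pos one_pos) (by positivity)
      (hH.mono (closure_ball_subset_closedBall.trans hsub)).diffContOnCl (fun z hz => ?_) ?_
    · have := norm_sub_le_two_mul_of_norm_sub_id_le hε hH hHε
        ((ball_subset_ball (by linarith)).trans (hWU τ hτ)) (hsub hz)
      linarith
    · rw [mem_ball_iff_norm']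
      linarith [hHε τ (hWU τ hτ (mem_ball_self (by positivity)))]
  choose! K hK hHK using hpre
  have hKU : ∀ τ ∈ W, ball (K τ) (6 * ε) ⊆ U := fun τ hτ =>
    (ball_subset_ball' (by linarith [mem_closedBall.1 (hK τ hτ)])).trans (hWU τ hτ)
  have hlip : LipschitzOnWith 2 K W := .of_dist_le_mul fun σ hσ τ hτ => by
    have := norm_sub_le_two_mul_of_norm_sub_id_le hε hH hHε (hKU τ hτ)
      (hKU σ hσ (mem_ball_self (by positivity)))
    rwa [hHK τ hτ, hHK σ hσ, ← dist_eq_norm, ← dist_eq_norm] at this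
  refine ⟨K, fun τ hτ => ?_, fun τ hτ => mem_closedBall_iff_norm.1 (hK τ hτ), hHK⟩
  have hcont : ContinuousAt K τ := hlip.continuousOn.continuousAt (hW.mem_nhds hτ)
  have hd := hH.differentiableAt (hU.mem_nhds (hKU τ hτ (mem_ball_self (by positivity))))
  exact (hd.hasDerivAt.of_local_left_inverse hcont
    (deriv_ne_zero_of_norm_sub_id_le hε hH hHε (hKU τ hτ))
    (eventually_of_mem (hW.mem_nhds hτ) hHK)).differentiableAt.differentiableWithinAt

end NearIdentity

/-- The open annulus `a < ‖z‖ < b` centred at the origin. -/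
def annulus (a b : ℝ) : Set ℂ := {z | a < ‖z‖ ∧ ‖z‖ < b}

theorem isOpen_annulus (a b : ℝ) : IsOpen (annulus a b) :=
  (isOpen_lt continuous_const continuous_norm).inter (isOpen_lt continuous_norm continuous_const)

theorem isPreconnected_annulus {a : ℝ} (ha : 0 ≤ a) (b : ℝ) : IsPreconnected (annulus a b) := by
  have himage : annulus a b = (fun p : ℝ × ℝ => (p.1 : ℂ) * Complex.exp (p.2 * Complex.I)) ''
      (Ioo a b ×ˢ univ) := by
    ext z
    constructor
    · exact fun hz => ⟨(‖z‖, z.arg), ⟨hz, mem_univ _⟩, Complex.norm_mul_exp_arg_mul_I z⟩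
    · rintro ⟨⟨t, θ⟩, ⟨ht, -⟩, rfl⟩
      simpa [annulus, Complex.norm_exp_ofReal_mul_I, abs_of_nonneg (ha.trans ht.1.le)] using ht
  rw [himage]
  exact (isPreconnected_Ioo.prod isPreconnected_univ).image _ (by fun_prop)

theorem add_conj_comp_mul_conj_eq_zero {S : ℂ → ℂ} {U : Set ℂ} {α z₀ : ℂ} (hU : IsOpen U)
    (hUc : IsPreconnected U) (hS : DifferentiableOn ℂ S U)
    (hmaps : ∀ z ∈ U, α * starRingEnd ℂ z ∈ U) (hz₀ : z₀ ∈ U)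
    (hfreq : ∃ᶠ z in 𝓝[≠] z₀, α * starRingEnd ℂ z = z ∧ (S z).re = 0) {z : ℂ} (hz : z ∈ U) :
    S z + starRingEnd ℂ (S (α * starRingEnd ℂ z)) = 0 := by
  have hd : DifferentiableOn ℂ (fun z => S z + starRingEnd ℂ (S (α * starRingEnd ℂ z))) U := by
    intro z hz
    have hcomp : DifferentiableAt ℂ (fun w => S (α * w)) (starRingEnd ℂ z) :=
      DifferentiableAt.comp (starRingEnd ℂ z) (hS.differentiableAt (hU.mem_nhds (hmaps z hz)))
        (by fun_prop)
    have hconj := hcomp.conj_conj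
    rw [Complex.conj_conj] at hconj
    exact ((hS.differentiableAt (hU.mem_nhds hz)).add hconj).differentiableWithinAt
  refine (hd.analyticOnNhd hU).eqOn_zero_of_preconnected_of_frequently_eq_zero hUc hz₀
    (hfreq.mono fun z ⟨hfix, hre⟩ => ?_) hz
  rw [hfix, Complex.add_conj, hre, mul_zero, Complex.ofReal_zero]

theorem exists_forall_mul_conj_eq_of_pow_eq_neg_one {α : ℂ} {m : ℕ} (hα : α ^ m = -1) :
    ∃ β : ℂ, ‖β‖ = 1 ∧ (β ^ m).re = 0 ∧ ∀ t : ℝ, α * starRingEnd ℂ (t * β) = t * β := by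
  have hm : m ≠ 0 := by
    rintro rfl
    norm_num at hα
  obtain ⟨β, hβα⟩ := IsAlgClosed.exists_pow_nat_eq α two_pos
  have hβ : ‖β‖ = 1 := by
    rw [← pow_eq_one_iff_of_nonneg (norm_nonneg β) (mul_ne_zero two_ne_zero hm), ← norm_pow,
      pow_mul, hβα, hα, norm_neg, norm_one]
  have hββ : β * starRingEnd ℂ β = 1 := by
    rw [Complex.mul_conj, Complex.normSq_eq_norm_sq, hβ, one_pow, Complex.ofReal_one]
  refine ⟨β, hβ, ?_, fun t => ?_⟩
  · have hsq : (β ^ m - Complex.I) * (β ^ m + Complex.I) = 0 := by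
      linear_combination congrArg (· ^ m) hβα + hα - Complex.I_mul_I
    rcases mul_eq_zero.1 hsq with h | h
    · rw [sub_eq_zero.1 h, Complex.I_re]
    · rw [eq_neg_of_add_eq_zero_left h, Complex.neg_re, Complex.I_re, neg_zero]
  · rw [← hβα, map_mul, Complex.conj_ofReal]
    linear_combination t * β * hββ

-- If `ω = α * conj ζ` then `α ^ m = -1`, so the reflection `z ↦ α * conj z` fixes a line on which
-- `re (z ^ m) = 0`.
theorem add_conj_eq_zero_of_pow_add_conj_pow_eq_zero {S : ℂ → ℂ} {r R : ℝ} {m : ℕ} (hr : 0 ≤ r)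
    (hS : DifferentiableOn ℂ S (annulus r R))
    (hre : ∀ ζ ∈ annulus r R, (ζ ^ m).re = 0 → (S ζ).re = 0) {ζ ω : ℂ} (hζ : ζ ∈ annulus r R)
    (h : ζ ^ m + starRingEnd ℂ (ω ^ m) = 0) :
    S ζ + starRingEnd ℂ (S ω) = 0 := by
  have hm : m ≠ 0 := by
    rintro rfl
    norm_num at h
  have hζ₀ : starRingEnd ℂ ζ ≠ 0 := by simpa using norm_pos_iff.1 (hr.trans_lt hζ.1)
  set α := ω / starRingEnd ℂ ζ
  have hαm : α ^ m = -1 := by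
    rw [div_pow, div_eq_iff (pow_ne_zero m hζ₀), ← map_pow, neg_one_mul, ← map_neg,
      eq_neg_of_add_eq_zero_left h, neg_neg, Complex.conj_conj]
  have hα : ‖α‖ = 1 := by
    rw [← pow_eq_one_iff_of_nonneg (norm_nonneg α) hm, ← norm_pow, hαm, norm_neg, norm_one]
  obtain ⟨β, hβ, hβm, hfix⟩ := exists_forall_mul_conj_eq_of_pow_eq_neg_one hαm
  have htends : Tendsto (fun t : ℝ => (t * β : ℂ)) (𝓝[≠] ‖ζ‖) (𝓝[≠] (‖ζ‖ * β)) :=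
    ContinuousWithinAt.tendsto_nhdsWithin (by fun_prop) fun t ht h =>
      ht (Complex.ofReal_injective (mul_right_cancel₀ (norm_pos_iff.1 (hβ ▸ one_pos)) h))
  have hfreq : ∃ᶠ z in 𝓝[≠] (‖ζ‖ * β : ℂ), α * starRingEnd ℂ z = z ∧ (S z).re = 0 := by
    refine htends.frequently (Eventually.frequently ?_)
    filter_upwards [nhdsWithin_le_nhds (isOpen_Ioo.mem_nhds hζ)] with t ht
    refine ⟨hfix t, hre _ ?_ ?_⟩
    · simpa [annulus, hβ, abs_of_nonneg (hr.trans ht.1.le)] using ht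
    · rw [mul_pow, ← Complex.ofReal_pow, Complex.re_ofReal_mul, hβm, mul_zero]
  have := add_conj_comp_mul_conj_eq_zero (isOpen_annulus r R) (isPreconnected_annulus hr R) hS
    (fun z hz => by simpa [annulus, hα] using hz) (by simpa [annulus, hβ] using hζ) hfreq hζ
  rwa [div_mul_cancel₀ _ hζ₀] at this

theorem differentiableOn_intervalIntegral_div_sub {f γ : ℝ → ℂ} (hf : Continuous f)
    (hγ : Continuous γ) (a b : ℝ) {ρ : ℝ} (hρ : ∀ θ, ρ ≤ ‖γ θ‖) :
    DifferentiableOn ℂ (fun ξ => ∫ θ in a..b, f θ / (γ θ - ξ)) (ball 0 ρ) := by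
  intro ξ hξ
  obtain ⟨ρ', hξρ, hρ'⟩ := exists_between (mem_ball_zero_iff.1 hξ)
  have hge : ∀ x ∈ ball (0 : ℂ) ρ', ∀ θ, ρ - ρ' ≤ ‖γ θ - x‖ := fun x hx θ => by
    linarith [norm_sub_norm_le (γ θ) x, hρ θ, mem_ball_zero_iff.1 hx]
  have hne : ∀ x ∈ ball (0 : ℂ) ρ', ∀ θ, γ θ - x ≠ 0 := fun x hx θ =>
    norm_pos_iff.1 ((sub_pos.2 hρ').trans_le (hge x hx θ))
  have hcont : ∀ x ∈ ball (0 : ℂ) ρ', Continuous fun θ => f θ / (γ θ - x) := fun x hx =>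
    hf.div (by fun_prop) (hne x hx)
  have hmem : ball (0 : ℂ) ρ' ∈ 𝓝 ξ := isOpen_ball.mem_nhds (mem_ball_zero_iff.2 hξρ)
  have hderiv := intervalIntegral.hasDerivAt_integral_of_dominated_loc_of_deriv_le
    (F := fun x θ => f θ / (γ θ - x)) (F' := fun x θ => f θ / (γ θ - x) ^ 2)
    (bound := fun θ => ‖f θ‖ / (ρ - ρ') ^ 2) (μ := MeasureTheory.volume) (a := a) (b := b) hmem
    (eventually_of_mem hmem fun x hx => (hcont x hx).aestronglyMeasurable)
    ((hcont ξ (mem_of_mem_nhds hmem)).intervalIntegrable a b)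
    (hf.div (by fun_prop) fun θ =>
      pow_ne_zero 2 (hne ξ (mem_of_mem_nhds hmem) θ)).aestronglyMeasurable
    (Eventually.of_forall fun θ _ x hx => by
      have := sub_pos.2 hρ'
      rw [norm_div, norm_pow]
      gcongr
      exact hge x hx θ)
    ((hf.norm.div_const _).intervalIntegrable a b)
    (Eventually.of_forall fun θ _ x hx => by
      simpa using ((hasDerivAt_const x (f θ)).fun_div
        ((hasDerivAt_id x).const_sub (γ θ)) (hne x hx θ)))
  exact hderiv.2.differentiableAt.differentiableWithinAt

theorem differentiableOn_circleIntegral_div_sub {f γ : ℂ → ℂ} {c : ℂ} {R ρ : ℝ} (hR : 0 ≤ R)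
    (hf : ContinuousOn f (sphere c R)) (hγ : ContinuousOn γ (sphere c R))
    (hρ : ∀ z ∈ sphere c R, ρ ≤ ‖γ z‖) :
    DifferentiableOn ℂ (fun ξ => ∮ z in C(c, R), f z / (γ z - ξ)) (ball 0 ρ) := by
  have hmem : ∀ θ, circleMap c R θ ∈ sphere c R := circleMap_mem_sphere c hR
  have hf' : Continuous fun θ => deriv (circleMap c R) θ * f (circleMap c R θ) := by
    simp only [deriv_circleMap]
    exact (by fun_prop : Continuous fun θ => circleMap 0 R θ * Complex.I).mul
      (hf.comp_continuous (continuous_circleMap c R) hmem)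
  simpa only [circleIntegral, smul_eq_mul, mul_div_assoc, Function.comp_apply] using
    differentiableOn_intervalIntegral_div_sub hf'
      (hγ.comp_continuous (continuous_circleMap c R) hmem) 0 (2 * Real.pi) fun θ => hρ _ (hmem θ)

theorem differentiableOn_cauchyIntegral {f : ℂ → ℂ} {c : ℂ} {R : ℝ} (hR : 0 < R)
    (hf : ContinuousOn f (sphere c R)) :
    DifferentiableOn ℂ (fun w => ∮ z in C(c, R), (z - w)⁻¹ * f z) (ball c R) := by
  lift R to NNReal using hR.le
  have := (hasFPowerSeriesOn_cauchy_integral (hf.circleIntegrable R.coe_nonneg) hR).differentiableOn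
  rw [Metric.eball_coe] at this
  refine (this.const_mul (2 * Real.pi * Complex.I)).congr fun w _ => ?_
  rw [smul_eq_mul, mul_inv_cancel_left₀ Complex.two_pi_I_ne_zero]
  simp only [smul_eq_mul]

theorem continuousOn_inv_sub_sphere {c z : ℂ} {R : ℝ} (hz : z ∈ ball c R) :
    ContinuousOn (fun ζ => (ζ - z)⁻¹) (sphere c R) :=
  (by fun_prop : ContinuousOn (fun ζ => ζ - z) (sphere c R)).inv₀ fun _ hζ h =>
    (mem_ball.1 hz).ne (sub_eq_zero.1 h ▸ hζ)

theorem circleIntegral_div_sub_sub_mul_eq {f g Q : ℂ → ℂ} {c p q z : ℂ} {R : ℝ}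
    (hf : ContinuousOn f (sphere c R)) (hg : ContinuousOn g (sphere c R))
    (hQ : DiffContOnCl ℂ Q (ball c R)) (hq : ∀ ζ ∈ sphere c R, g ζ - q ≠ 0)
    (h : ∀ ζ ∈ sphere c R, f ζ - p = Q ζ * (g ζ - q)) (hz : z ∈ ball c R) :
    (∮ ζ in C(c, R), (ζ - z)⁻¹ * f ζ / (g ζ - q)) - p * (∮ ζ in C(c, R), (ζ - z)⁻¹ / (g ζ - q)) =
      2 * Real.pi * Complex.I * Q z := by
  have hR : 0 ≤ R := (pos_of_mem_ball hz).le
  have hinv := continuousOn_inv_sub_sphere hz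
  have hgq : ContinuousOn (fun ζ => g ζ - q) (sphere c R) := hg.sub continuousOn_const
  have hint₁ : CircleIntegrable (fun ζ => (ζ - z)⁻¹ * f ζ / (g ζ - q)) c R :=
    ((hinv.mul hf).div hgq hq).circleIntegrable hR
  have hint₂ : CircleIntegrable (fun ζ => p * ((ζ - z)⁻¹ / (g ζ - q))) c R :=
    (continuousOn_const.mul (hinv.div hgq hq)).circleIntegrable hR
  rw [← circleIntegral.integral_const_mul, ← circleIntegral.integral_sub hint₁ hint₂,
    ← smul_eq_mul, ← hQ.circleIntegral_sub_inv_smul hz]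
  refine circleIntegral.integral_congr hR fun ζ hζ => ?_
  rw [smul_eq_mul, ← mul_div_assoc, ← sub_div, div_eq_iff (hq ζ hζ)]
  linear_combination (ζ - z)⁻¹ * h ζ hζ

theorem exists_sub_eq_mul_sub_of_eventually {f g p q : ℂ → ℂ} {c b₀ : ℂ} {R M : ℝ} {V : Set ℂ}
    (hR : 0 < R) (hf : ContinuousOn f (sphere c R)) (hg : ContinuousOn g (sphere c R))
    (hV : IsOpen V) (hVc : IsPreconnected V) (hp : DifferentiableOn ℂ p V)
    (hq : DifferentiableOn ℂ q V) (hgM : ∀ z ∈ sphere c R, M ≤ ‖g z‖) (hqM : ∀ b ∈ V, ‖q b‖ < M)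
    (hb₀ : b₀ ∈ V)
    (h : ∀ᶠ b in 𝓝 b₀, ∃ Q : ℂ → ℂ, DiffContOnCl ℂ Q (ball c R) ∧
      ∀ z ∈ closedBall c R, f z - p b = Q z * (g z - q b)) {b : ℂ} (hb : b ∈ V) :
    ∃ Q : ℂ → ℂ, DifferentiableOn ℂ Q (ball c R) ∧
      ∀ z ∈ ball c R, f z - p b = Q z * (g z - q b) := by
  have hne : ∀ b ∈ V, ∀ z ∈ sphere c R, g z - q b ≠ 0 := fun b hb z hz h => by
    linarith [hgM z hz, hqM b hb, congrArg norm (sub_eq_zero.1 h)]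
  let P (b z : ℂ) : ℂ := (2 * Real.pi * Complex.I)⁻¹ *
    ((∮ ζ in C(c, R), (ζ - z)⁻¹ * f ζ / (g ζ - q b)) -
      p b * ∮ ζ in C(c, R), (ζ - z)⁻¹ / (g ζ - q b))
  have hPz : DifferentiableOn ℂ (P b) (ball c R) := by
    have hgq : ContinuousOn (fun ζ => g ζ - q b) (sphere c R) := hg.sub continuousOn_const
    have hf' := differentiableOn_cauchyIntegral hR (hf.div hgq (hne b hb))
    have h1 := differentiableOn_cauchyIntegral hR (hgq.inv₀ (hne b hb))
    simpa [P, mul_div_assoc, div_eq_mul_inv, mul_assoc] using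
      (hf'.sub (h1.const_mul (p b))).const_mul (2 * Real.pi * Complex.I)⁻¹
  refine ⟨P b, hPz, fun z hz => ?_⟩
  have hPb : DifferentiableOn ℂ (fun b => P b z) V := by
    have hinv := continuousOn_inv_sub_sphere hz
    have hmaps : MapsTo q V (ball 0 M) := fun b hb => mem_ball_zero_iff.2 (hqM b hb)
    have hf' := (differentiableOn_circleIntegral_div_sub hR.le (hinv.mul hf) hg hgM).comp hq hmaps
    have h1 := (differentiableOn_circleIntegral_div_sub hR.le hinv hg hgM).comp hq hmaps
    exact (hf'.sub (hp.mul h1)).const_mul _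
  have heq : (fun b => f z - p b) =ᶠ[𝓝 b₀] fun b => P b z * (g z - q b) := by
    filter_upwards [h, hV.mem_nhds hb₀] with b ⟨Q, hQ, hQb⟩ hb
    have hPQ : P b z = Q z := by
      rw [inv_mul_eq_iff_eq_mul₀ Complex.two_pi_I_ne_zero]
      exact circleIntegral_div_sub_sub_mul_eq hf hg hQ (hne b hb)
        (fun ζ hζ => hQb ζ (sphere_subset_closedBall hζ)) hz
    rw [hPQ, hQb z (ball_subset_closedBall hz)]
  exact ((hp.const_sub (f z)).analyticOnNhd hV).eqOn_of_preconnected_of_eventuallyEq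
    ((hPb.mul (hq.const_sub (g z))).analyticOnNhd hV) hVc hb₀ heq hb

theorem ball_subset_annulus {a b r : ℝ} {z : ℂ} (ha : a + r ≤ ‖z‖) (hb : ‖z‖ + r ≤ b) :
    ball z r ⊆ annulus a b := fun w hw => by
  have hw := mem_ball_iff_norm.1 hw
  constructor
  · linarith [norm_sub_norm_le z w, norm_sub_rev z w]
  · linarith [norm_sub_norm_le w z]

theorem rightInvOn_apply_eq_of_norm_sub_id_le {H K : ℂ → ℂ}
    (hH : DifferentiableOn ℂ H (annulus (1 / 4) 2))
    (hHid : ∀ z ∈ annulus (1 / 4) 2, ‖H z - z‖ ≤ 1 / 100)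
    (hKid : ∀ τ ∈ annulus (3 / 8) (3 / 2), ‖K τ - τ‖ ≤ 5 * (1 / 100))
    (hHK : RightInvOn K H (annulus (3 / 8) (3 / 2))) {z : ℂ}
    (hz : ball z (6 * (1 / 100)) ⊆ annulus (1 / 4) 2)
    (hHz : H z ∈ annulus (3 / 8) (3 / 2)) : K (H z) = z := by
  have hmem : K (H z) ∈ annulus (1 / 4) 2 :=
    ball_subset_annulus (r := 3 / 25) (by linarith [hHz.1]) (by linarith [hHz.2])
      (mem_ball_iff_norm.2 ((hKid _ hHz).trans_lt (by norm_num)))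
  have hle := norm_sub_le_two_mul_of_norm_sub_id_le (by norm_num) hH hHid hz hmem
  rw [hHK hHz, sub_self, norm_zero, mul_zero] at hle
  exact sub_eq_zero.1 (norm_le_zero_iff.1 hle)

theorem add_conj_eq_zero_and_deriv_ne_zero_of_norm_sub_id_le {f H : ℂ → ℂ} {m : ℕ} (hm : m ≠ 0)
    (hH : DifferentiableOn ℂ H (annulus (1 / 4) 2))
    (hHid : ∀ z ∈ annulus (1 / 4) 2, ‖H z - z‖ ≤ 1 / 100)
    (hf : DifferentiableOn ℂ f (annulus (1 / 4) 2))
    (hre : ∀ z ∈ annulus (1 / 4) 2, (H z ^ m).re = 0 → (f z).re = 0) {a z : ℂ}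
    (ha : a ∈ annulus (1 / 2) 1) (hz : z ∈ annulus (1 / 4) 2)
    (h : H z ^ m + starRingEnd ℂ (H a ^ m) = 0) :
    f z + starRingEnd ℂ (f a) = 0 ∧ deriv H z ≠ 0 := by
  have hWU : ∀ τ ∈ annulus (3 / 8) (3 / 2), ball τ (12 * (1 / 100)) ⊆ annulus (1 / 4) 2 :=
    fun τ hτ => ball_subset_annulus (by linarith [hτ.1]) (by linarith [hτ.2])
  obtain ⟨K, hK, hKid, hHK⟩ := exists_rightInvOn_of_norm_sub_id_le (by norm_num)
    (isOpen_annulus _ _) hH hHid (isOpen_annulus _ _) hWU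
  have hmapsK : MapsTo K (annulus (3 / 8) (3 / 2)) (annulus (1 / 4) 2) := fun τ hτ =>
    hWU τ hτ (mem_ball_iff_norm.2 ((hKid τ hτ).trans_lt (by norm_num)))
  have ha' : a ∈ annulus (1 / 4) 2 := ⟨by linarith [ha.1], by linarith [ha.2]⟩
  have hnorm : ‖H z‖ = ‖H a‖ := by
    rw [← pow_left_inj₀ (norm_nonneg _) (norm_nonneg _) hm, ← norm_pow, ← norm_pow,
      eq_neg_of_add_eq_zero_left h, norm_neg, Complex.norm_conj]
  have hHa := abs_le.1 ((abs_norm_sub_norm_le (H a) a).trans (hHid a ha'))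
  have hHz := abs_le.1 ((abs_norm_sub_norm_le (H z) z).trans (hHid z hz))
  have hHaW : H a ∈ annulus (3 / 8) (3 / 2) :=
    ⟨by linarith [ha.1, hHa.1], by linarith [ha.2, hHa.2]⟩
  have hHzW : H z ∈ annulus (3 / 8) (3 / 2) := ⟨hnorm ▸ hHaW.1, hnorm ▸ hHaW.2⟩
  have hball : ball z (6 * (1 / 100)) ⊆ annulus (1 / 4) 2 :=
    ball_subset_annulus (by linarith [ha.1, hHa.1, hHz.2]) (by linarith [ha.2, hHa.2, hHz.1])
  have hballa : ball a (6 * (1 / 100)) ⊆ annulus (1 / 4) 2 :=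
    ball_subset_annulus (by linarith [ha.1]) (by linarith [ha.2])
  refine ⟨?_, deriv_ne_zero_of_norm_sub_id_le (by norm_num) hH hHid hball⟩
  have hreK : ∀ τ ∈ annulus (3 / 8) (3 / 2), (τ ^ m).re = 0 → (f (K τ)).re = 0 :=
    fun τ hτ h0 => hre _ (hmapsK hτ) (by rwa [hHK hτ])
  have := add_conj_eq_zero_of_pow_add_conj_pow_eq_zero (by norm_num) (hf.comp hK hmapsK) hreK
    hHzW h
  rwa [Function.comp_apply, Function.comp_apply,
    rightInvOn_apply_eq_of_norm_sub_id_le hH hHid hKid hHK hball hHzW,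
    rightInvOn_apply_eq_of_norm_sub_id_le hH hHid hKid hHK hballa hHaW] at this

theorem div_eventuallyEq_dslope_div_dslope {Φ Ψ : ℂ → ℂ} {x : ℂ} (hΦ : Φ x = 0) (hΨ : Ψ x = 0)
    (hd : ContinuousAt (dslope Ψ x) x) (h' : deriv Ψ x ≠ 0) :
    (fun z => if Ψ z = 0 then deriv Φ z / deriv Ψ z else Φ z / Ψ z) =ᶠ[𝓝 x]
      fun z => dslope Φ x z / dslope Ψ x z := by
  filter_upwards [hd.eventually_ne (by rwa [dslope_same])] with y hy
  rcases eq_or_ne y x with rfl | hyx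
  · rw [if_pos hΨ, dslope_same, dslope_same]
  · rw [dslope_of_ne _ hyx, slope_def_field, hΨ, sub_zero] at hy
    rw [if_neg (div_ne_zero_iff.1 hy).1, dslope_of_ne _ hyx, dslope_of_ne _ hyx, slope_def_field,
      slope_def_field, hΨ, hΦ, sub_zero, sub_zero, div_div_div_cancel_right₀ (sub_ne_zero.2 hyx)]

theorem exists_eq_mul_of_deriv_ne_zero {Φ Ψ : ℂ → ℂ} {U : Set ℂ} (hU : IsOpen U)
    (hΦ : DifferentiableOn ℂ Φ U) (hΨ : DifferentiableOn ℂ Ψ U)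
    (h : ∀ z ∈ U, Ψ z = 0 → Φ z = 0 ∧ deriv Ψ z ≠ 0) :
    ∃ Q : ℂ → ℂ, DifferentiableOn ℂ Q U ∧ ∀ z ∈ U, Φ z = Q z * Ψ z := by
  classical
  refine ⟨fun z => if Ψ z = 0 then deriv Φ z / deriv Ψ z else Φ z / Ψ z, fun x hx => ?_,
    fun z hz => ?_⟩
  · have hxU := hU.mem_nhds hx
    refine DifferentiableAt.differentiableWithinAt ?_
    by_cases h0 : Ψ x = 0
    · have hdslope {k : ℂ → ℂ} (hk : DifferentiableOn ℂ k U) : DifferentiableAt ℂ (dslope k x) x :=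
        ((Complex.differentiableOn_dslope hxU).2 hk).differentiableAt hxU
      obtain ⟨hΦ0, hΨ'⟩ := h x hx h0
      exact ((hdslope hΦ).div (hdslope hΨ) (by rwa [dslope_same])).congr_of_eventuallyEq
        (div_eventuallyEq_dslope_div_dslope hΦ0 h0 (hdslope hΨ).continuousAt hΨ')
    · refine ((hΦ.differentiableAt hxU).div (hΨ.differentiableAt hxU) h0).congr_of_eventuallyEq ?_
      filter_upwards [(hΨ.differentiableAt hxU).continuousAt.eventually_ne h0] with y hy
      exact if_neg hy
  · dsimp only
    split_ifs with h0
    · rw [(h z hz h0).1, h0, mul_zero]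
    · rw [div_mul_cancel₀ _ h0]

theorem one_fourth_lt_norm_of_norm_sub_pow_le {g : ℂ → ℂ} {m : ℕ} {η : ℝ} (hm : m ≠ 0)
    (hη : 600 * 4 ^ m * η ≤ 1) {a z : ℂ} (ha : 1 / 2 < ‖a‖) (hga : ‖g a - a ^ m‖ ≤ η)
    (hgz : ‖g z - z ^ m‖ ≤ η) (h : ‖g z‖ = ‖g a‖) : 1 / 4 < ‖z‖ := by
  by_contra! hz
  have hzm : ‖z ^ m‖ ≤ ((1 / 2) ^ m) ^ 2 := by
    rw [norm_pow, ← pow_mul, mul_comm, pow_mul]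
    gcongr
    linarith
  have ham : (1 / 2) ^ m ≤ ‖a ^ m‖ := by
    rw [norm_pow]
    gcongr
  have hhalf : (1 / 2 : ℝ) ^ m ≤ 1 / 2 := pow_le_of_le_one (by norm_num) (by norm_num) hm
  have hpos : (0 : ℝ) < (1 / 2) ^ m := by positivity
  have hη' : 600 * η ≤ ((1 / 2) ^ m) ^ 2 := by
    have h4 : (4 : ℝ) ^ m * ((1 / 2) ^ m) ^ 2 = 1 := by
      rw [← pow_mul, mul_comm m, pow_mul, ← mul_pow]
      norm_num
    nlinarith
  nlinarith [norm_sub_norm_le (g z) (z ^ m), norm_sub_norm_le (a ^ m) (g a),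
    norm_sub_rev (a ^ m) (g a)]

theorem add_conj_eq_zero_and_deriv_ne_zero_of_norm_sub_pow_le {f g : ℂ → ℂ} {m : ℕ} {η : ℝ}
    (hm : m ≠ 0) (hη : 600 * 4 ^ m * η ≤ 1) (hf : DifferentiableOn ℂ f (ball 0 2))
    (hg : DifferentiableOn ℂ g (ball 0 2)) (hgm : ∀ z ∈ ball (0 : ℂ) 2, ‖g z - z ^ m‖ ≤ η)
    (hre : ∀ z ∈ ball (0 : ℂ) 2, (g z).re = 0 → (f z).re = 0) {a z : ℂ}
    (ha : a ∈ annulus (1 / 2) 1) (hz : z ∈ ball 0 2) (h : g z + starRingEnd ℂ (g a) = 0) :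
    f z + starRingEnd ℂ (f a) = 0 ∧ deriv g z ≠ 0 := by
  have hsub : annulus (1 / 4) 2 ⊆ ball 0 2 := fun w hw => mem_ball_zero_iff.2 hw.2
  have ha' : a ∈ annulus (1 / 4) 2 := ⟨by linarith [ha.1], by linarith [ha.2]⟩
  have hnorm : ‖g z‖ = ‖g a‖ := by
    rw [eq_neg_of_add_eq_zero_left h, norm_neg, Complex.norm_conj]
  have hz' : z ∈ annulus (1 / 4) 2 := ⟨one_fourth_lt_norm_of_norm_sub_pow_le hm hη ha.1
    (hgm a (hsub ha')) (hgm z hz) hnorm, mem_ball_zero_iff.1 hz⟩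
  have hrel : ∀ w ∈ annulus (1 / 4) 2, ‖g w - w ^ m‖ ≤ 4 ^ m * η * ‖w ^ m‖ := fun w hw => by
    have hη₀ : 0 ≤ η := (norm_nonneg _).trans (hgm w (hsub hw))
    have h4 : 1 ≤ 4 ^ m * ‖w ^ m‖ := by
      rw [norm_pow, ← mul_pow]
      exact one_le_pow₀ (by linarith [hw.1])
    nlinarith [hgm w (hsub hw)]
  obtain ⟨H, hH, hHg⟩ := exists_pow_eq_of_norm_sub_pow_le hm
    (fun h0 => absurd (norm_zero.symm.trans_gt h0.1) (by norm_num)) (hg.mono hsub)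
    (by linarith) hrel
  have hHid : ∀ w ∈ annulus (1 / 4) 2, ‖H w - w‖ ≤ 1 / 100 := fun w hw => by
    nlinarith [(hHg w hw).2, hw.1, hw.2]
  have hmain := add_conj_eq_zero_and_deriv_ne_zero_of_norm_sub_id_le hm hH hHid (hf.mono hsub)
    (fun w hw h0 => hre w (hsub hw) (by rwa [← (hHg w hw).1])) ha hz'
    (by rwa [(hHg z hz').1, (hHg a ha').1])
  refine ⟨hmain.1, ?_⟩
  have hnhds : annulus (1 / 4) 2 ∈ 𝓝 z := (isOpen_annulus _ _).mem_nhds hz'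
  have hd : HasDerivAt g (m * H z ^ (m - 1) * deriv H z) z :=
    ((hH.differentiableAt hnhds).hasDerivAt.pow m).congr_of_eventuallyEq
      (eventually_of_mem hnhds fun w hw => (hHg w hw).1.symm)
  have hHz : H z ≠ 0 := norm_pos_iff.1 (by
    linarith [norm_sub_norm_le z (H z), norm_sub_rev z (H z), hHid z hz', hz'.1])
  rw [hd.deriv]
  exact mul_ne_zero (mul_ne_zero (Nat.cast_ne_zero.2 hm) (pow_ne_zero _ hHz)) hmain.2

theorem differentiableOn_neg_conj_comp_conj {k : ℂ → ℂ} {r : ℝ}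
    (hk : DifferentiableOn ℂ k (ball 0 r)) :
    DifferentiableOn ℂ (fun b => -starRingEnd ℂ (k (starRingEnd ℂ b))) (ball 0 r) := fun b hb => by
  have hb' : starRingEnd ℂ b ∈ ball (0 : ℂ) r := by simpa using hb
  have := (hk.differentiableAt (isOpen_ball.mem_nhds hb')).conj_conj
  rw [Complex.conj_conj] at this
  exact this.neg.differentiableWithinAt

theorem exists_add_conj_eq_mul_of_eventually {f g : ℂ → ℂ} {r R M : ℝ} {a₀ : ℂ} (hR : 0 < R)
    (hfR : ContinuousOn f (sphere 0 R)) (hgR : ContinuousOn g (sphere 0 R))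
    (hf : DifferentiableOn ℂ f (ball 0 r)) (hg : DifferentiableOn ℂ g (ball 0 r))
    (hgM : ∀ z ∈ sphere (0 : ℂ) R, M ≤ ‖g z‖) (hgr : ∀ a ∈ ball (0 : ℂ) r, ‖g a‖ < M)
    (ha₀ : a₀ ∈ ball 0 r)
    (h : ∀ᶠ a in 𝓝 a₀, ∃ Q : ℂ → ℂ, DiffContOnCl ℂ Q (ball 0 R) ∧ ∀ z ∈ closedBall (0 : ℂ) R,
      f z + starRingEnd ℂ (f a) = Q z * (g z + starRingEnd ℂ (g a))) {a : ℂ} (ha : a ∈ ball 0 r) :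
    ∃ Q : ℂ → ℂ, DifferentiableOn ℂ Q (ball 0 R) ∧ ∀ z ∈ ball (0 : ℂ) R,
      f z + starRingEnd ℂ (f a) = Q z * (g z + starRingEnd ℂ (g a)) := by
  have hconj {b : ℂ} (hb : b ∈ ball 0 r) : starRingEnd ℂ b ∈ ball 0 r := by simpa using hb
  have hev : ∀ᶠ b in 𝓝 (starRingEnd ℂ a₀), ∃ Q : ℂ → ℂ, DiffContOnCl ℂ Q (ball 0 R) ∧
      ∀ z ∈ closedBall (0 : ℂ) R, f z - -starRingEnd ℂ (f (starRingEnd ℂ b)) =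
        Q z * (g z - -starRingEnd ℂ (g (starRingEnd ℂ b))) := by
    simp only [sub_neg_eq_add]
    have hcont := Complex.continuous_conj.tendsto (starRingEnd ℂ a₀)
    rw [Complex.conj_conj] at hcont
    exact hcont.eventually h
  have hqM : ∀ b ∈ ball (0 : ℂ) r, ‖-starRingEnd ℂ (g (starRingEnd ℂ b))‖ < M := fun b hb => by
    rw [norm_neg, Complex.norm_conj]
    exact hgr _ (hconj hb)
  have := exists_sub_eq_mul_sub_of_eventually hR hfR hgR isOpen_ball
    (convex_ball (0 : ℂ) r).isPreconnected (differentiableOn_neg_conj_comp_conj hf)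
    (differentiableOn_neg_conj_comp_conj hg) hgM hqM (hconj ha₀) hev (hconj ha)
  simpa only [Complex.conj_conj, sub_neg_eq_add] using this

theorem exists_add_conj_eq_mul_of_norm_sub_pow_le {f g : ℂ → ℂ} {m : ℕ} {η : ℝ}
    (hm : m ≠ 0) (hη : 600 * 4 ^ m * η ≤ 1) (hf : DifferentiableOn ℂ f (ball 0 2))
    (hg : DifferentiableOn ℂ g (ball 0 2)) (hgm : ∀ z ∈ ball (0 : ℂ) 2, ‖g z - z ^ m‖ ≤ η)
    (hre : ∀ z ∈ ball (0 : ℂ) 2, (g z).re = 0 → (f z).re = 0) :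
    ∃ Q : ℂ → ℂ, DifferentiableOn ℂ Q (ball 0 (3 / 2)) ∧ ∀ z ∈ ball (0 : ℂ) (3 / 2),
      f z + starRingEnd ℂ (f 0) = Q z * (g z + starRingEnd ℂ (g 0)) := by
  have hη' : η ≤ 1 / 600 := by
    have : (1 : ℝ) ≤ 4 ^ m := one_le_pow₀ (by norm_num)
    nlinarith [(norm_nonneg _).trans (hgm 0 (mem_ball_self two_pos))]
  have hsphere : sphere (0 : ℂ) (3 / 2) ⊆ ball 0 2 := sphere_subset_ball (by norm_num)
  have hclosed : closedBall (0 : ℂ) (3 / 2) ⊆ ball 0 2 := closedBall_subset_ball (by norm_num)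
  have hunit : ball (0 : ℂ) 1 ⊆ ball 0 2 := ball_subset_ball (by norm_num)
  have hdiv : ∀ a ∈ annulus (1 / 2) 1, ∃ Q : ℂ → ℂ, DiffContOnCl ℂ Q (ball 0 (3 / 2)) ∧
      ∀ z ∈ closedBall (0 : ℂ) (3 / 2),
        f z + starRingEnd ℂ (f a) = Q z * (g z + starRingEnd ℂ (g a)) := fun a ha => by
    obtain ⟨Q, hQ, hQf⟩ := exists_eq_mul_of_deriv_ne_zero isOpen_ball (hf.add_const _)
      (hg.add_const _) fun z hz h0 => by
        rw [deriv_add_const]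
        exact add_conj_eq_zero_and_deriv_ne_zero_of_norm_sub_pow_le hm hη hf hg hgm hre ha hz h0
    exact ⟨Q, (hQ.mono hclosed).diffContOnCl_ball subset_rfl, fun z hz => hQf z (hclosed hz)⟩
  have hgM : ∀ z ∈ sphere (0 : ℂ) (3 / 2), 5 / 4 ≤ ‖g z‖ := fun z hz => by
    have hzm : 3 / 2 ≤ ‖z ^ m‖ := by
      rw [norm_pow, mem_sphere_zero_iff_norm.1 hz]
      exact le_self_pow₀ (by norm_num) hm
    linarith [norm_sub_norm_le (z ^ m) (g z), norm_sub_rev (g z) (z ^ m), hgm z (hsphere hz)]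
  have hgr : ∀ a ∈ ball (0 : ℂ) 1, ‖g a‖ < 5 / 4 := fun a ha => by
    have ham : ‖a ^ m‖ ≤ 1 := by
      rw [norm_pow]
      exact pow_le_one₀ (norm_nonneg a) (mem_ball_zero_iff.1 ha).le
    linarith [norm_sub_norm_le (g a) (a ^ m), hgm a (hunit ha)]
  have hannulus : annulus (1 / 2) 1 ∈ 𝓝 (3 / 4 : ℂ) :=
    (isOpen_annulus _ _).mem_nhds ⟨by norm_num, by norm_num⟩
  exact exists_add_conj_eq_mul_of_eventually (by norm_num) (hf.continuousOn.mono hsphere)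
    (hg.continuousOn.mono hsphere) (hf.mono hunit) (hg.mono hunit) hgM hgr
    (mem_ball_zero_iff.2 (by norm_num)) (eventually_of_mem hannulus hdiv) (mem_ball_self one_pos)

theorem exists_add_conj_eq_mul_norm_le_of_norm_sub_pow_le {f g : ℂ → ℂ} {m : ℕ} {η K : ℝ}
    (hm : m ≠ 0) (hη : 600 * 4 ^ m * η ≤ 1) (hf : DifferentiableOn ℂ f (ball 0 2))
    (hg : DifferentiableOn ℂ g (ball 0 2)) (hgm : ∀ z ∈ ball (0 : ℂ) 2, ‖g z - z ^ m‖ ≤ η)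
    (hre : ∀ z ∈ ball (0 : ℂ) 2, (g z).re = 0 → (f z).re = 0)
    (hfK : ∀ z ∈ ball (0 : ℂ) 2, ‖f z‖ ≤ K) :
    ∃ Q : ℂ → ℂ, DifferentiableOn ℂ Q (ball 0 1) ∧ ∀ z ∈ ball (0 : ℂ) 1,
      ‖Q z‖ ≤ 2 * K ∧ f z + starRingEnd ℂ (f 0) = Q z * (g z + starRingEnd ℂ (g 0)) := by
  obtain ⟨Q, hQ, hQf⟩ := exists_add_conj_eq_mul_of_norm_sub_pow_le hm hη hf hg hgm hre
  have hclosed : closedBall (0 : ℂ) (5 / 4) ⊆ ball 0 (3 / 2) := closedBall_subset_ball (by norm_num)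
  have h0 : (0 : ℂ) ∈ ball (0 : ℂ) 2 := mem_ball_self two_pos
  have hη' : η ≤ 1 / 600 := by
    have : (1 : ℝ) ≤ 4 ^ m := one_le_pow₀ (by norm_num)
    nlinarith [(norm_nonneg _).trans (hgm 0 h0)]
  have hg0 : ‖g 0‖ ≤ η := by simpa [hm] using hgm 0 h0
  have hsphere : ∀ z ∈ sphere (0 : ℂ) (5 / 4), ‖Q z‖ ≤ 2 * K := fun z hz => by
    have hz2 : z ∈ ball (0 : ℂ) 2 := sphere_subset_ball (by norm_num) hz
    have hzm : 5 / 4 ≤ ‖z ^ m‖ := by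
      rw [norm_pow, mem_sphere_zero_iff_norm.1 hz]
      exact le_self_pow₀ (by norm_num) hm
    have hden : 1 ≤ ‖g z + starRingEnd ℂ (g 0)‖ := by
      have := norm_sub_le (g z + starRingEnd ℂ (g 0)) (starRingEnd ℂ (g 0))
      rw [add_sub_cancel_right, Complex.norm_conj] at this
      linarith [norm_sub_norm_le (z ^ m) (g z), norm_sub_rev (g z) (z ^ m), hgm z hz2]
    have hnum := norm_add_le (f z) (starRingEnd ℂ (f 0))
    rw [Complex.norm_conj, hQf z (hclosed (sphere_subset_closedBall hz)), norm_mul] at hnum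
    nlinarith [hfK z hz2, hfK 0 h0, norm_nonneg (Q z)]
  have hsub : ball (0 : ℂ) 1 ⊆ ball 0 (3 / 2) := ball_subset_ball (by norm_num)
  refine ⟨Q, hQ.mono hsub, fun z hz => ⟨?_, hQf z (hsub hz)⟩⟩
  refine Complex.norm_le_of_forall_mem_frontier_norm_le isBounded_ball
    ((hQ.mono hclosed).diffContOnCl_ball subset_rfl)
    (fun w hw => hsphere w (frontier_ball_subset_sphere hw))
    (subset_closure (ball_subset_ball (by norm_num) hz))

/-! ### Polar quotients -/

/-- The quotient of the polarizations `f z + conj (f 0)` and `g z + conj (g 0)` of the harmonic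
functions `re f` and `re g` extends to a holomorphic function bounded by `ε⁻¹` on the disc of
radius `ε` about `0`. Using one parameter for both the radius and the bound makes the property
monotone in `ε`. -/
def HasPolarQuotient (f g : ℂ → ℂ) (ε : ℝ) : Prop :=
  ∃ Q : ℂ → ℂ, DifferentiableOn ℂ Q (ball 0 ε) ∧ ∀ z ∈ ball (0 : ℂ) ε,
    ‖Q z‖ ≤ ε⁻¹ ∧ f z + starRingEnd ℂ (f 0) = Q z * (g z + starRingEnd ℂ (g 0))

theorem HasPolarQuotient.mono {f g : ℂ → ℂ} {ε δ : ℝ} (h : HasPolarQuotient f g ε) (hδ : 0 < δ)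
    (hδε : δ ≤ ε) : HasPolarQuotient f g δ := by
  obtain ⟨Q, hQ, hQf⟩ := h
  have hsub : ball (0 : ℂ) δ ⊆ ball 0 ε := ball_subset_ball hδε
  exact ⟨Q, hQ.mono hsub, fun z hz =>
    ⟨(hQf z (hsub hz)).1.trans (inv_anti₀ hδ hδε), (hQf z (hsub hz)).2⟩⟩

theorem hasPolarQuotient_of_norm_comp_mul_sub_pow_le {f g : ℂ → ℂ} {m : ℕ} {η K t ε : ℝ} {s : ℂ}
    (hm : m ≠ 0) (hη : 600 * 4 ^ m * η ≤ 1) (hs : s ≠ 0) (ht : t ≠ 0)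
    (hf : DifferentiableOn ℂ f (ball 0 (2 * ‖s‖))) (hg : DifferentiableOn ℂ g (ball 0 (2 * ‖s‖)))
    (hgm : ∀ z ∈ ball (0 : ℂ) 2, ‖t * g (s * z) - z ^ m‖ ≤ η)
    (hre : ∀ z ∈ ball (0 : ℂ) (2 * ‖s‖), (g z).re = 0 → (f z).re = 0)
    (hfK : ∀ z ∈ ball (0 : ℂ) (2 * ‖s‖), ‖f z‖ ≤ K) (hεs : ε ≤ ‖s‖) (hεK : 2 * K * |t| ≤ ε⁻¹) :
    HasPolarQuotient f g ε := by
  have hmaps : MapsTo (fun z => s * z) (ball 0 2) (ball 0 (2 * ‖s‖)) := fun z hz => by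
    rw [mem_ball_zero_iff] at hz ⊢
    rw [norm_mul, mul_comm]
    gcongr
  have hs' : DifferentiableOn ℂ (fun z => s * z) (ball 0 2) := by fun_prop
  obtain ⟨Q, hQ, hQf⟩ := exists_add_conj_eq_mul_norm_le_of_norm_sub_pow_le hm hη
    (hf.comp hs' hmaps) ((hg.comp hs' hmaps).const_mul (t : ℂ)) hgm
    (fun z hz h0 => hre _ (hmaps hz) (by simpa [ht] using h0)) (fun z hz => hfK _ (hmaps hz))
  have hmaps' : MapsTo (fun z => z / s) (ball 0 ε) (ball 0 1) := fun z hz => by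
    rw [mem_ball_zero_iff] at hz ⊢
    rw [norm_div, div_lt_one (norm_pos_iff.2 hs)]
    exact hz.trans_le hεs
  refine ⟨fun z => Q (z / s) * t, (hQ.comp (by fun_prop) hmaps').mul_const _, fun z hz => ?_⟩
  obtain ⟨hbound, heq⟩ := hQf _ (hmaps' hz)
  constructor
  · rw [norm_mul, Complex.norm_real, Real.norm_eq_abs]
    exact (by gcongr : _ ≤ 2 * K * |t|).trans hεK
  · simp only [Function.comp_apply, mul_div_cancel₀ z hs, mul_zero, map_mul,
      Complex.conj_ofReal] at heq
    rw [heq]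
    ring

theorem hasPolarQuotient_of_le_norm_add_conj {f g : ℂ → ℂ} {K c ε : ℝ} (hc : 0 < c)
    (hf : DifferentiableOn ℂ f (ball 0 ε)) (hg : DifferentiableOn ℂ g (ball 0 ε))
    (hfK : ∀ z ∈ ball (0 : ℂ) ε, ‖f z‖ ≤ K)
    (hgc : ∀ z ∈ ball (0 : ℂ) ε, c ≤ ‖g z + starRingEnd ℂ (g 0)‖) (hε : 2 * K / c ≤ ε⁻¹) :
    HasPolarQuotient f g ε := by
  have hne (z : ℂ) (hz : z ∈ ball (0 : ℂ) ε) : g z + starRingEnd ℂ (g 0) ≠ 0 :=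
    norm_pos_iff.1 (hc.trans_le (hgc z hz))
  refine ⟨fun z => (f z + starRingEnd ℂ (f 0)) / (g z + starRingEnd ℂ (g 0)),
    (hf.add_const _).div (hg.add_const _) hne,
    fun z hz => ⟨?_, (div_mul_cancel₀ _ (hne z hz)).symm⟩⟩
  have hnum : ‖f z + starRingEnd ℂ (f 0)‖ ≤ 2 * K := by
    have := norm_add_le (f z) (starRingEnd ℂ (f 0))
    rw [Complex.norm_conj] at this
    linarith [hfK z hz, hfK 0 (mem_ball_self (pos_of_mem_ball hz))]
  rw [norm_div]
  exact (div_le_div₀ ((norm_nonneg _).trans hnum) hnum hc (hgc z hz)).trans hε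

theorem exists_isLittleO_comp_mul_sub_pow {g : ℂ → ℂ} (hg : AnalyticAt ℂ g 0) (hg0 : g 0 = 0)
    (hne : ¬∀ᶠ z in 𝓝 0, g z = 0) :
    ∃ (n : ℕ) (κ : ℂ), n ≠ 0 ∧ κ ≠ 0 ∧ (fun w => g (κ * w) - w ^ n) =o[𝓝 0] fun w => w ^ n := by
  obtain ⟨n, c, hc, hc0, hgc⟩ := hg.exists_eventuallyEq_pow_smul_nonzero_iff.2 hne
  simp only [sub_zero, smul_eq_mul] at hgc
  have hn : n ≠ 0 := by
    rintro rfl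
    exact hc0 (by simpa [hg0] using hgc.self_of_nhds.symm)
  obtain ⟨κ, hκ⟩ := IsAlgClosed.exists_pow_nat_eq (c 0)⁻¹ (Nat.pos_of_ne_zero hn)
  refine ⟨n, κ, hn, ne_zero_pow hn (hκ ▸ inv_ne_zero hc0), ?_⟩
  have hlim : Tendsto (κ * ·) (𝓝 (0 : ℂ)) (𝓝 0) :=
    Continuous.tendsto' (by fun_prop) _ _ (mul_zero κ)
  have hsmall : Tendsto (fun w => κ ^ n * c (κ * w) - 1) (𝓝 0) (𝓝 0) := by
    simpa [hκ, hc0] using ((hc.continuousAt.tendsto.comp hlim).const_mul (κ ^ n)).sub_const 1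
  have hmul := (Asymptotics.isBigO_refl (fun w : ℂ => w ^ n) (𝓝 0)).mul_isLittleO
    ((Asymptotics.isLittleO_one_iff ℂ).2 hsmall)
  refine hmul.congr' ?_ (.of_forall fun w => mul_one _)
  filter_upwards [hlim.eventually hgc] with w hw
  rw [hw]
  ring

theorem eventually_forall_closedBall_norm_sub_lt {ι : Type*} {l : Filter ι}
    {b : ι → ℂ → ℂ} {g : ℂ → ℂ} {U : Set ℂ} {c : ℂ} {r δ : ℝ}
    (hb : TendstoLocallyUniformlyOn b g l U) (hr : closedBall c r ⊆ U) (hδ : 0 < δ) :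
    ∀ᶠ k in l, ∀ z ∈ closedBall c r, ‖b k z - g z‖ < δ := by
  have := (tendstoLocallyUniformlyOn_iff_tendstoUniformlyOn_of_compact (isCompact_closedBall c r)).1
    (hb.mono hr)
  simpa only [dist_comm, dist_eq_norm] using Metric.tendstoUniformlyOn_iff.1 this δ hδ

theorem exists_eventually_hasPolarQuotient_of_apply_ne_zero {ι : Type*} {l : Filter ι}
    {b : ι → ℂ → ℂ} {g : ℂ → ℂ} {R K : ℝ} (hR : 0 < R)
    (hb : ∀ k, DifferentiableOn ℂ (b k) (ball 0 R))
    (hbg : TendstoLocallyUniformlyOn b g l (ball 0 R))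
    (hg : ContinuousAt g 0) (hgi : (g 0).im = 0) (hg0 : g 0 ≠ 0) :
    ∃ ε > 0, ∀ᶠ k in l, ∀ f : ℂ → ℂ, DifferentiableOn ℂ f (ball 0 R) →
      (∀ z ∈ ball (0 : ℂ) R, ‖f z‖ ≤ K) → HasPolarQuotient f (b k) ε := by
  have hg0' : 0 < ‖g 0‖ / 4 := by positivity
  obtain ⟨r, hr, hrg⟩ := nhds_basis_closedBall.mem_iff.1
    (inter_mem (ball_mem_nhds 0 hR) (hg.preimage_mem_nhds (ball_mem_nhds _ hg0')))
  obtain ⟨ε, hεK, hε₀, hεr⟩ := ((tendsto_inv_nhdsGT_zero.eventually_ge_atTop (2 * K / ‖g 0‖)).and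
    (Ioo_mem_nhdsGT hr)).exists
  have hεr' : ball (0 : ℂ) ε ⊆ closedBall 0 r := ball_subset_closedBall.trans
    (closedBall_subset_closedBall hεr.le)
  have hεR : ball (0 : ℂ) ε ⊆ ball 0 R := fun z hz => (hrg (hεr' hz)).1
  refine ⟨ε, hε₀, ?_⟩
  filter_upwards [eventually_forall_closedBall_norm_sub_lt hbg (fun z hz => (hrg hz).1) hg0']
    with k hk f hf hfK
  have hclose (z : ℂ) (hz : z ∈ ball (0 : ℂ) ε) : ‖b k z - g 0‖ ≤ ‖g 0‖ / 2 := by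
    have hgz := mem_ball_iff_norm.1 (hrg (hεr' hz)).2
    linarith [hk z (hεr' hz), norm_sub_le_norm_sub_add_norm_sub (b k z) (g z) (g 0)]
  refine hasPolarQuotient_of_le_norm_add_conj (norm_pos_iff.2 hg0) (hf.mono hεR)
    ((hb k).mono hεR) (fun z hz => hfK z (hεR hz)) (fun z hz => ?_) hεK
  have hsplit : 2 * g 0 = b k z + starRingEnd ℂ (b k 0) -
      ((b k z - g 0) + starRingEnd ℂ (b k 0 - g 0)) := by
    rw [map_sub, Complex.conj_eq_iff_im.2 hgi]
    ring
  have hnorm := congrArg norm hsplit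
  rw [norm_mul, Complex.norm_ofNat] at hnorm
  have hconj := Complex.norm_conj (b k 0 - g 0)
  linarith [norm_sub_le (b k z + starRingEnd ℂ (b k 0))
    ((b k z - g 0) + starRingEnd ℂ (b k 0 - g 0)),
    norm_add_le (b k z - g 0) (starRingEnd ℂ (b k 0 - g 0)), hclose z hz,
    hclose 0 (mem_ball_self hε₀)]

theorem exists_forall_norm_comp_mul_sub_pow_le {g : ℂ → ℂ} {n : ℕ} {κ : ℂ} {η R : ℝ}
    (hκ : κ ≠ 0) (hη : 0 < η) (hR : 0 < R)
    (hg : (fun w => g (κ * w) - w ^ n) =o[𝓝 0] fun w => w ^ n) :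
    ∃ δ > 0, 2 * (δ * ‖κ‖) < R ∧
      ∀ z ∈ ball (0 : ℂ) 2, ‖g (δ * κ * z) - (δ * z) ^ n‖ ≤ η * δ ^ n := by
  obtain ⟨r, hr, hrg⟩ := Metric.eventually_nhds_iff_ball.1
    (hg.def (by positivity : 0 < η / 2 ^ n))
  obtain ⟨δ, hδ, hδmin⟩ := exists_between
    (lt_min (half_pos hr) (by positivity : 0 < R / (2 * ‖κ‖)))
  obtain ⟨hδr, hδR⟩ := lt_min_iff.1 hδmin
  rw [lt_div_iff₀ (by positivity)] at hδR
  refine ⟨δ, hδ, by linarith, fun z hz => ?_⟩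
  have hδz : ‖(δ : ℂ) * z‖ ≤ δ * 2 := by
    rw [norm_mul, Complex.norm_real, Real.norm_of_nonneg hδ.le]
    gcongr
    exact (mem_ball_zero_iff.1 hz).le
  have hw := hrg (δ * z) (by rw [mem_ball_zero_iff]; linarith)
  rw [norm_pow, show κ * (δ * z) = δ * κ * z by ring] at hw
  refine hw.trans ((by gcongr : _ ≤ η / 2 ^ n * (δ * 2) ^ n).trans_eq ?_)
  rw [mul_pow]
  field_simp

theorem exists_eventually_hasPolarQuotient_of_apply_eq_zero {ι : Type*} {l : Filter ι}
    {b : ι → ℂ → ℂ} {g : ℂ → ℂ} {R K : ℝ} (hR : 0 < R)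
    (hb : ∀ k, DifferentiableOn ℂ (b k) (ball 0 R))
    (hbg : TendstoLocallyUniformlyOn b g l (ball 0 R))
    (hg : AnalyticAt ℂ g 0) (hg0 : g 0 = 0) (hne : ¬∀ᶠ z in 𝓝 0, g z = 0) :
    ∃ ε > 0, ∀ᶠ k in l, ∀ f : ℂ → ℂ, DifferentiableOn ℂ f (ball 0 R) →
      (∀ z ∈ ball (0 : ℂ) R, ‖f z‖ ≤ K) →
      (∀ z ∈ ball (0 : ℂ) R, (b k z).re = 0 → (f z).re = 0) → HasPolarQuotient f (b k) ε := by
  obtain ⟨n, κ, hn, hκ, hgκ⟩ := exists_isLittleO_comp_mul_sub_pow hg hg0 hne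
  obtain ⟨η, hη, hη'⟩ : ∃ η : ℝ, 0 < η ∧ 600 * 4 ^ n * η ≤ 1 :=
    ⟨(600 * 4 ^ n)⁻¹, by positivity, (mul_inv_cancel₀ (by positivity)).le⟩
  obtain ⟨δ, hδ, hδR, hgδ⟩ := exists_forall_norm_comp_mul_sub_pow_le hκ (half_pos hη) hR hgκ
  let s : ℂ := δ * κ
  have hs : ‖s‖ = δ * ‖κ‖ := by rw [norm_mul, Complex.norm_real, Real.norm_of_nonneg hδ.le]
  have hs₀ : 0 < ‖s‖ := by rw [hs]; positivity
  have hsR : 2 * ‖s‖ < R := hs ▸ hδR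
  have hsub : ball (0 : ℂ) (2 * ‖s‖) ⊆ ball 0 R := ball_subset_ball hsR.le
  obtain ⟨ε, hεK, hε₀, hεs⟩ :=
    ((tendsto_inv_nhdsGT_zero.eventually_ge_atTop (2 * K * |(δ ^ n)⁻¹|)).and
      (Ioo_mem_nhdsGT hs₀)).exists
  refine ⟨ε, hε₀, ?_⟩
  filter_upwards [eventually_forall_closedBall_norm_sub_lt hbg (closedBall_subset_ball hsR)
    (by positivity : 0 < η / 2 * δ ^ n)] with k hk f hf hfK hre
  refine hasPolarQuotient_of_norm_comp_mul_sub_pow_le hn hη' (norm_pos_iff.1 hs₀)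
    (by positivity : (δ ^ n)⁻¹ ≠ 0) (hf.mono hsub) ((hb k).mono hsub) (fun z hz => ?_)
    (fun z hz => hre z (hsub hz)) (fun z hz => hfK z (hsub hz)) hεs.le hεK
  have hsz : s * z ∈ closedBall 0 (2 * ‖s‖) := by
    rw [mem_closedBall_zero_iff, norm_mul, mul_comm]
    gcongr
    exact (mem_ball_zero_iff.1 hz).le
  have hδ' : (δ : ℂ) ≠ 0 := mod_cast hδ.ne'
  calc ‖(((δ ^ n)⁻¹ : ℝ) : ℂ) * b k (s * z) - z ^ n‖
      = ‖(((δ ^ n)⁻¹ : ℝ) : ℂ) * (b k (s * z) - (δ * z) ^ n)‖ := by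
        push_cast
        rw [mul_pow, mul_sub, inv_mul_cancel_left₀ (pow_ne_zero n hδ')]
    _ = (δ ^ n)⁻¹ * ‖b k (s * z) - (δ * z) ^ n‖ := by
        rw [norm_mul, Complex.norm_real, Real.norm_of_nonneg (by positivity)]
    _ ≤ (δ ^ n)⁻¹ * (η * δ ^ n) := by
        gcongr
        linarith [norm_sub_le_norm_sub_add_norm_sub (b k (s * z)) (g (s * z)) ((δ * z) ^ n),
          hk _ hsz, hgδ z hz]
    _ = η := by field_simp

theorem exists_eventually_hasPolarQuotient {ι : Type*} {l : Filter ι} [l.NeBot]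
    {b : ι → ℂ → ℂ} {g : ℂ → ℂ} {R K : ℝ} (hR : 0 < R)
    (hb : ∀ k, DifferentiableOn ℂ (b k) (ball 0 R))
    (hbg : TendstoLocallyUniformlyOn b g l (ball 0 R)) (hbi : ∀ k, (b k 0).im = 0)
    (hne : ¬∀ᶠ z in 𝓝 0, g z = 0) :
    ∃ ε > 0, ∀ᶠ k in l, ∀ f : ℂ → ℂ, DifferentiableOn ℂ f (ball 0 R) →
      (∀ z ∈ ball (0 : ℂ) R, ‖f z‖ ≤ K) →
      (∀ z ∈ ball (0 : ℂ) R, (b k z).re = 0 → (f z).re = 0) → HasPolarQuotient f (b k) ε := by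
  have h0 : (0 : ℂ) ∈ ball 0 R := mem_ball_self hR
  have hg : AnalyticAt ℂ g 0 :=
    (hbg.differentiableOn (.of_forall hb) isOpen_ball).analyticAt (isOpen_ball.mem_nhds h0)
  obtain hg0 | hg0 := eq_or_ne (g 0) 0
  · exact exists_eventually_hasPolarQuotient_of_apply_eq_zero hR hb hbg hg hg0 hne
  · have hgi : (g 0).im = 0 := (isClosed_eq Complex.continuous_im continuous_const).mem_of_tendsto
      (hbg.tendsto_at h0) (.of_forall hbi)
    obtain ⟨ε, hε, hQ⟩ := exists_eventually_hasPolarQuotient_of_apply_ne_zero hR hb hbg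
      hg.continuousAt hgi hg0
    exact ⟨ε, hε, hQ.mono fun k hk f hf hfK _ => hk f hf hfK⟩

theorem eventually_forall_hasPolarQuotient {z₁ : ℂ} {R R₀ K : ℝ} (hz₁ : z₁ ∈ ball 0 R)
    (hR₀ : 0 < R₀) (hR : R₀ ≤ R) :
    ∀ᶠ ε in 𝓝[>] (0 : ℝ), ∀ f g : ℂ → ℂ, DifferentiableOn ℂ f (ball 0 R₀) →
      DifferentiableOn ℂ g (ball 0 R) → (∀ z ∈ ball (0 : ℂ) R₀, ‖f z‖ ≤ K) →
      (∀ z ∈ ball (0 : ℂ) R, ‖g z‖ ≤ K) → ‖g z₁‖ = 1 → (g 0).im = 0 →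
      (∀ z ∈ ball (0 : ℂ) R₀, (g z).re = 0 → (f z).re = 0) → HasPolarQuotient f g ε := by
  by_contra hcon
  obtain ⟨ε, hε, hbad⟩ := exists_seq_forall_of_frequently (not_eventually.1 hcon)
  push Not at hbad
  choose f g hf hg hfK hgK hg₁ hgi hre hQ using hbad
  obtain ⟨φ, G, hφ, hG⟩ := exists_subseq_tendstoLocallyUniformlyOn_ball (hR₀.trans_le hR) hg hgK
  have hsub : ball (0 : ℂ) R₀ ⊆ ball 0 R := ball_subset_ball hR
  have hGa : AnalyticOnNhd ℂ G (ball 0 R) :=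
    (hG.differentiableOn (.of_forall fun k => hg (φ k)) isOpen_ball).analyticOnNhd isOpen_ball
  have hG₁ : ‖G z₁‖ = 1 := tendsto_nhds_unique (hG.tendsto_at hz₁).norm
    (tendsto_const_nhds.congr fun k => (hg₁ (φ k)).symm)
  have hne : ¬∀ᶠ z in 𝓝 0, G z = 0 := fun h => by
    have hzero := hGa.eqOn_zero_of_preconnected_of_eventuallyEq_zero
      (convex_ball (0 : ℂ) R).isPreconnected (mem_ball_self (hR₀.trans_le hR)) h hz₁
    simp [hzero] at hG₁
  obtain ⟨δ, hδ, hδQ⟩ := exists_eventually_hasPolarQuotient (K := K) hR₀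
    (fun k => (hg (φ k)).mono hsub) (hG.mono hsub) (fun k => hgi (φ k)) hne
  have hεφ := (tendsto_nhdsWithin_iff.1 hε).1.comp hφ.tendsto_atTop
  have hεpos := hφ.tendsto_atTop.eventually (tendsto_nhdsWithin_iff.1 hε).2
  obtain ⟨k, hk, hεk, hεk₀⟩ := (hδQ.and ((hεφ.eventually_lt_const hδ).and hεpos)).exists
  exact hQ (φ k) ((hk _ (hf _) (hfK _) (hre _)).mono hεk₀ hεk.le)

theorem ofReal_re_eq_mul_of_add_conj_eq {a b q : ℂ}
    (h : a + starRingEnd ℂ a = q * (b + starRingEnd ℂ b)) : (a.re : ℂ) = q * b.re := by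
  rw [Complex.add_conj, Complex.add_conj] at h
  push_cast at h
  linear_combination h / 2

theorem deriv_div_re_sub_deriv_div_re_eq {f g Q : ℂ → ℂ} (hQ : DifferentiableAt ℂ Q 0)
    (hg : DifferentiableAt ℂ g 0) (hg0 : (g 0).re ≠ 0) (hQ0 : Q 0 ≠ 0)
    (h : ∀ᶠ z in 𝓝 0, f z + starRingEnd ℂ (f 0) = Q z * (g z + starRingEnd ℂ (g 0))) :
    deriv f 0 / (f 0).re - deriv g 0 / (g 0).re = 2 * deriv Q 0 / Q 0 := by
  have hderiv := EventuallyEq.deriv_eq h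
  rw [deriv_add_const, deriv_fun_mul hQ (hg.add_const _), deriv_add_const,
    Complex.add_conj] at hderiv
  push_cast at hderiv
  have hg0' : ((g 0).re : ℂ) ≠ 0 := mod_cast hg0
  rw [hderiv, ofReal_re_eq_mul_of_add_conj_eq h.self_of_nhds]
  field_simp
  ring

theorem HasPolarQuotient.norm_deriv_div_re_sub_le {f g : ℂ → ℂ} {ε : ℝ} (hε : 0 < ε)
    (hfg : HasPolarQuotient f g ε) (hgf : HasPolarQuotient g f ε)
    (hg : DifferentiableAt ℂ g 0) (hg0 : (g 0).re ≠ 0) :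
    ‖deriv f 0 / (f 0).re - deriv g 0 / (g 0).re‖ ≤ 2 / ε ^ 3 := by
  obtain ⟨Q, hQ, hQf⟩ := hfg
  obtain ⟨P, -, hPg⟩ := hgf
  have h0 : (0 : ℂ) ∈ ball 0 ε := mem_ball_self hε
  have hnhds : ball (0 : ℂ) ε ∈ 𝓝 0 := isOpen_ball.mem_nhds h0
  have hPQ : P 0 * Q 0 = 1 := by
    have hf0 := ofReal_re_eq_mul_of_add_conj_eq (hQf 0 h0).2
    have hg0eq := ofReal_re_eq_mul_of_add_conj_eq (hPg 0 h0).2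
    exact mul_right_cancel₀ (mod_cast hg0 : ((g 0).re : ℂ) ≠ 0)
      (by linear_combination -hg0eq - P 0 * hf0)
  have hcauchy : ‖deriv Q 0‖ ≤ ε⁻¹ / ε := by
    simpa using norm_inv_factorial_mul_iteratedDeriv_le hε hQ (fun z hz => (hQf z hz).1) 1
  calc ‖deriv f 0 / (f 0).re - deriv g 0 / (g 0).re‖
      = ‖2 * deriv Q 0 * P 0‖ := by
        rw [deriv_div_re_sub_deriv_div_re_eq (hQ.differentiableAt hnhds) hg hg0
          (right_ne_zero_of_mul_eq_one hPQ) (eventually_of_mem hnhds fun z hz => (hQf z hz).2),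
          eq_inv_of_mul_eq_one_left hPQ, div_eq_mul_inv]
    _ = 2 * ‖deriv Q 0‖ * ‖P 0‖ := by rw [norm_mul, norm_mul, Complex.norm_ofNat]
    _ ≤ 2 * (ε⁻¹ / ε) * ε⁻¹ := by
        gcongr
        exact (hPg 0 h0).1
    _ = 2 / ε ^ 3 := by field_simp

theorem exists_forall_hasPolarQuotient (N : ℕ) :
    ∃ ε > 0, ∀ F G : ℂ → ℂ, NodallyBoundedOn F (ball 0 1) N → NodallyBoundedOn G (ball 0 1) N →
      (F 0).im = 0 → (G 0).im = 0 → (∀ z ∈ ball (0 : ℂ) 1, (F z).re = 0 ↔ (G z).re = 0) →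
      ∃ l > (0 : ℝ), ∃ m > (0 : ℝ), HasPolarQuotient (fun z => l * F z) (fun z => m * G z) ε ∧
        HasPolarQuotient (fun z => m * G z) (fun z => l * F z) ε := by
  obtain ⟨K, τ, ρ, hτ, hρ, hnorm⟩ := NodallyBoundedOn.exists_normalization N
  have hz₁ (i) : (ρ i : ℂ) ∈ ball 0 (ρ i + τ) := by
    rw [mem_ball_zero_iff, Complex.norm_real, Real.norm_of_nonneg (by linarith [(hρ i).1])]
    linarith
  have hR (i) : 1 / 4 ≤ ρ i + τ := by linarith [(hρ i).1]
  have hevent := eventually_all.2 fun i =>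
    eventually_forall_hasPolarQuotient (K := K) (hz₁ i) (by norm_num) (hR i)
  obtain ⟨ε, hquot, hε⟩ := (hevent.and self_mem_nhdsWithin).exists
  refine ⟨ε, hε, fun F G hF hG hFi hGi hFG => ?_⟩
  obtain ⟨i, l, hl, hFl, hFK⟩ := hnorm F hF
  obtain ⟨j, m, hm, hGm, hGK⟩ := hnorm G hG
  have hsub {R : ℝ} (hR : R ≤ 1) : ball (0 : ℂ) R ⊆ ball 0 1 := ball_subset_ball hR
  have hdF := hF.differentiableOn.const_mul (l : ℂ)
  have hdG := hG.differentiableOn.const_mul (m : ℂ)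
  refine ⟨l, hl, m, hm, ?_, ?_⟩
  · refine hquot j _ _ (hdF.mono (hsub (by norm_num))) (hdG.mono (hsub (hρ j).2))
      (fun z hz => hFK z (ball_subset_ball (hR i) hz)) hGK hGm (by simp [hGi]) fun z hz h => ?_
    simpa [hl.ne', hm.ne', hFG z (hsub (by norm_num) hz)] using h
  · refine hquot i _ _ (hdG.mono (hsub (by norm_num))) (hdF.mono (hsub (hρ i).2))
      (fun z hz => hGK z (ball_subset_ball (hR j) hz)) hFK hFl (by simp [hFi]) fun z hz h => ?_
    simpa [hl.ne', hm.ne', hFG z (hsub (by norm_num) hz)] using h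

theorem NodallyBoundedOn.exists_forall_norm_deriv_div_re_sub_le (N : ℕ) :
    ∃ C > (0 : ℝ), ∀ F G : ℂ → ℂ, NodallyBoundedOn F (ball 0 1) N →
      NodallyBoundedOn G (ball 0 1) N → (F 0).im = 0 → (G 0).im = 0 →
      (∀ z ∈ ball (0 : ℂ) 1, (F z).re = 0 ↔ (G z).re = 0) → (G 0).re ≠ 0 →
      ‖deriv F 0 / (F 0).re - deriv G 0 / (G 0).re‖ ≤ C := by
  obtain ⟨ε, hε, hquot⟩ := exists_forall_hasPolarQuotient N
  refine ⟨2 / ε ^ 3, by positivity, fun F G hF hG hFi hGi hFG hG0 => ?_⟩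
  obtain ⟨l, hl, m, hm, hlm, hml⟩ := hquot F G hF hG hFi hGi hFG
  have hGd : DifferentiableAt ℂ G 0 :=
    hG.differentiableOn.differentiableAt (isOpen_ball.mem_nhds (mem_ball_self one_pos))
  have hscale (H : ℂ → ℂ) {t : ℝ} (ht : 0 < t) :
      deriv (fun z => t * H z) 0 / ((t * H 0 : ℂ).re : ℂ) = deriv H 0 / (H 0).re := by
    rw [deriv_const_mul_field, Complex.re_ofReal_mul, Complex.ofReal_mul,
      mul_div_mul_left _ _ (mod_cast ht.ne')]
  rw [← hscale F hl, ← hscale G hm]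
  exact HasPolarQuotient.norm_deriv_div_re_sub_le hε hlm hml (hGd.const_mul _)
    (by rw [Complex.re_ofReal_mul]; exact mul_ne_zero hm.ne' hG0)

/-! ### Harmonic functions on a plane disc -/

theorem laplacian_comp_orthonormalBasisOneI_repr (u : En 2 → ℝ) (z : ℂ) :
    Laplacian.laplacian (u ∘ Complex.orthonormalBasisOneI.repr) z =
      laplacianAt u (Complex.orthonormalBasisOneI.repr z) := by
  have hcomp := Complex.orthonormalBasisOneI.repr.toContinuousLinearEquiv
    |>.iteratedFDerivWithin_comp_right u (uniqueDiffOn_univ (𝕜 := ℝ)) (x := z) (mem_univ _) 2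
  rw [preimage_univ, iteratedFDerivWithin_univ, iteratedFDerivWithin_univ] at hcomp
  rw [InnerProductSpace.laplacian_eq_iteratedFDeriv_orthonormalBasis _
    Complex.orthonormalBasisOneI]
  refine Finset.sum_congr rfl fun i _ => (congrArg (fun m => m ![Complex.orthonormalBasisOneI i,
    Complex.orthonormalBasisOneI i]) hcomp).trans ?_
  rw [ContinuousMultilinearMap.compContinuousLinearMap_apply]
  congr 1
  funext j
  fin_cases j <;> exact Complex.orthonormalBasisOneI.repr_self i

theorem HarmonicOnSet.exists_differentiableOn_re_eq {u : En 2 → ℝ} {r : ℝ}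
    (hu : HarmonicOnSet u (ball 0 r)) :
    ∃ F : ℂ → ℂ, DifferentiableOn ℂ F (ball 0 r) ∧ (F 0).im = 0 ∧
      ∀ z ∈ ball (0 : ℂ) r, (F z).re = u (Complex.orthonormalBasisOneI.repr z) := by
  set e := Complex.orthonormalBasisOneI.repr with he
  have hmem {z : ℂ} (hz : z ∈ ball (0 : ℂ) r) : e z ∈ ball (0 : En 2) r := by
    rwa [mem_ball_zero_iff, e.norm_map, ← mem_ball_zero_iff]
  have hharm : InnerProductSpace.HarmonicOnNhd (u ∘ e) (ball (0 : ℂ) r) := fun z hz => by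
    refine ⟨(hu.1.contDiffAt (isOpen_ball.mem_nhds (hmem hz))).comp z
      e.toContinuousLinearEquiv.contDiff.contDiffAt, ?_⟩
    filter_upwards [isOpen_ball.mem_nhds hz] with w hw
    rw [he, laplacian_comp_orthonormalBasisOneI_repr, hu.2 _ (hmem hw), Pi.zero_apply]
  obtain ⟨F, hF, hFu⟩ := hharm.exists_analyticOnNhd_ball_re_eq
  refine ⟨fun z => F z - ((F 0).im : ℂ) * Complex.I, hF.differentiableOn.sub_const _, by simp,
    fun z hz => ?_⟩
  simpa using hFu hz

/-- The dilation `z ↦ r z` as a linear isomorphism from `ℂ` to the Euclidean plane. It maps the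
unit disc onto the disc of radius `r`. -/
def planeDilation {r : ℝ} (hr : 0 < r) : ℂ ≃L[ℝ] En 2 :=
  (ContinuousLinearEquiv.smulLeft (Units.mk0 r hr.ne')).trans
    Complex.orthonormalBasisOneI.repr.toContinuousLinearEquiv

theorem planeDilation_apply {r : ℝ} (hr : 0 < r) (z : ℂ) :
    planeDilation hr z = Complex.orthonormalBasisOneI.repr (r * z) := by
  rw [← Complex.real_smul]
  rfl

theorem norm_planeDilation {r : ℝ} (hr : 0 < r) (z : ℂ) : ‖planeDilation hr z‖ = r * ‖z‖ := by
  rw [planeDilation_apply, LinearIsometryEquiv.norm_map, norm_mul, Complex.norm_real,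
    Real.norm_of_nonneg hr.le]

theorem planeDilation_mem_ball {r : ℝ} (hr : 0 < r) {z : ℂ} :
    planeDilation hr z ∈ ball 0 r ↔ z ∈ ball 0 1 := by
  rw [mem_ball_zero_iff, mem_ball_zero_iff, norm_planeDilation, mul_lt_iff_lt_one_right hr]

theorem HarmonicOnSet.exists_nodallyBoundedOn {u : En 2 → ℝ} {r : ℝ} {N : ℕ} (hr : 0 < r)
    (hu : HarmonicOnSet u (ball 0 r)) (hu0 : ∃ x ∈ ball (0 : En 2) r, u x ≠ 0)
    (hfin : (nodalComponents u (ball 0 r)).Finite)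
    (hN : (nodalComponents u (ball 0 r)).ncard ≤ N) :
    ∃ F : ℂ → ℂ, NodallyBoundedOn F (ball 0 1) N ∧ (F 0).im = 0 ∧
      ∀ z ∈ ball (0 : ℂ) 1, (F z).re = u (planeDilation hr z) := by
  obtain ⟨F, hF, hFi, hFu⟩ := hu.exists_differentiableOn_re_eq
  have hmem {z : ℂ} (hz : z ∈ ball (0 : ℂ) 1) : r * z ∈ ball (0 : ℂ) r := by
    rwa [← planeDilation_mem_ball hr, planeDilation_apply, mem_ball_zero_iff,
      LinearIsometryEquiv.norm_map, ← mem_ball_zero_iff] at hz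
  have hval (z : ℂ) (hz : z ∈ ball (0 : ℂ) 1) : (F (r * z)).re = u (planeDilation hr z) := by
    rw [hFu _ (hmem hz), planeDilation_apply]
  have hset : {x ∈ ball (0 : En 2) r | u x ≠ 0} = ball 0 r \ zeroSet u (ball 0 r) := by
    ext x
    simp only [zeroSet, Set.mem_sdiff, mem_ofPred_eq]
    tauto
  have hcomp : HasAtMostPathComponents {x ∈ ball (0 : En 2) r | u x ≠ 0} N :=
    .of_ncard_connectedComponentIn_le
      (hu.1.continuousOn.isOpen_inter_preimage isOpen_ball isOpen_ne)
      (by rwa [hset]) (by rwa [hset])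
  refine ⟨fun z => F (r * z), ⟨hF.comp (by fun_prop) fun z hz => hmem hz, ?_, ?_⟩,
    by simpa only [mul_zero] using hFi, hval⟩
  · obtain ⟨x, hx, hx0⟩ := hu0
    have hz : (planeDilation hr).symm x ∈ ball 0 1 := by
      rwa [← planeDilation_mem_ball hr, ContinuousLinearEquiv.apply_symm_apply]
    exact ⟨_, hz, by rwa [hval _ hz, ContinuousLinearEquiv.apply_symm_apply]⟩
  · convert hcomp.image (planeDilation hr).symm.continuous using 1
    rw [ContinuousLinearEquiv.image_symm_eq_preimage]
    ext z
    simp only [mem_preimage, mem_ofPred_eq, planeDilation_mem_ball]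
    exact and_congr_right fun hz => by rw [hval z hz]

theorem hasFDerivAt_re_div_re {F G : ℂ → ℂ} {f g z : ℂ} (hF : HasDerivAt F f z)
    (hG : HasDerivAt G g z) (hF0 : (F z).re ≠ 0) (hG0 : (G z).re ≠ 0) :
    HasFDerivAt (fun w => (F w).re / (G w).re) (((F z).re / (G z).re) •
      Complex.reCLM.comp ((f / (F z).re - g / (G z).re) • (1 : ℂ →L[ℝ] ℂ))) z := by
  have hFre := Complex.reCLM.hasFDerivAt.comp z hF.complexToReal_fderiv
  have hGre := Complex.reCLM.hasFDerivAt.comp z hG.complexToReal_fderiv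
  refine (hFre.mul ((hasDerivAt_inv hG0).comp_hasFDerivAt z hGre)).congr_fderiv ?_
  ext w
  simp only [Function.comp_apply, Complex.reCLM_apply, neg_smul, smul_neg, add_apply, neg_apply,
    smul_apply, ContinuousLinearMap.comp_apply, one_apply_eq_self, smul_eq_mul, Complex.mul_re,
    Complex.sub_re, Complex.div_ofReal_re, Complex.sub_im, Complex.div_ofReal_im]
  field_simp
  ring

theorem norm_gradient_div_le {u v : En 2 → ℝ} {F G : ℂ → ℂ} {r : ℝ} (hr : 0 < r)
    (hF : DifferentiableAt ℂ F 0) (hG : DifferentiableAt ℂ G 0)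
    (hFu : ∀ᶠ z in 𝓝 0, (F z).re = u (planeDilation hr z))
    (hGv : ∀ᶠ z in 𝓝 0, (G z).re = v (planeDilation hr z)) (hF0 : (F 0).re ≠ 0)
    (hG0 : (G 0).re ≠ 0) :
    ‖gradient (fun x => u x / v x) 0‖ ≤
      ‖deriv F 0 / (F 0).re - deriv G 0 / (G 0).re‖ * r⁻¹ * |u 0 / v 0| := by
  have hF0' : (F 0).re = u 0 := by rw [hFu.self_of_nhds, map_zero]
  have hG0' : (G 0).re = v 0 := by rw [hGv.self_of_nhds, map_zero]
  have hΦ : (planeDilation hr).symm 0 = 0 := map_zero _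
  have hquot : (fun x => u x / v x) =ᶠ[𝓝 0]
      (fun w => (F w).re / (G w).re) ∘ (planeDilation hr).symm := by
    have hlim : Tendsto (planeDilation hr).symm (𝓝 0) (𝓝 0) :=
      (planeDilation hr).symm.continuous.tendsto' _ _ hΦ
    filter_upwards [hlim.eventually (hFu.and hGv)] with x hx
    simp only [Function.comp_apply, hx.1, hx.2, ContinuousLinearEquiv.apply_symm_apply]
  have hderiv := hasFDerivAt_re_div_re hF.hasDerivAt hG.hasDerivAt hF0 hG0
  rw [← hΦ] at hderiv
  have hcomp := (hderiv.comp 0 (planeDilation hr).symm.hasFDerivAt).congr_of_eventuallyEq hquot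
  rw [gradient, LinearIsometryEquiv.norm_map, hcomp.fderiv, hΦ]
  refine ContinuousLinearMap.opNorm_le_bound _ (by positivity) fun x => ?_
  have hx : ‖(planeDilation hr).symm x‖ = r⁻¹ * ‖x‖ := by
    rw [eq_inv_mul_iff_mul_eq₀ hr.ne', ← norm_planeDilation hr,
      ContinuousLinearEquiv.apply_symm_apply]
  calc _ = |u 0 / v 0| * |((deriv F 0 / (F 0).re - deriv G 0 / (G 0).re) *
          (planeDilation hr).symm x).re| := by
        rw [← hF0', ← hG0']
        exact norm_mul _ _
    _ ≤ |u 0 / v 0| * (‖deriv F 0 / (F 0).re - deriv G 0 / (G 0).re‖ * (r⁻¹ * ‖x‖)) := by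
        rw [← hx, ← norm_mul]
        gcongr
        exact Complex.abs_re_le_norm _
    _ = _ := by ring

end

theorem stmt10 (N : ℕ) :
    ∃ C > (0 : ℝ), ∀ r : ℝ, 0 < r → ∀ u v : En 2 → ℝ,
      HarmonicOnSet u (ball 0 r) → HarmonicOnSet v (ball 0 r) →
      (∃ x ∈ ball (0 : En 2) r, u x ≠ 0) → (∃ x ∈ ball (0 : En 2) r, v x ≠ 0) →
      zeroSet u (ball 0 r) = zeroSet v (ball 0 r) →
      (nodalComponents u (ball 0 r)).Finite →
      (nodalComponents u (ball 0 r)).ncard < N →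
      v 0 ≠ 0 →
      ‖gradient (fun z => u z / v z) 0‖ ≤ C * r⁻¹ * |u 0 / v 0| := by
  obtain ⟨C, hC, hbound⟩ := NodallyBoundedOn.exists_forall_norm_deriv_div_re_sub_le N
  refine ⟨C, hC, fun r hr u v hu hv hu0 hv0 huv hfin hN hv00 => ?_⟩
  have hnodal : nodalComponents u (ball 0 r) = nodalComponents v (ball 0 r) := by
    simp only [nodalComponents, huv]
  obtain ⟨F, hF, hFi, hFu⟩ := hu.exists_nodallyBoundedOn hr hu0 hfin hN.le
  obtain ⟨G, hG, hGi, hGv⟩ := hv.exists_nodallyBoundedOn hr hv0 (hnodal ▸ hfin) (hnodal ▸ hN.le)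
  have hFG (z : ℂ) (hz : z ∈ ball (0 : ℂ) 1) : (F z).re = 0 ↔ (G z).re = 0 := by
    simpa [zeroSet, hFu z hz, hGv z hz, (planeDilation_mem_ball hr).2 hz, -mem_ball]
      using Set.ext_iff.1 huv (planeDilation hr z)
  have hnhds := ball_mem_nhds (0 : ℂ) one_pos
  have hG0 : (G 0).re ≠ 0 := by rwa [hGv 0 (mem_ball_self one_pos), map_zero]
  have hF0 : (F 0).re ≠ 0 := mt (hFG 0 (mem_ball_self one_pos)).1 hG0
  refine (norm_gradient_div_le hr (hF.differentiableOn.differentiableAt hnhds)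
    (hG.differentiableOn.differentiableAt hnhds) (eventually_of_mem hnhds hFu)
    (eventually_of_mem hnhds hGv) hF0 hG0).trans ?_
  gcongr
  exact hbound F G hF hG hFi hGi hFG hG0
end
end

section
/- There exists a constant K > 1 depending only on the dimension n with the following property: for every harmonic function u on the open unit ball B₁ ⊂ ℝⁿ with Z(u) ∩ B_{1/2} ≠ ∅, and every point x ∈ B_{1/4} satisfying u(x) ≠ 0 and dist(x, Z(u)) < (4K)⁻¹, there exists a point x̃ with |x̃ − x| ≤ K · dist(x, Z(u)) and |u(x̃)| ≥ 2|u(x)|. -/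
open Metric Set Filter

noncomputable section

/-!
Suppose `u` is harmonic with `|u| ≤ A` on `closedBall x R`. For `y` in this ball, the difference of
`u` and its reflection across the hyperplane bisecting `x` and `y` vanishes on that hyperplane.
On the half ball of radius `R / 2` about the midpoint of `x` and `y`, the maximum principle bounds
this difference by a multiple of the harmonic quadratic `‖w‖² + n ⟪e, w⟫ (r - ⟪e, w⟫)`, with
`r = R / 2`, which gives the Lipschitz estimate `R |u x - u y| ≤ 2 n A |x - y|`.

If `|u|` stays below `2 |u x|` on `closedBall x R`, this estimate with `A = 2 |u x|` forces every
zero `z` of `u` in the ball to satisfy `R ≤ 4 n |x - z|`, which fails for a nearest zero when `R` is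
a large enough multiple of its distance to `x`.
-/

open scoped Topology InnerProductSpace Laplacian

open InnerProductSpace Module

variable {E : Type*} [NormedAddCommGroup E] [InnerProductSpace ℝ E]

lemma infDist_pos_of_eq_zero {X Y : Type*} [PseudoMetricSpace X] [TopologicalSpace Y] [T1Space Y]
    [Zero Y] {u : X → Y} {x : X} {Z : Set X} (hne : Z.Nonempty) (hZ : ∀ z ∈ Z, u z = 0)
    (hu : ContinuousAt u x) (hx : u x ≠ 0) : 0 < infDist x Z := by
  refine (infDist_pos_iff_notMem_closure hne).1 fun hcl => ?_
  obtain ⟨z, hzZ, hz⟩ :=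
    ((mem_closure_iff_frequently.1 hcl).and_eventually (hu.eventually_ne hx)).exists
  exact hz (hZ z hzZ)

section Laplacian

lemma deriv_deriv_nonpos_of_isLocalMax {f : ℝ → ℝ} {a : ℝ} (hf : ContinuousAt f a)
    (hmax : IsLocalMax f a) : deriv (deriv f) a ≤ 0 := by
  by_contra! hpos
  have hmin : IsLocalMin f a := isLocalMin_of_deriv_deriv_pos hpos hmax.deriv_eq_zero hf
  have hconst : f =ᶠ[𝓝 a] fun _ => f a := (hmin.and hmax).mono fun _ h => le_antisymm h.2 h.1
  simp [hconst.deriv.deriv_eq] at hpos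

lemma iteratedFDeriv_two_self_nonpos_of_isLocalMax {V : Type*} [NormedAddCommGroup V]
    [NormedSpace ℝ V] {f : V → ℝ} {x : V} (hf : ContDiffAt ℝ 2 f x) (hmax : IsLocalMax f x)
    (v : V) : iteratedFDeriv ℝ 2 f x ![v, v] ≤ 0 := by
  set line : ℝ → V := fun s => x + s • v with hline
  have hline₀ : line 0 = x := by simp [hline]
  have hline' : ∀ s, HasDerivAt line v s := fun s => by
    simpa [hline] using ((hasDerivAt_id s).smul_const v).const_add x
  have hderiv : deriv line = fun _ => v := funext fun s => (hline' s).deriv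
  have hcont : Tendsto line (𝓝 0) (𝓝 x) := hline₀ ▸ (hline' 0).continuousAt
  rw [← hline₀] at hf
  have hsecond : deriv (deriv (f ∘ line)) 0 = iteratedFDeriv ℝ 2 f x ![v, v] := by
    have hchain := iteratedDeriv_vcomp_two hf (f := line) (by fun_prop)
    simp only [iteratedDeriv_succ, iteratedDeriv_zero, hline₀, hderiv, deriv_const', map_zero,
      add_zero] at hchain
    rw [hchain, show ![v, v] = fun _ => v from funext <| Fin.forall_fin_two.2 ⟨rfl, rfl⟩]
  rw [← hsecond]
  refine deriv_deriv_nonpos_of_isLocalMax (hf.continuousAt.comp (hline' 0).continuousAt) ?_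
  filter_upwards [hcont.eventually hmax] with s hs
  simpa [hline₀] using hs

variable [FiniteDimensional ℝ E]

lemma laplacian_nonpos_of_isLocalMax {f : E → ℝ} {x : E} (hf : ContDiffAt ℝ 2 f x)
    (hmax : IsLocalMax f x) : Δ f x ≤ 0 := by
  rw [laplacian_eq_iteratedFDeriv_stdOrthonormalBasis]
  exact Finset.sum_nonpos fun i _ => iteratedFDeriv_two_self_nonpos_of_isLocalMax hf hmax _

lemma laplacian_norm_sq (x : E) : Δ (fun y : E => ‖y‖ ^ 2) x = 2 * finrank ℝ E := by
  have hsecond (v : E) : fderiv ℝ (fderiv ℝ fun y : E => ‖y‖ ^ 2) x v v = 2 * ‖v‖ ^ 2 := by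
    rw [fderiv_norm_sq, fderiv_const_smul (innerSL ℝ).differentiableAt]
    simp only [smul_apply, ContinuousLinearMap.fderiv, nsmul_eq_mul, Nat.cast_ofNat]
    exact congrArg (2 * ·) (real_inner_self_eq_norm_sq v)
  simp [laplacian_eq_iteratedFDeriv_stdOrthonormalBasis, iteratedFDeriv_two_apply, hsecond,
    mul_comm]

variable {G : Type*} [NormedAddCommGroup G] [NormedSpace ℝ G]

lemma laplacian_comp_inner {g : ℝ → G} (hg : ContDiff ℝ 2 g) (e x : E) :
    Δ (fun y => g ⟪e, y⟫_ℝ) x = ‖e‖ ^ 2 • iteratedDeriv 2 g ⟪e, x⟫_ℝ := by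
  have hsecond (v : E) : iteratedFDeriv ℝ 2 (fun y => g ⟪e, y⟫_ℝ) x ![v, v] =
      ⟪e, v⟫_ℝ ^ 2 • iteratedDeriv 2 g ⟪e, x⟫_ℝ := by
    have hcomp := (innerSL ℝ e).iteratedFDeriv_comp_right hg x (i := 2) le_rfl
    simp only [Function.comp_def, innerSL_apply_apply] at hcomp
    simp [hcomp, iteratedFDeriv_apply_eq_iteratedDeriv_mul_prod, sq]
  simp only [laplacian_eq_iteratedFDeriv_stdOrthonormalBasis, hsecond, ← Finset.sum_smul,
    OrthonormalBasis.sum_sq_inner_left]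

variable {F : Type*} [NormedAddCommGroup F] [InnerProductSpace ℝ F] [FiniteDimensional ℝ F]

lemma laplacian_comp_linearIsometryEquiv (f : F → G) (R : E ≃ₗᵢ[ℝ] F) (x : E) :
    Δ (f ∘ R) x = Δ f (R x) := by
  have hcomp : iteratedFDeriv ℝ 2 (f ∘ R) x =
      (iteratedFDeriv ℝ 2 f (R x)).compContinuousLinearMap fun _ => R := by
    simpa [← iteratedFDerivWithin_univ] using
      R.toContinuousLinearEquiv.iteratedFDerivWithin_comp_right f uniqueDiffOn_univ
        (mem_univ (R x)) 2
  simp only [laplacian_eq_iteratedFDeriv_orthonormalBasis _ (stdOrthonormalBasis ℝ E),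
    laplacian_eq_iteratedFDeriv_orthonormalBasis _ ((stdOrthonormalBasis ℝ E).map R), hcomp]
  refine Finset.sum_congr rfl fun i _ => ?_
  rw [ContinuousMultilinearMap.compContinuousLinearMap_apply]
  exact congrArg _ <| funext <| Fin.forall_fin_two.2 ⟨rfl, rfl⟩

lemma laplacian_comp_const_add (f : E → G) (c x : E) :
    Δ (fun y => f (c + y)) x = Δ f (c + x) := by
  simp only [laplacian_eq_iteratedFDeriv_stdOrthonormalBasis, iteratedFDeriv_comp_add_left]

lemma harmonicAt_comp_const_add_linearIsometryEquiv {f : F → G} {c : F} {R : E ≃ₗᵢ[ℝ] F} {x : E}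
    (hf : HarmonicAt f (c + R x)) : HarmonicAt (fun y => f (c + R y)) x := by
  have hcont : ContinuousAt (fun y => c + R y) x := by fun_prop
  refine ⟨hf.1.comp x (by fun_prop), ?_⟩
  filter_upwards [hcont.eventually hf.2] with y hy
  exact (laplacian_comp_linearIsometryEquiv (fun z => f (c + z)) R y).trans
    ((laplacian_comp_const_add f c (R y)).trans hy)

lemma le_of_laplacian_pos_of_frontier_le {S : Set E} (hS : IsCompact S) {f : E → ℝ} {a : ℝ}
    (hf : ContinuousOn f S) (hf₂ : ∀ x ∈ interior S, ContDiffAt ℝ 2 f x)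
    (hΔ : ∀ x ∈ interior S, 0 < Δ f x) (hfr : ∀ x ∈ frontier S, f x ≤ a) :
    ∀ x ∈ S, f x ≤ a := by
  intro x hx
  obtain ⟨y, hy, hmax⟩ := hS.exists_isMaxOn ⟨x, hx⟩ hf
  suffices y ∈ frontier S from (hmax hx).trans (hfr y this)
  refine hS.isClosed.frontier_eq ▸ ⟨hy, fun hint => ?_⟩
  exact (hΔ y hint).not_ge <|
    laplacian_nonpos_of_isLocalMax (hf₂ y hint) (hmax.isLocalMax (mem_interior_iff_mem_nhds.1 hint))

lemma le_of_laplacian_nonneg_of_frontier_le [Nontrivial E] {S : Set E} (hS : IsCompact S)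
    {f : E → ℝ} {a : ℝ} (hf : ContinuousOn f S) (hf₂ : ∀ x ∈ interior S, ContDiffAt ℝ 2 f x)
    (hΔ : ∀ x ∈ interior S, 0 ≤ Δ f x) (hfr : ∀ x ∈ frontier S, f x ≤ a) :
    ∀ x ∈ S, f x ≤ a := by
  obtain ⟨r, hr⟩ := hS.isBounded.subset_closedBall 0
  have hpert (ε : ℝ) (hε : 0 < ε) : ∀ x ∈ S, f x + ε * ‖x‖ ^ 2 ≤ a + ε * r ^ 2 := by
    have hsq (x : E) : ContDiffAt ℝ 2 (fun y : E => ‖y‖ ^ 2) x := (contDiff_norm_sq ℝ).contDiffAt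
    have hεsq (x : E) : ContDiffAt ℝ 2 (ε • fun y : E => ‖y‖ ^ 2) x := (hsq x).const_smul ε
    refine le_of_laplacian_pos_of_frontier_le hS (f := f + ε • fun x => ‖x‖ ^ 2)
      (hf.add (by fun_prop)) (fun x hx => (hf₂ x hx).add (hεsq x)) ?_ ?_
    · intro x hx
      rw [(hf₂ x hx).laplacian_add (hεsq x), laplacian_smul ε (hsq x), laplacian_norm_sq]
      have : (0 : ℝ) < finrank ℝ E := mod_cast finrank_pos
      have := hΔ x hx
      positivity
    · intro x hx
      have hxr : ‖x‖ ≤ r := by simpa using hr (hS.isClosed.frontier_subset hx)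
      simp only [Pi.add_apply, Pi.smul_apply, smul_eq_mul]
      gcongr
      exact hfr x hx
  intro x hx
  have hlim : Tendsto (fun ε : ℝ => a + ε * r ^ 2) (𝓝[>] 0) (𝓝 a) := by
    have : Continuous fun ε : ℝ => a + ε * r ^ 2 := by fun_prop
    simpa using (this.tendsto 0).mono_left nhdsWithin_le_nhds
  refine ge_of_tendsto hlim ?_
  filter_upwards [self_mem_nhdsWithin] with ε hε
  have : 0 ≤ ε * ‖x‖ ^ 2 := mul_nonneg (le_of_lt hε) (sq_nonneg _)
  linarith [hpert ε hε x hx]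

end Laplacian

section HalfBall

/-- The closed half ball of radius `r` about the origin on the side of the hyperplane `e^⊥` that
contains `e`. -/
def halfBall (e : E) (r : ℝ) : Set E :=
  closedBall 0 r ∩ {w | 0 ≤ ⟪e, w⟫_ℝ}

/-- The quadratic polynomial serving as a barrier for functions that are nonpositive on the flat
part of `halfBall e r`. The factor `finrank ℝ E` makes it harmonic when `e` is a unit vector. -/
def halfBallBarrier (e : E) (r : ℝ) (w : E) : ℝ :=
  ‖w‖ ^ 2 + finrank ℝ E * (⟪e, w⟫_ℝ * (r - ⟪e, w⟫_ℝ))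

lemma norm_eq_or_inner_eq_zero_of_mem_frontier_halfBall {e w : E} {r : ℝ}
    (hw : w ∈ frontier (halfBall e r)) : ‖w‖ = r ∨ ⟪e, w⟫_ℝ = 0 := by
  rcases frontier_inter_subset _ _ hw with ⟨hsphere, -⟩ | ⟨-, hflat⟩
  · exact .inl (by simpa using frontier_closedBall_subset_sphere hsphere)
  · exact .inr (frontier_le_subset_eq continuous_const (by fun_prop) hflat).symm

lemma contDiff_halfBallBarrier {k : WithTop ℕ∞} (e : E) (r : ℝ) :
    ContDiff ℝ k (halfBallBarrier e r) := by
  have hinner : ContDiff ℝ k fun w => ⟪e, w⟫_ℝ := contDiff_const.inner ℝ contDiff_id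
  exact (contDiff_norm_sq ℝ).add (contDiff_const.mul (hinner.mul (contDiff_const.sub hinner)))

lemma sq_le_halfBallBarrier {e w : E} {r : ℝ} (he : ‖e‖ = 1) (hw : 0 ≤ ⟪e, w⟫_ℝ) (hr : ‖w‖ = r) :
    r ^ 2 ≤ halfBallBarrier e r w := by
  have hle : ⟪e, w⟫_ℝ ≤ r := by simpa [he, hr] using real_inner_le_norm e w
  have : 0 ≤ ⟪e, w⟫_ℝ * (r - ⟪e, w⟫_ℝ) := mul_nonneg hw (sub_nonneg.2 hle)
  rw [halfBallBarrier, hr]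
  exact le_add_of_nonneg_right (by positivity)

variable [FiniteDimensional ℝ E]

lemma isCompact_halfBall (e : E) (r : ℝ) : IsCompact (halfBall e r) :=
  (isCompact_closedBall 0 r).inter_right (isClosed_le continuous_const (by fun_prop))

lemma laplacian_halfBallBarrier {e : E} (he : ‖e‖ = 1) (r : ℝ) (w : E) :
    Δ (halfBallBarrier e r) w = 0 := by
  set g : ℝ → ℝ := fun t => t * (r - t)
  have hg : ContDiff ℝ 2 g := by fun_prop
  have hg₂ (t : ℝ) : iteratedDeriv 2 g t = -2 := by
    have hg₁ : deriv g = fun t => r - 2 * t := by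
      funext t
      exact ((hasDerivAt_id' t).mul ((hasDerivAt_id' t).const_sub r)).deriv.trans (by ring)
    simp [iteratedDeriv_succ, hg₁]
  have hsq : ContDiffAt ℝ 2 (fun y : E => ‖y‖ ^ 2) w := (contDiff_norm_sq ℝ).contDiffAt
  have hge : ContDiffAt ℝ 2 (fun y => g ⟪e, y⟫_ℝ) w :=
    (hg.comp (contDiff_const.inner ℝ contDiff_id)).contDiffAt
  have hge' : ContDiffAt ℝ 2 ((finrank ℝ E : ℝ) • fun y => g ⟪e, y⟫_ℝ) w :=
    hge.const_smul (finrank ℝ E : ℝ)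
  calc Δ (halfBallBarrier e r) w
      = Δ ((fun y : E => ‖y‖ ^ 2) + (finrank ℝ E : ℝ) • fun y => g ⟪e, y⟫_ℝ) w := rfl
    _ = 2 * finrank ℝ E + finrank ℝ E * (‖e‖ ^ 2 * -2) := by
      rw [hsq.laplacian_add hge', laplacian_smul _ hge, laplacian_norm_sq,
        laplacian_comp_inner hg, hg₂, smul_eq_mul, smul_eq_mul]
    _ = 0 := by rw [he]; ring

lemma sq_mul_le_mul_halfBallBarrier {e : E} {r M : ℝ} (he : ‖e‖ = 1) (hM : 0 ≤ M) {v : E → ℝ}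
    (hv : HarmonicOnNhd v (halfBall e r)) (hsphere : ∀ w ∈ halfBall e r, ‖w‖ = r → v w ≤ M)
    (hflat : ∀ w ∈ halfBall e r, ⟪e, w⟫_ℝ = 0 → v w ≤ 0) :
    ∀ w ∈ halfBall e r, r ^ 2 * v w ≤ M * halfBallBarrier e r w := by
  have : Nontrivial E := ⟨e, 0, norm_ne_zero_iff.1 (by simp [he])⟩
  have hB (w : E) : ContDiffAt ℝ 2 (halfBallBarrier e r) w :=
    (contDiff_halfBallBarrier e r).contDiffAt
  have hMB (w : E) : ContDiffAt ℝ 2 (M • halfBallBarrier e r) w := (hB w).const_smul M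
  have hrv : ∀ w ∈ halfBall e r, ContDiffAt ℝ 2 (r ^ 2 • v) w :=
    fun w hw => (hv w hw).1.const_smul (r ^ 2)
  suffices ∀ w ∈ halfBall e r, (r ^ 2 • v - M • halfBallBarrier e r) w ≤ 0 from
    fun w hw => sub_nonpos.1 (this w hw)
  refine le_of_laplacian_nonneg_of_frontier_le (isCompact_halfBall e r)
    (fun w hw => ((hrv w hw).sub (hMB w)).continuousAt.continuousWithinAt)
    (fun w hw => (hrv w (interior_subset hw)).sub (hMB w))
    (fun w hw => ?_) (fun w hw => sub_nonpos.2 ?_)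
  · have hvw := hv w (interior_subset hw)
    rw [(hrv w (interior_subset hw)).laplacian_sub (hMB w), laplacian_smul _ hvw.1,
      laplacian_smul _ (hB w), hvw.2.self_of_nhds, laplacian_halfBallBarrier he]
    simp
  · have hwS : w ∈ halfBall e r := (isCompact_halfBall e r).isClosed.frontier_subset hw
    simp only [Pi.smul_apply, smul_eq_mul]
    rcases norm_eq_or_inner_eq_zero_of_mem_frontier_halfBall hw with hr | h₀
    · calc r ^ 2 * v w ≤ r ^ 2 * M := by gcongr; exact hsphere w hwS hr
        _ = M * r ^ 2 := mul_comm _ _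
        _ ≤ M * halfBallBarrier e r w := by gcongr; exact sq_le_halfBallBarrier he hwS.2 hr
    · have hB₀ : halfBallBarrier e r w = ‖w‖ ^ 2 := by simp [halfBallBarrier, h₀]
      calc r ^ 2 * v w ≤ 0 := mul_nonpos_of_nonneg_of_nonpos (sq_nonneg r) (hflat w hwS h₀)
        _ ≤ M * halfBallBarrier e r w := by rw [hB₀]; positivity

lemma mul_sub_le_of_harmonicOnNhd_of_norm_eq_one {u : E → ℝ} {c e : E} {r t A : ℝ}
    (hu : HarmonicOnNhd u (closedBall c r)) (hA : ∀ y ∈ closedBall c r, |u y| ≤ A)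
    (he : ‖e‖ = 1) (hr : 0 < r) (ht : 0 ≤ t) (htr : t ≤ r) :
    r * (u (c + t • e) - u (c - t • e)) ≤ 2 * finrank ℝ E * A * t := by
  have : Nontrivial E := ⟨e, 0, norm_ne_zero_iff.1 (by simp [he])⟩
  have hn : (1 : ℝ) ≤ finrank ℝ E := mod_cast Nat.one_le_iff_ne_zero.2 finrank_pos.ne'
  have hte : ⟪e, t • e⟫_ℝ = t := by simp [real_inner_smul_right, he]
  have hnorm : ‖t • e‖ = t := by rw [norm_smul, he, mul_one, Real.norm_of_nonneg ht]
  set R : E ≃ₗᵢ[ℝ] E := (ℝ ∙ e)ᗮ.reflection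
  have hRe : R (t • e) = -(t • e) := by
    rw [map_smul, Submodule.reflection_orthogonalComplement_singleton_eq_neg, smul_neg]
  have hR {w : E} (hw : ⟪e, w⟫_ℝ = 0) : R w = w :=
    Submodule.reflection_mem_subspace_eq_self <|
      Submodule.mem_orthogonal_singleton_iff_inner_right.2 hw
  have hball {w : E} (hw : w ∈ halfBall e r) (S : E ≃ₗᵢ[ℝ] E) : c + S w ∈ closedBall c r := by
    simpa using hw.1
  have hA₀ : 0 ≤ A := (abs_nonneg _).trans (hA c (mem_closedBall_self hr.le))
  set v : E → ℝ := fun w => u (c + w) - u (c + R w)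
  have hv : HarmonicOnNhd v (halfBall e r) := fun w hw =>
    (harmonicAt_comp_const_add_linearIsometryEquiv (R := .refl ℝ E) (hu _ (hball hw _))).sub
      (harmonicAt_comp_const_add_linearIsometryEquiv (hu _ (hball hw R)))
  have hvA : ∀ w ∈ halfBall e r, v w ≤ 2 * A := fun w hw =>
    calc v w ≤ |u (c + w)| + |u (c + R w)| := (le_abs_self _).trans (abs_sub _ _)
      _ ≤ A + A := add_le_add (hA _ (hball hw (.refl ℝ E))) (hA _ (hball hw R))
      _ = 2 * A := (two_mul A).symm
  have hv₀ : ∀ w ∈ halfBall e r, ⟪e, w⟫_ℝ = 0 → v w ≤ 0 := fun w _ hw => by simp [v, hR hw]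
  have hB : halfBallBarrier e r (t • e) ≤ r * (finrank ℝ E * t) := by
    rw [halfBallBarrier, hte, hnorm]
    nlinarith [sq_nonneg t]
  refine le_of_mul_le_mul_left ?_ hr
  calc r * (r * (u (c + t • e) - u (c - t • e))) = r ^ 2 * v (t • e) := by
        simp only [v, hRe, ← sub_eq_add_neg]; ring
    _ ≤ 2 * A * halfBallBarrier e r (t • e) :=
      sq_mul_le_mul_halfBallBarrier he (by positivity) hv (fun w hw _ => hvA w hw) hv₀ _
        ⟨by simpa [hnorm] using htr, ht.trans_eq hte.symm⟩
    _ ≤ 2 * A * (r * (finrank ℝ E * t)) := by gcongr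
    _ = r * (2 * finrank ℝ E * A * t) := by ring

lemma mul_sub_le_of_harmonicOnNhd_closedBall {u : E → ℝ} {c p : E} {r A : ℝ}
    (hu : HarmonicOnNhd u (closedBall c r)) (hA : ∀ y ∈ closedBall c r, |u y| ≤ A)
    (hp : ‖p‖ ≤ r) : r * (u (c + p) - u (c - p)) ≤ 2 * finrank ℝ E * A * ‖p‖ := by
  rcases eq_or_ne p 0 with rfl | hp₀
  · simp
  have hpe : ‖p‖ • ‖p‖⁻¹ • p = p := smul_inv_smul₀ (norm_ne_zero_iff.2 hp₀) p
  have h := mul_sub_le_of_harmonicOnNhd_of_norm_eq_one hu hA (e := ‖p‖⁻¹ • p)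
    (norm_smul_inv_norm hp₀) ((norm_pos_iff.2 hp₀).trans_le hp) (norm_nonneg p) hp
  rwa [hpe] at h

end HalfBall

section Doubling

variable [FiniteDimensional ℝ E] {u : E → ℝ} {x : E} {R : ℝ}

lemma mul_abs_sub_le_of_harmonicOnNhd_closedBall {y : E} {A : ℝ}
    (hu : HarmonicOnNhd u (closedBall x R)) (hA : ∀ z ∈ closedBall x R, |u z| ≤ A)
    (hy : y ∈ closedBall x R) : R * |u x - u y| ≤ 2 * finrank ℝ E * A * dist x y := by
  set c : E := midpoint ℝ x y with hc
  set p : E := (2⁻¹ : ℝ) • (x - y) with hp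
  have hcx : c + p = x := by rw [hc, hp, midpoint_eq_smul_add, invOf_eq_inv]; module
  have hcy : c - p = y := by rw [hc, hp, midpoint_eq_smul_add, invOf_eq_inv]; module
  have hpnorm : ‖p‖ = dist x y / 2 := by
    rw [hp, norm_smul, dist_eq_norm, norm_inv, Real.norm_two, inv_mul_eq_div]
  have hpR : ‖p‖ ≤ R / 2 := by rw [hpnorm, dist_comm]; gcongr; exact hy
  have hsub : closedBall c (R / 2) ⊆ closedBall x R := closedBall_subset_closedBall' <| by
    have : dist c x = ‖p‖ := by simp [← hcx, dist_eq_norm]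
    linarith
  have hest {q : E} (hq : ‖q‖ = ‖p‖) :
      R / 2 * (u (c + q) - u (c - q)) ≤ 2 * finrank ℝ E * A * (dist x y / 2) :=
    hpnorm ▸ hq ▸ mul_sub_le_of_harmonicOnNhd_closedBall (hu.mono hsub) (fun z hz => hA z (hsub hz))
      (hq.le.trans hpR)
  have hpos := hest rfl
  have hneg := hest (norm_neg p)
  rw [← sub_eq_add_neg, sub_neg_eq_add, hcx, hcy] at hneg
  rw [hcx, hcy] at hpos
  rcases abs_choice (u x - u y) with h | h <;> rw [h] <;> linarith

lemma le_mul_dist_of_abs_le_two_mul_abs {z : E} (hu : HarmonicOnNhd u (closedBall x R))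
    (hx : u x ≠ 0) (hle : ∀ y ∈ closedBall x R, |u y| ≤ 2 * |u x|) (hz : u z = 0) :
    R ≤ (4 * finrank ℝ E + 1) * dist x z := by
  rcases lt_or_ge R (dist z x) with hzx | hzx
  · rw [dist_comm] at hzx
    nlinarith [dist_nonneg (x := x) (y := z), (Nat.cast_nonneg (finrank ℝ E) : (0 : ℝ) ≤ _)]
  · have hlip := mul_abs_sub_le_of_harmonicOnNhd_closedBall hu hle hzx
    rw [hz, sub_zero] at hlip
    have : R ≤ 4 * finrank ℝ E * dist x z :=
      le_of_mul_le_mul_right (by linarith) (abs_pos.2 hx)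
    linarith [dist_nonneg (x := x) (y := z)]

theorem stmt11_general (E : Type*) [NormedAddCommGroup E] [InnerProductSpace ℝ E]
    [FiniteDimensional ℝ E] :
    ∃ K : ℝ, 1 < K ∧ ∀ (Ω : Set E) (u : E → ℝ), HarmonicOnNhd u Ω → {y ∈ Ω | u y = 0}.Nonempty →
      ∀ x, u x ≠ 0 → closedBall x (K * infDist x {y ∈ Ω | u y = 0}) ⊆ Ω →
        ∃ x' ∈ Ω, dist x' x ≤ K * infDist x {y ∈ Ω | u y = 0} ∧ 2 * |u x| ≤ |u x'| := by
  refine ⟨4 * finrank ℝ E + 2, by linarith [(Nat.cast_nonneg (finrank ℝ E) : (0 : ℝ) ≤ _)], ?_⟩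
  intro Ω u hu hne x hx hΩ
  set Z : Set E := {y ∈ Ω | u y = 0}
  set R : ℝ := (4 * finrank ℝ E + 2) * infDist x Z with hR
  have hxΩ : x ∈ Ω := hΩ (mem_closedBall_self (mul_nonneg (by positivity) infDist_nonneg))
  have hd : 0 < infDist x Z :=
    infDist_pos_of_eq_zero hne (fun z hz => hz.2) (hu x hxΩ).1.continuousAt hx
  by_contra! hsmall
  have hRZ : ∀ z ∈ Z, R / (4 * finrank ℝ E + 1) ≤ dist x z := fun z hz => by
    rw [div_le_iff₀' (by positivity)]
    exact le_mul_dist_of_abs_le_two_mul_abs (hu.mono hΩ) hx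
      (fun y hy => (hsmall y (hΩ hy) hy).le) hz.2
  have hRd := (le_infDist hne).2 fun {z} => hRZ z
  rw [hR, div_le_iff₀' (by positivity)] at hRd
  linarith

end Doubling

lemma laplacianAt_eq_laplacian {n : ℕ} (u : En n → ℝ) (x : En n) : laplacianAt u x = Δ u x := by
  simp [laplacianAt,
    laplacian_eq_iteratedFDeriv_orthonormalBasis u (EuclideanSpace.basisFun (Fin n) ℝ)]

lemma HarmonicOnSet.harmonicOnNhd {n : ℕ} {u : En n → ℝ} {Ω : Set (En n)}
    (hu : HarmonicOnSet u Ω) (hΩ : IsOpen Ω) : HarmonicOnNhd u Ω := fun x hx => by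
  refine ⟨hu.1.contDiffAt (hΩ.mem_nhds hx), ?_⟩
  filter_upwards [hΩ.mem_nhds hx] with y hy
  exact (laplacianAt_eq_laplacian u y).symm.trans (hu.2 y hy)

lemma closedBall_mul_subset_ball_one {V : Type*} [SeminormedAddCommGroup V] {x : V} {K d : ℝ}
    (hK : 0 < K) (hx : x ∈ ball 0 (1 / 4)) (hd : d < (4 * K)⁻¹) :
    closedBall x (K * d) ⊆ ball 0 1 := by
  refine closedBall_subset_ball' ?_
  have hKd : K * d < 1 / 4 := by
    rw [mul_inv, ← div_eq_mul_inv, lt_div_iff₀' hK] at hd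
    linarith
  linarith [mem_ball.1 hx]

theorem stmt11 (n : ℕ) :
    ∃ K : ℝ, 1 < K ∧ ∀ u : En n → ℝ,
      HarmonicOnSet u (ball 0 1) →
      (zeroSet u (ball 0 1) ∩ ball (0 : En n) (1/2)).Nonempty →
      ∀ x ∈ ball (0 : En n) (1/4), u x ≠ 0 →
        infDist x (zeroSet u (ball 0 1)) < (4 * K)⁻¹ →
        ∃ x' ∈ ball (0 : En n) 1,
          dist x' x ≤ K * infDist x (zeroSet u (ball 0 1)) ∧ 2 * |u x| ≤ |u x'| := by
  obtain ⟨K, hK, h⟩ := stmt11_general (En n)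
  exact ⟨K, hK, fun u hu hne x hx hux hd => h _ u (hu.harmonicOnNhd isOpen_ball)
    (hne.mono inter_subset_left) x hux (closedBall_mul_subset_ball_one (by linarith) hx hd)⟩
end
end
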